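/- Let T be the localisation of O_q(G) at the multiplicatively closed set generated by the 2n normal 𝓗-eigenvectors c^{ϖ_i}_{−ϖ_i, w_0ϖ_i} and c^{ϖ_i}_{−w_0ϖ_i, ϖ_i}, i ∈ {1,…,n}, equipped with the induced rational 𝓗-action. Then T is 𝓗-simple: the only 𝓗-invariant two-sided ideals of T are 0 and T. -/

import Mathlib

open scoped TensorProduct

/-- The `q`-factorial `(q - q⁻¹)(q² - q⁻²)⋯(qᵐ - q⁻ᵐ)`. -/
noncomputable def qfac (t : ℂ) (m : ℕ) : ℂ :=
  ∏ j ∈ Finset.range m, (t ^ (j + 1) - t⁻¹ ^ (j + 1))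

/-- The `q`-binomial coefficient `[m k]` at parameter `t`. -/
noncomputable def qbinom (t : ℂ) (m k : ℕ) : ℂ :=
  qfac t m / (qfac t k * qfac t (m - k))

/-- The defining relations of the quantised enveloping algebra `U_q(𝔤)` associated to a
Cartan matrix `a` with symmetrising integers `d`, on elements `E i`, `F i`, `K i` of a
`ℂ`-algebra `B`: the `K i` are commuting units, conjugation by `K i` rescales `E j` and
`F j` by `q_i^{±a i j}` (where `q_i = q^{d i}`), the commutator `[E i, F j]` is
`δ_{ij} (K_i - K_i⁻¹)/(q_i - q_i⁻¹)`, and the quantum Serre relations hold. -/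
def UqRels (q : ℂ) {n : ℕ} (a : Fin n → Fin n → ℤ) (d : Fin n → ℕ)
    (B : Type) [Ring B] [Algebra ℂ B] (E F : Fin n → B) (K : Fin n → Bˣ) : Prop :=
  (∀ i j, (K i : B) * (K j : B) = (K j : B) * (K i : B)) ∧
  (∀ i j, (K i : B) * E j = (q ^ ((d i : ℤ) * a i j)) • (E j * (K i : B))) ∧
  (∀ i j, (K i : B) * F j = (q ^ (-((d i : ℤ) * a i j))) • (F j * (K i : B))) ∧
  (∀ i j, E i * F j - F j * E i =
    if i = j then (q ^ (d i : ℤ) - q ^ (-(d i : ℤ)))⁻¹ • ((K i : B) - (((K i)⁻¹ : Bˣ) : B))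
    else 0) ∧
  (∀ i j, i ≠ j → ∑ k ∈ Finset.range ((1 - a i j).toNat + 1),
      ((-1 : ℂ) ^ k * qbinom (q ^ (d i : ℤ)) ((1 - a i j).toNat) k) •
        (E i ^ ((1 - a i j).toNat - k) * E j * E i ^ k) = 0) ∧
  (∀ i j, i ≠ j → ∑ k ∈ Finset.range ((1 - a i j).toNat + 1),
      ((-1 : ℂ) ^ k * qbinom (q ^ (d i : ℤ)) ((1 - a i j).toNat) k) •
        (F i ^ ((1 - a i j).toNat - k) * F j * F i ^ k) = 0)

/-- The weight space of weight `μ = ∑ μ i ϖ i` in a `U_q(𝔤)`-module: the set of vectors on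
which each `K i` acts by the scalar `q^{(μ, α_i)} = q^{μ i * d i}`. -/
noncomputable def wtSp (q : ℂ) {n : ℕ} (d : Fin n → ℕ)
    {U : Type} [Ring U] [Algebra ℂ U] (K : Fin n → Uˣ)
    {Vc : Type} [AddCommGroup Vc] [Module ℂ Vc] (ρ : U →ₐ[ℂ] Module.End ℂ Vc)
    (μ : Fin n → ℤ) : Submodule ℂ Vc :=
  ⨅ i : Fin n, LinearMap.ker (ρ (K i : U) - (q ^ (μ i * (d i : ℤ))) • (1 : Module.End ℂ Vc))

/-- `ξ` is a dual vector of weight `μ`:  equivalently (via the antipode-twisted action on the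
dual module), `ξ` vanishes on every weight space of weight `ν ≠ -μ`. -/
noncomputable def inDualWt (q : ℂ) {n : ℕ} (d : Fin n → ℕ)
    {U : Type} [Ring U] [Algebra ℂ U] (K : Fin n → Uˣ)
    {Vc : Type} [AddCommGroup Vc] [Module ℂ Vc] (ρ : U →ₐ[ℂ] Module.End ℂ Vc)
    (μ : Fin n → ℤ) (ξ : Module.Dual ℂ Vc) : Prop :=
  ∀ ν : Fin n → ℤ, ν ≠ -μ → ∀ x ∈ wtSp q d K ρ ν, ξ x = 0

/-- The Demazure-type submodule generated by the weight space of weight `ν` under the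
subalgebra of `U` generated by `gens` (take `gens = Set.range E` for `V⁺_w(λ)` with
`ν = wλ`, and `gens = Set.range F` for `V⁻_w(λ)`). -/
noncomputable def demazure (q : ℂ) {n : ℕ} (d : Fin n → ℕ)
    {U : Type} [Ring U] [Algebra ℂ U] (gens : Set U) (K : Fin n → Uˣ)
    {Vc : Type} [AddCommGroup Vc] [Module ℂ Vc] (ρ : U →ₐ[ℂ] Module.End ℂ Vc)
    (ν : Fin n → ℤ) : Submodule ℂ Vc :=
  Submodule.span ℂ
    {x | ∃ y ∈ Algebra.adjoin ℂ gens, ∃ u ∈ wtSp q d K ρ ν, x = ρ y u}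

/-- A two-sided ideal of a (possibly noncommutative) ring is prime if it is proper and
`x R y ⊆ P` implies `x ∈ P` or `y ∈ P`. -/
def IsPrimeTwoSided {R : Type*} [Ring R] (P : TwoSidedIdeal R) : Prop :=
  P ≠ ⊤ ∧ ∀ x y : R, (∀ r : R, x * r * y ∈ P) → x ∈ P ∨ y ∈ P

/-- An element `r` of a ring is normal if `rR = Rr`. -/
def IsNormalElem {R : Type*} [Ring R] (r : R) : Prop :=
  (∀ x, ∃ y, r * x = y * r) ∧ ∀ x, ∃ y, x * r = r * y

/-- The ideal `Q⁺_{w}` of `O_q(G)`: generated by the coordinate functions `c^{ϖ_j}_{ξ,v}` with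
`v` a highest weight vector of `V(ϖ_j)` and `ξ` orthogonal to the Demazure module
`V⁺_w(ϖ_j)`. -/
noncomputable def Qplus (q : ℂ) {n : ℕ} (d : Fin n → ℕ)
    {U : Type} [Ring U] [Algebra ℂ U] (E : Fin n → U) (K : Fin n → Uˣ)
    {V : (Fin n → ℕ) → Type} [∀ c, AddCommGroup (V c)] [∀ c, Module ℂ (V c)]
    (ρ : ∀ c, U →ₐ[ℂ] Module.End ℂ (V c))
    {W : Type} [Group W] (σ : W →* Multiplicative (AddAut (Fin n → ℤ)))
    {A : Type} [Ring A]
    (cf : ∀ c : Fin n → ℕ, Module.Dual ℂ (V c) → V c → A)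
    (w : W) : TwoSidedIdeal A :=
  TwoSidedIdeal.span
    {x | ∃ j : Fin n, ∃ ξ : Module.Dual ℂ (V (Pi.single j 1)),
      ∃ v ∈ wtSp q d K (ρ (Pi.single j 1)) (fun k => ((Pi.single j 1 : Fin n → ℕ) k : ℤ)),
        (∀ y ∈ demazure q d (Set.range E) K (ρ (Pi.single j 1))
            ((σ w).toAdd (fun k => ((Pi.single j 1 : Fin n → ℕ) k : ℤ))), ξ y = 0) ∧
        x = cf (Pi.single j 1) ξ v}

/-- The ideal `Q⁻_{w}` of `O_q(G)`: generated by the coordinate functions `c^{ϖ_j}_{ξ,v}` with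
`v` a lowest weight vector of `V(ϖ_j)` and `ξ` orthogonal to the Demazure module
`V⁻_{w w₀}(ϖ_j)`. -/
noncomputable def Qminus (q : ℂ) {n : ℕ} (d : Fin n → ℕ)
    {U : Type} [Ring U] [Algebra ℂ U] (F : Fin n → U) (K : Fin n → Uˣ)
    {V : (Fin n → ℕ) → Type} [∀ c, AddCommGroup (V c)] [∀ c, Module ℂ (V c)]
    (ρ : ∀ c, U →ₐ[ℂ] Module.End ℂ (V c))
    {W : Type} [Group W] (σ : W →* Multiplicative (AddAut (Fin n → ℤ))) (w₀ : W)
    {A : Type} [Ring A]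
    (cf : ∀ c : Fin n → ℕ, Module.Dual ℂ (V c) → V c → A)
    (w : W) : TwoSidedIdeal A :=
  TwoSidedIdeal.span
    {x | ∃ j : Fin n, ∃ ξ : Module.Dual ℂ (V (Pi.single j 1)),
      ∃ v ∈ wtSp q d K (ρ (Pi.single j 1)) ((σ w₀).toAdd (fun k => ((Pi.single j 1 : Fin n → ℕ) k : ℤ))),
        (∀ y ∈ demazure q d (Set.range F) K (ρ (Pi.single j 1))
            ((σ (w * w₀)).toAdd (fun k => ((Pi.single j 1 : Fin n → ℕ) k : ℤ))), ξ y = 0) ∧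
        x = cf (Pi.single j 1) ξ v}



namespace HSimple

/-- The simple root `α_k` in coordinates with respect to fundamental weights. -/
def al {n : ℕ} (a : Fin n → Fin n → ℤ) (k : Fin n) : Fin n → ℤ := fun m => a m k

lemma lattice_diff {n : ℕ} (a : Fin n → Fin n → ℤ) {W : Type} [Group W]
    (r : W → ((Fin n → ℤ) ≃+ (Fin n → ℤ)))
    (hr1 : ∀ μ, r 1 μ = μ) (hrm : ∀ w w' μ, r (w * w') μ = r w (r w' μ))
    (s : Fin n → W) (hsgen : Subgroup.closure (Set.range s) = ⊤)
    (hs : ∀ i (μ : Fin n → ℤ), r (s i) μ = μ - μ i • al a i) (w : W) :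
    ∀ μ, ∃ b : Fin n → ℤ, μ - r w μ = ∑ i, b i • al a i := by
  have hw : w ∈ Subgroup.closure (Set.range s) := by rw [hsgen]; trivial
  induction hw using Subgroup.closure_induction with
  | mem x hx =>
    obtain ⟨i, rfl⟩ := hx
    intro μ
    refine ⟨Pi.single i (μ i), ?_⟩
    rw [hs, Finset.sum_eq_single i]
    · simp
    · intro j _ hj; simp [Pi.single_apply, hj]
    · simp
  | one => intro μ; exact ⟨0, by simp [hr1]⟩
  | mul x y _ _ hx hy =>
    intro μ
    obtain ⟨b, hb⟩ := hy μ
    obtain ⟨b', hb'⟩ := hx (r y μ)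
    refine ⟨b + b', ?_⟩
    rw [hrm]
    simp only [Pi.add_apply, add_smul, Finset.sum_add_distrib, ← hb, ← hb']
    abel
  | inv x _ hx =>
    intro μ
    obtain ⟨b, hb⟩ := hx (r x⁻¹ μ)
    refine ⟨-b, ?_⟩
    rw [← hrm, mul_inv_cancel, hr1] at hb
    simp only [Pi.neg_apply, neg_smul, Finset.sum_neg_distrib, ← hb]
    abel

lemma exists_form {n : ℕ} (a : Fin n → Fin n → ℤ) (d : Fin n → ℕ)
    (ha_diag : ∀ i, a i i = 2)
    (ha_symm : ∀ i j, (d i : ℤ) * a i j = (d j : ℤ) * a j i)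
    {W : Type} [Group W] [Finite W]
    (r : W → ((Fin n → ℤ) ≃+ (Fin n → ℤ)))
    (hr1 : ∀ μ, r 1 μ = μ) (hrm : ∀ w w' μ, r (w * w') μ = r w (r w' μ))
    (s : Fin n → W) (hsgen : Subgroup.closure (Set.range s) = ⊤)
    (hs : ∀ i (μ : Fin n → ℤ), r (s i) μ = μ - μ i • al a i) :
    ∃ (D : ℕ) (B : (Fin n → ℤ) → (Fin n → ℤ) → ℤ), 0 < D ∧
      (∀ x y z, B x (y + z) = B x y + B x z) ∧ (∀ x y, B x y = B y x) ∧
      (∀ x k, B x (al a k) = D * (d k * x k)) := by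
  classical
  have := Fintype.ofFinite W
  have key : ∀ j : Fin n, ∃ b : Fin n → ℤ,
      (Fintype.card W : ℤ) • (Pi.single j 1 : Fin n → ℤ) = ∑ i, b i • al a i := by
    intro j
    choose b hb using fun w => lattice_diff a r hr1 hrm s hsgen hs w (Pi.single j 1)
    have hx : ∑ w, r w (Pi.single j 1) = 0 := by
      set x := ∑ w, r w (Pi.single j 1) with hxd
      have hinv : ∀ i, r (s i) x = x := by
        intro i
        rw [hxd, map_sum]
        simp only [← hrm]
        exact Fintype.sum_equiv (Equiv.mulLeft (s i)) _ _ (fun w => rfl)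
      funext i
      have h1 := hinv i
      rw [hs] at h1
      have h2 := congrFun h1 i
      simp [al, ha_diag] at h2
      simpa using h2
    refine ⟨∑ w, b w, ?_⟩
    have : ∑ w : W, ((Pi.single j 1 : Fin n → ℤ) - r w (Pi.single j 1)) = ∑ w, ∑ i, b w i • al a i :=
      Finset.sum_congr rfl (fun w _ => hb w)
    rw [Finset.sum_sub_distrib, hx, sub_zero, Finset.sum_const, Finset.card_univ,
      Finset.sum_comm] at this
    rw [natCast_zsmul, this]
    simp [Finset.sum_smul]
  choose b hb using key
  have hb' : ∀ j k, ∑ i, b j i * a k i = Fintype.card W * (Pi.single j 1 : Fin n → ℤ) k := by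
    intro j k
    have := congrFun (hb j) k
    simp only [Pi.smul_apply, smul_eq_mul, Finset.sum_apply, al] at this
    exact this.symm
  let B : (Fin n → ℤ) → (Fin n → ℤ) → ℤ := fun x y => ∑ j, x j * ∑ i, b j i * (d i * y i)
  have hDpos : 0 < Fintype.card W := Fintype.card_pos
  have hal : ∀ x k, B x (al a k) = Fintype.card W * (d k * x k) := by
    intro x k
    have : ∀ j, ∑ i, b j i * (d i * al a k i) = d k * (Fintype.card W * (Pi.single j 1 : Fin n → ℤ) k) := by
      intro j
      rw [← hb', Finset.mul_sum]
      refine Finset.sum_congr rfl fun i _ => ?_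
      simp only [al]
      rw [ha_symm]; ring
    simp only [B, this]
    rw [Finset.sum_eq_single k]
    · simp; ring
    · intro j _ hj; simp [Pi.single_apply, hj.symm]
    · simp
  have hadd : ∀ x y z, B x (y + z) = B x y + B x z := by
    intro x y z
    simp only [B, Pi.add_apply, mul_add, Finset.sum_add_distrib]
  have hsmul : ∀ x (m : ℤ) y, B x (m • y) = m * B x y := by
    intro x m y
    simp only [B, Pi.smul_apply, smul_eq_mul, Finset.mul_sum]
    refine Finset.sum_congr rfl fun j _ => Finset.sum_congr rfl fun i _ => ?_
    ring
  have hsum : ∀ x (f : Fin n → (Fin n → ℤ)) (s : Finset (Fin n)), B x (∑ i ∈ s, f i) = ∑ i ∈ s, B x (f i) := by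
    intro x f s
    induction s using Finset.induction_on with
    | empty => simp [B]
    | insert i s hi ih => rw [Finset.sum_insert hi, Finset.sum_insert hi, hadd, ih]
  refine ⟨Fintype.card W, B, hDpos, hadd, ?_, hal⟩
  intro x y
  have h1 : (Fintype.card W : ℤ) • y = ∑ k, (∑ j, y j * b j k) • al a k := by
    have : y = ∑ j, y j • (Pi.single j 1 : Fin n → ℤ) := by
      funext k
      simp [Pi.single_apply]
    conv_lhs => rw [this]
    rw [Finset.smul_sum]
    simp only [Finset.sum_smul]
    rw [Finset.sum_comm]
    refine Finset.sum_congr rfl fun j _ => ?_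
    rw [smul_comm, hb, Finset.smul_sum]
    simp only [mul_smul]
  have h2 : (Fintype.card W : ℤ) * B x y = Fintype.card W * B y x := by
    rw [← hsmul, h1, hsum]
    simp only [hsmul, hal]
    simp only [B, Finset.mul_sum, Finset.sum_mul]
    rw [Finset.sum_comm]
    refine Finset.sum_congr rfl fun j _ => Finset.sum_congr rfl fun i _ => ?_
    ring
  exact mul_left_cancel₀ (by exact_mod_cast hDpos.ne') h2

lemma q_ne_zero {q : ℂ} (hq : Transcendental ℚ q) : q ≠ 0 := by
  rintro rfl
  exact hq (isAlgebraic_zero)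

lemma q_pow_inj {q : ℂ} (hq : Transcendental ℚ q) {m : ℤ} (h : q ^ m = 1) : m = 0 := by
  have key : ∀ k : ℕ, q ^ k = 1 → k = 0 := by
    intro k hk
    by_contra hne
    refine hq ⟨Polynomial.X ^ k - 1, ?_, by simp [hk]⟩
    exact Polynomial.X_pow_sub_C_ne_zero (Nat.pos_of_ne_zero hne) (1 : ℚ)
  rcases Int.eq_nat_or_neg m with ⟨k, rfl | rfl⟩
  · rw [zpow_natCast] at h; simp [key k h]
  · rw [zpow_neg, zpow_natCast, inv_eq_one] at h; simp [key k h]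

lemma q_zpow_inj {q : ℂ} (hq : Transcendental ℚ q) {m m' : ℤ} (h : q ^ m = q ^ m') : m = m' := by
  have : q ^ (m - m') = 1 := by
    rw [zpow_sub₀ (q_ne_zero hq), h, div_self (zpow_ne_zero _ (q_ne_zero hq))]
  have := q_pow_inj hq this
  omega

/-- Multiplicative form of the bilinear form on the weight lattice. -/
lemma exists_qform {q : ℂ} (hq : Transcendental ℚ q) {n : ℕ} (a : Fin n → Fin n → ℤ) (d : Fin n → ℕ)
    (ha_diag : ∀ i, a i i = 2) (hd_pos : ∀ i, 0 < d i)
    (ha_symm : ∀ i j, (d i : ℤ) * a i j = (d j : ℤ) * a j i)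
    {W : Type} [Group W] [Finite W]
    (r : W → ((Fin n → ℤ) ≃+ (Fin n → ℤ)))
    (hr1 : ∀ μ, r 1 μ = μ) (hrm : ∀ w w' μ, r (w * w') μ = r w (r w' μ))
    (s : Fin n → W) (hsgen : Subgroup.closure (Set.range s) = ⊤)
    (hs : ∀ i (μ : Fin n → ℤ), r (s i) μ = μ - μ i • al a i) :
    ∃ (Q : (Fin n → ℤ) → (Fin n → ℤ) → ℂˣ) (ht : (Fin n → ℤ) →+ ℤ),
      (∀ x y z, Q x (y + z) = Q x y * Q x z) ∧ (∀ x y, Q x y = Q y x) ∧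
      (∀ x k, (Q x (al a k) : ℂ) = q ^ (x k * (d k : ℤ))) ∧ (∀ k, 0 < ht (al a k)) := by
  obtain ⟨D, B, hD, hadd, hsymm, hal⟩ := exists_form a d ha_diag ha_symm r hr1 hrm s hsgen hs
  obtain ⟨h, hh⟩ := IsAlgClosed.exists_pow_nat_eq q hD
  have hh0 : h ≠ 0 := by
    rintro rfl
    rw [zero_pow hD.ne'] at hh
    exact q_ne_zero hq hh.symm
  refine ⟨fun x y => (Units.mk0 h hh0) ^ B x y, AddMonoidHom.mk' (B 1) (hadd 1), ?_, ?_, ?_, ?_⟩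
  · intro x y z; simp only [hadd, zpow_add]
  · intro x y; simp only [hsymm x y]
  · intro x k
    simp only [hal, Units.val_zpow_eq_zpow_val, Units.val_mk0]
    rw [zpow_mul, zpow_natCast, hh, mul_comm]
  · intro k
    simp only [AddMonoidHom.mk'_apply, hal]
    have h1 := hd_pos k
    simp only [Pi.one_apply, mul_one]
    positivity

end HSimple

namespace HSimple

section Ualg

variable {q : ℂ} {n : ℕ} {a : Fin n → Fin n → ℤ} {d : Fin n → ℕ}
  {U : Type} [Ring U] [Algebra ℂ U] {E F : Fin n → U} {K : Fin n → Uˣ}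

/-- Relations can be checked in an overalgebra. -/
lemma UqRels_of_injective {B : Type} [Ring B] [Algebra ℂ B] (f : B →ₐ[ℂ] U)
    (hf : Function.Injective f) (E' F' : Fin n → B) (K' : Fin n → Bˣ)
    (hE : ∀ i, f (E' i) = E i) (hF : ∀ i, f (F' i) = F i) (hK : ∀ i, f (K' i : B) = (K i : U))
    (hKi : ∀ i, f (((K' i)⁻¹ : Bˣ) : B) = (((K i)⁻¹ : Uˣ) : U))
    (h : UqRels q a d U E F K) : UqRels q a d B E' F' K' := by
  obtain ⟨h1, h2, h3, h4, h5, h6⟩ := h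
  refine ⟨?_, ?_, ?_, ?_, ?_, ?_⟩
  · intro i j; apply hf; simpa [hK] using h1 i j
  · intro i j; apply hf; simpa [hK, hE] using h2 i j
  · intro i j; apply hf; simpa [hK, hF] using h3 i j
  · intro i j; apply hf
    have := h4 i j
    split_ifs at this ⊢ with hij
    · simpa [hK, hE, hF, hKi] using this
    · simpa [hK, hE, hF, hKi] using this
  · intro i j hij; apply hf
    rw [map_sum, map_zero, ← h5 i j hij]
    refine Finset.sum_congr rfl fun k _ => ?_
    rw [map_smul, map_mul, map_mul, map_pow, map_pow, hE, hE]
  · intro i j hij; apply hf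
    rw [map_sum, map_zero, ← h6 i j hij]
    refine Finset.sum_congr rfl fun k _ => ?_
    rw [map_smul, map_mul, map_mul, map_pow, map_pow, hF, hF]

/-- The generating set of `U`. -/
def gens (E F : Fin n → U) (K : Fin n → Uˣ) : Set U :=
  {x | (∃ i, x = E i) ∨ (∃ i, x = F i) ∨ (∃ i, x = (K i : U)) ∨ ∃ i, x = (((K i)⁻¹ : Uˣ) : U)}

lemma U_gen (hrel : UqRels q a d U E F K)
    (hUuniv : ∀ (B : Type) [Ring B] [Algebra ℂ B] (E' F' : Fin n → B) (K' : Fin n → Bˣ),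
      UqRels q a d B E' F' K' → ∃! φ : U →ₐ[ℂ] B,
        (∀ i, φ (E i) = E' i) ∧ (∀ i, φ (F i) = F' i) ∧ (∀ i, φ (K i : U) = (K' i : B))) :
    Algebra.adjoin ℂ (gens E F K) = ⊤ := by
  set B := Algebra.adjoin ℂ (gens E F K) with hB
  have hE : ∀ i, E i ∈ B := fun i => Algebra.subset_adjoin (Or.inl ⟨i, rfl⟩)
  have hF : ∀ i, F i ∈ B := fun i => Algebra.subset_adjoin (Or.inr (Or.inl ⟨i, rfl⟩))
  have hK : ∀ i, (K i : U) ∈ B :=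
    fun i => Algebra.subset_adjoin (Or.inr (Or.inr (Or.inl ⟨i, rfl⟩)))
  have hKi : ∀ i, (((K i)⁻¹ : Uˣ) : U) ∈ B :=
    fun i => Algebra.subset_adjoin (Or.inr (Or.inr (Or.inr ⟨i, rfl⟩)))
  let K' : Fin n → Bˣ := fun i =>
    ⟨⟨K i, hK i⟩, ⟨((K i)⁻¹ : Uˣ), hKi i⟩, by ext; simp, by ext; simp⟩
  have hr : UqRels q a d B (fun i => ⟨E i, hE i⟩) (fun i => ⟨F i, hF i⟩) K' :=
    UqRels_of_injective B.val Subtype.val_injective _ _ _ (fun _ => rfl) (fun _ => rfl)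
      (fun _ => rfl) (fun _ => rfl) hrel
  obtain ⟨φ, ⟨h1, h2, h3⟩, -⟩ := hUuniv B _ _ _ hr
  obtain ⟨ψ, -, hψ⟩ := hUuniv U E F K hrel
  have e1 := hψ (B.val.comp φ) ⟨fun i => by simp [h1], fun i => by simp [h2],
    fun i => by simp [h3, K']⟩
  have e2 := hψ (AlgHom.id ℂ U) ⟨fun i => rfl, fun i => rfl, fun i => rfl⟩
  rw [eq_top_iff]
  intro x _
  have : x = (φ x : U) := by
    have := DFunLike.congr_fun (e2.trans e1.symm) x
    simpa using this
  rw [this]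
  exact (φ x).2

/-- The word in the generators `X` indexed by a list. -/
def word (X : Fin n → U) (l : List (Fin n)) : U := (l.map X).prod

@[simp] lemma word_nil (X : Fin n → U) : word X [] = 1 := rfl
@[simp] lemma word_cons (X : Fin n → U) (i) (l : List (Fin n)) :
    word X (i :: l) = X i * word X l := by simp [word]

/-- The group generated by the `K i`. -/
def KG (K : Fin n → Uˣ) : Subgroup Uˣ := Subgroup.closure (Set.range K)

lemma KG_comm {x : U} (h : ∀ i, ∃ c : ℂ, c ≠ 0 ∧ (K i : U) * x = c • (x * (K i : U)))
    {k : Uˣ} (hk : k ∈ KG K) : ∃ c : ℂ, c ≠ 0 ∧ (k : U) * x = c • (x * (k : U)) := by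
  induction hk using Subgroup.closure_induction with
  | mem k hk => obtain ⟨i, rfl⟩ := hk; exact h i
  | one => exact ⟨1, one_ne_zero, by simp⟩
  | mul k k' _ _ h1 h2 =>
    obtain ⟨c, hc, h1⟩ := h1
    obtain ⟨c', hc', h2⟩ := h2
    refine ⟨c' * c, mul_ne_zero hc' hc, ?_⟩
    rw [Units.val_mul, mul_assoc, h2, mul_smul_comm, ← mul_assoc, h1, smul_mul_assoc, smul_smul,
      mul_assoc]
  | inv k _ h1 =>
    obtain ⟨c, hc, h1⟩ := h1
    refine ⟨c⁻¹, inv_ne_zero hc, ?_⟩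
    have : x * ((k⁻¹ : Uˣ) : U) = c • (((k⁻¹ : Uˣ) : U) * x) := by
      have h2 := congrArg (fun y => ((k⁻¹ : Uˣ) : U) * y * ((k⁻¹ : Uˣ) : U)) h1
      simp only [mul_smul_comm, smul_mul_assoc] at h2
      rw [← mul_assoc, Units.inv_mul, one_mul, ← mul_assoc, mul_assoc, Units.mul_inv, mul_one] at h2
      exact h2
    rw [this, smul_smul, inv_mul_cancel₀ hc, one_smul]

lemma tri_span (hq : q ≠ 0) (hrel : UqRels q a d U E F K)
    (hgen : Algebra.adjoin ℂ (gens E F K) = ⊤) :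
    Submodule.span ℂ {x : U | ∃ l l', ∃ k ∈ KG K, x = word F l * (k : U) * word E l'} = ⊤ := by
  obtain ⟨h1, h2, h3, h4, -, -⟩ := hrel
  set S := Submodule.span ℂ {x : U | ∃ l l', ∃ k ∈ KG K, x = word F l * (k : U) * word E l'}
    with hS
  have hmem : ∀ l l' k, k ∈ KG K → word F l * (k : U) * word E l' ∈ S :=
    fun l l' k hk => Submodule.subset_span ⟨l, l', k, hk, rfl⟩
  have lift : ∀ y : U, (∀ l l' k, k ∈ KG K → y * (word F l * (k : U) * word E l') ∈ S) →
      ∀ x ∈ S, y * x ∈ S := by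
    intro y hy x hx
    induction hx using Submodule.span_induction with
    | mem x hx => obtain ⟨l, l', k, hk, rfl⟩ := hx; exact hy l l' k hk
    | zero => simp
    | add x y _ _ hx hy => rw [mul_add]; exact S.add_mem hx hy
    | smul c x _ hx => rw [mul_smul_comm]; exact S.smul_mem c hx
  have hF : ∀ j, ∀ x ∈ S, F j * x ∈ S := by
    intro j
    refine lift _ fun l l' k hk => ?_
    have := hmem (j :: l) l' k hk
    simpa [mul_assoc] using this
  have hKF : ∀ k ∈ KG K, ∀ j, ∃ c : ℂ, c ≠ 0 ∧ (k : U) * F j = c • (F j * (k : U)) :=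
    fun k hk j => KG_comm (fun i => ⟨_, zpow_ne_zero _ hq, h3 i j⟩) hk
  have hKE : ∀ k ∈ KG K, ∀ j, ∃ c : ℂ, c ≠ 0 ∧ (k : U) * E j = c • (E j * (k : U)) :=
    fun k hk j => KG_comm (fun i => ⟨_, zpow_ne_zero _ hq, h2 i j⟩) hk
  have hK : ∀ k ∈ KG K, ∀ x ∈ S, (k : U) * x ∈ S := by
    intro k hk
    refine lift _ fun l => ?_
    induction l with
    | nil =>
      intro l' k' hk'
      have := hmem [] l' (k * k') (mul_mem hk hk')
      simpa [mul_assoc] using this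
    | cons j l ih =>
      intro l' k' hk'
      obtain ⟨c, -, hc⟩ := hKF k hk j
      have : (k : U) * (word F (j :: l) * (k' : U) * word E l') =
          c • (F j * ((k : U) * (word F l * (k' : U) * word E l'))) := by
        rw [word_cons]
        simp only [← mul_assoc]
        rw [hc]
        simp only [smul_mul_assoc]
      rw [this]
      exact S.smul_mem _ (hF j _ (ih l' k' hk'))
  have hKm : ∀ i, K i ∈ KG K := fun i => Subgroup.subset_closure ⟨i, rfl⟩
  have hE : ∀ j, ∀ x ∈ S, E j * x ∈ S := by
    intro i
    refine lift _ fun l => ?_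
    induction l with
    | nil =>
      intro l' k hk
      obtain ⟨c, hc0, hc⟩ := hKE k hk i
      have h := hmem [] (i :: l') k hk
      have : E i * (word F [] * (k : U) * word E l') =
          c⁻¹ • (word F [] * (k : U) * word E (i :: l')) := by
        simp only [word_nil, word_cons, one_mul, ← mul_assoc, hc]
        rw [smul_mul_assoc, smul_smul, inv_mul_cancel₀ hc0, one_smul]
      rw [this]
      exact S.smul_mem _ h
    | cons j l ih =>
      intro l' k hk
      have h := h4 i j
      have e : E i * (word F (j :: l) * (k : U) * word E l') =
          F j * (E i * (word F l * (k : U) * word E l')) +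
          (E i * F j - F j * E i) * (word F l * (k : U) * word E l') := by
        rw [word_cons]; noncomm_ring
      rw [e]
      refine S.add_mem (hF j _ (ih l' k hk)) ?_
      rw [h]
      split_ifs
      · rw [smul_mul_assoc, sub_mul]
        exact S.smul_mem _ (S.sub_mem (hK _ (hKm i) _ (hmem _ _ _ hk))
          (hK _ (inv_mem (hKm i)) _ (hmem _ _ _ hk)))
      · simp
  rw [eq_top_iff]
  rintro u -
  have hu : u ∈ Algebra.adjoin ℂ (gens E F K) := by rw [hgen]; trivial
  have main : ∀ x ∈ S, u * x ∈ S := by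
    induction hu using Algebra.adjoin_induction with
    | mem x hx =>
      rcases hx with ⟨i, rfl⟩ | ⟨i, rfl⟩ | ⟨i, rfl⟩ | ⟨i, rfl⟩
      · exact hE i
      · exact hF i
      · exact hK _ (hKm i)
      · exact hK _ (inv_mem (hKm i))
    | algebraMap r => intro x hx; rw [← Algebra.smul_def]; exact S.smul_mem _ hx
    | add x y _ _ hx hy => intro z hz; rw [add_mul]; exact S.add_mem (hx z hz) (hy z hz)
    | mul x y _ _ hx hy => intro z hz; rw [mul_assoc]; exact hx _ (hy z hz)
  have h1S : (1 : U) ∈ S := by simpa using hmem [] [] 1 (one_mem _)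
  simpa using main 1 h1S

/-- Linear maps agreeing on the triangular spanning set are equal. -/
lemma tri_ext (hq : q ≠ 0) (hrel : UqRels q a d U E F K)
    (hgen : Algebra.adjoin ℂ (gens E F K) = ⊤) {M : Type*} [AddCommGroup M] [Module ℂ M]
    (f g : U →ₗ[ℂ] M)
    (h : ∀ l l', ∀ k ∈ KG K, f (word F l * (k : U) * word E l') = g (word F l * (k : U) * word E l')) :
    f = g := by
  refine LinearMap.ext_on (tri_span hq hrel hgen) ?_
  rintro x ⟨l, l', k, hk, rfl⟩
  exact h l l' k hk

end Ualg

end HSimple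

namespace HSimple

section sl2

variable {M : Type*} [AddCommGroup M] [Module ℂ M]

lemma eig_finite (t : ℂ) (ht : ∀ m m' : ℤ, t ^ m = t ^ m' → m = m') (k : Module.End ℂ M)
    (Y : Submodule ℂ M) [FiniteDimensional ℂ Y] :
    {m : ℤ | ∃ x ∈ Y, x ≠ 0 ∧ k x = t ^ m • x}.Finite := by
  set S := {m : ℤ | ∃ x ∈ Y, x ≠ 0 ∧ k x = t ^ m • x}
  choose x hx using fun m : S => m.2
  have li : LinearIndependent ℂ x := by
    refine Module.End.eigenvectors_linearIndependent' k (fun m : S => t ^ (m : ℤ)) ?_ x ?_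
    · intro m m' h; exact Subtype.ext (ht _ _ h)
    · intro m
      exact ⟨Module.End.mem_eigenspace_iff.2 (hx m).2.2, (hx m).2.1⟩
  have li' : LinearIndependent ℂ (fun m : S => (⟨x m, (hx m).1⟩ : Y)) := by
    apply LinearIndependent.of_comp Y.subtype
    exact li
  have := li'.finite
  exact Set.toFinite S

lemma nilp (t : ℂ) (ht : ∀ m m' : ℤ, t ^ m = t ^ m' → m = m') (k f : Module.End ℂ M)
    (Y : Submodule ℂ M) [FiniteDimensional ℂ Y] (x : M) (m c : ℤ) (hc : c ≠ 0)
    (hY : ∀ j : ℕ, (f ^ j) x ∈ Y) (hk : ∀ j : ℕ, k ((f ^ j) x) = t ^ (m + c * j) • (f ^ j) x) :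
    ∃ N : ℕ, (f ^ N) x = 0 := by
  by_contra hne
  push Not at hne
  have hfin := eig_finite t ht k Y
  have : Set.range (fun j : ℕ => m + c * j) ⊆ {m : ℤ | ∃ x ∈ Y, x ≠ 0 ∧ k x = t ^ m • x} := by
    rintro _ ⟨j, rfl⟩
    exact ⟨_, hY j, hne j, hk j⟩
  refine Set.infinite_range_of_injective ?_ (hfin.subset this)
  intro i j hij
  have : c * (i : ℤ) = c * j := by simpa using hij
  exact_mod_cast mul_left_cancel₀ hc this

variable {e f k k' : Module.End ℂ M} {t : ℂ}

lemma pow_wt {c : ℤ} (ht0 : t ≠ 0) (hkf : k * f = t ^ c • (f * k))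
    {x : M} {m : ℤ} (hk : k x = t ^ m • x) (j : ℕ) :
    k ((f ^ j) x) = t ^ (m + c * j) • (f ^ j) x := by
  induction j with
  | zero => simpa using hk
  | succ j ih =>
    have h1 : k (f ((f ^ j) x)) = t ^ c • f (k ((f ^ j) x)) := by
      have := DFunLike.congr_fun hkf ((f ^ j) x)
      simpa using this
    rw [pow_succ', Module.End.mul_apply, h1, ih, map_smul, smul_smul, ← zpow_add₀ ht0]
    congr 2
    push_cast; ring

lemma sl2_ef (ht0 : t ≠ 0) (ht : ∀ m m' : ℤ, t ^ m = t ^ m' → m = m')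
    (hef : e * f - f * e = (t - t⁻¹)⁻¹ • (k - k'))
    (hkf : k * f = t ^ (-2 : ℤ) • (f * k)) (hk'f : k' * f = t ^ (2 : ℤ) • (f * k'))
    {x : M} {m : ℤ} (hex : e x = 0) (hk : k x = t ^ m • x) (hk' : k' x = t ^ (-m) • x) (j : ℕ) :
    e ((f ^ (j + 1)) x) = ((t - t⁻¹)⁻¹ * (t - t⁻¹)⁻¹ * (t ^ (j + 1 : ℤ) - t ^ (-(j + 1) : ℤ)) *
      (t ^ (m - j) - t ^ (-(m - j)))) • (f ^ j) x := by
  have htt : t - t⁻¹ ≠ 0 := by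
    intro h
    have := ht 1 (-1) (by simpa [sub_eq_zero] using h)
    omega
  have step : ∀ y : M, e (f y) = f (e y) + (t - t⁻¹)⁻¹ • (k y - k' y) := by
    intro y
    have := DFunLike.congr_fun hef y
    simp only [LinearMap.sub_apply, Module.End.mul_apply, LinearMap.smul_apply] at this
    rw [← this]; abel
  induction j with
  | zero =>
    rw [zero_add, pow_one, step, hex, map_zero, zero_add, hk, hk', ← sub_smul, smul_smul]
    simp only [pow_zero, Module.End.one_apply]
    congr 1
    have : (t ^ ((0 : ℕ) + 1 : ℤ) - t ^ (-((0 : ℕ) + 1) : ℤ)) = t - t⁻¹ := by simp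
    rw [this, mul_assoc (t - t⁻¹)⁻¹, inv_mul_cancel₀ htt, mul_one]
    simp
  | succ j ih =>
    rw [pow_succ', Module.End.mul_apply, step, ih, map_smul,
      pow_wt ht0 hkf hk, pow_wt ht0 hk'f hk', ← sub_smul, smul_smul,
      pow_succ' f j, Module.End.mul_apply, ← add_smul]
    congr 1
    have h1 : t ^ (m + -2 * ((j + 1 : ℕ) : ℤ)) = t ^ m * (t ^ (j : ℤ))⁻¹ * (t ^ (j : ℤ))⁻¹ * t⁻¹ * t⁻¹ := by
      rw [← zpow_neg, ← zpow_neg_one, ← zpow_add₀ ht0, ← zpow_add₀ ht0, ← zpow_add₀ ht0, ← zpow_add₀ ht0]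
      congr 1; push_cast; ring
    have h2 : t ^ (-m + 2 * ((j + 1 : ℕ) : ℤ)) = (t ^ m)⁻¹ * (t ^ (j : ℤ)) * (t ^ (j : ℤ)) * t * t := by
      rw [← zpow_neg, ← zpow_add₀ ht0, ← zpow_add₀ ht0, ← zpow_add_one₀ ht0, ← zpow_add_one₀ ht0]
      congr 1; push_cast; ring
    have h3 : t ^ (m - ((j + 1 : ℕ) : ℤ)) = t ^ m * (t ^ (j : ℤ))⁻¹ * t⁻¹ := by
      rw [← zpow_neg, ← zpow_neg_one, ← zpow_add₀ ht0, ← zpow_add₀ ht0]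
      congr 1; push_cast; ring
    have h4 : t ^ (-(m - ((j + 1 : ℕ) : ℤ))) = (t ^ m)⁻¹ * (t ^ (j : ℤ)) * t := by
      rw [← zpow_neg, ← zpow_add₀ ht0, ← zpow_add_one₀ ht0]
      congr 1; push_cast; ring
    have h5 : t ^ (m - (j : ℤ)) = t ^ m * (t ^ (j : ℤ))⁻¹ := by
      rw [← zpow_neg, ← zpow_add₀ ht0]; congr 1
    have h6 : t ^ (-(m - (j : ℤ))) = (t ^ m)⁻¹ * (t ^ (j : ℤ)) := by
      rw [← zpow_neg, ← zpow_add₀ ht0]; congr 1; ring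
    have h7 : t ^ ((j : ℤ) + 1) = t ^ (j : ℤ) * t := zpow_add_one₀ ht0 _
    have h8 : t ^ (-((j : ℤ) + 1)) = (t ^ (j : ℤ))⁻¹ * t⁻¹ := by
      rw [zpow_neg, h7, mul_inv]
    have h9 : t ^ (((j + 1 : ℕ) : ℤ) + 1) = t ^ (j : ℤ) * t * t := by
      rw [zpow_add_one₀ ht0]; push_cast; rw [h7]
    have h10 : t ^ (-(((j + 1 : ℕ) : ℤ) + 1)) = (t ^ (j : ℤ))⁻¹ * t⁻¹ * t⁻¹ := by
      rw [zpow_neg, h9, mul_inv, mul_inv]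
    rw [h1, h2, h3, h4, h5, h6, h7, h8, h9, h10]
    have hu : t ^ (j : ℤ) ≠ 0 := zpow_ne_zero _ ht0
    have hv : t ^ m ≠ 0 := zpow_ne_zero _ ht0
    generalize t ^ (j : ℤ) = u at *
    generalize t ^ m = v at *
    obtain ⟨w, hw⟩ : ∃ w, w = (t - t⁻¹)⁻¹ := ⟨_, rfl⟩
    have hw1 : w * (t - t⁻¹) = 1 := by rw [hw, inv_mul_cancel₀ htt]
    rw [← hw]
    have : w * (v * u⁻¹ * u⁻¹ * t⁻¹ * t⁻¹ - v⁻¹ * u * u * t * t) =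
        w * w * (t - t⁻¹) * (v * u⁻¹ * u⁻¹ * t⁻¹ * t⁻¹ - v⁻¹ * u * u * t * t) := by
      rw [mul_assoc w w, hw1, mul_one]
    rw [this]
    field_simp
    ring

lemma sl2_ne (ht0 : t ≠ 0) (ht : ∀ m m' : ℤ, t ^ m = t ^ m' → m = m')
    (hef : e * f - f * e = (t - t⁻¹)⁻¹ • (k - k'))
    (hkf : k * f = t ^ (-2 : ℤ) • (f * k)) (hk'f : k' * f = t ^ (2 : ℤ) • (f * k'))
    {x : M} {m : ℤ} (hex : e x = 0) (hk : k x = t ^ m • x) (hk' : k' x = t ^ (-m) • x)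
    (hx : x ≠ 0) (j : ℕ) (hj : ∀ i : ℕ, i < j → (i : ℤ) ≠ m) : (f ^ j) x ≠ 0 := by
  induction j with
  | zero => simpa using hx
  | succ j ih =>
    intro h
    have h1 := sl2_ef ht0 ht hef hkf hk'f hex hk hk' j
    rw [h, map_zero] at h1
    have h2 := ih (fun i hi => hj i (by omega))
    have h3 := (smul_eq_zero.1 h1.symm).resolve_right h2
    have htt : t - t⁻¹ ≠ 0 := by
      intro h
      have := ht 1 (-1) (by simpa [sub_eq_zero] using h)
      omega
    have hjm := hj j (by omega)
    simp only [mul_eq_zero, inv_eq_zero, htt, false_or, sub_eq_zero] at h3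
    rcases h3 with h3 | h3
    · have := ht _ _ h3; omega
    · have := ht _ _ h3; omega

lemma sl2_dominant (ht0 : t ≠ 0) (ht : ∀ m m' : ℤ, t ^ m = t ^ m' → m = m')
    (hef : e * f - f * e = (t - t⁻¹)⁻¹ • (k - k'))
    (hkf : k * f = t ^ (-2 : ℤ) • (f * k)) (hk'f : k' * f = t ^ (2 : ℤ) • (f * k'))
    {x : M} {m : ℤ} (hex : e x = 0) (hk : k x = t ^ m • x) (hk' : k' x = t ^ (-m) • x)
    (hx : x ≠ 0) (Y : Submodule ℂ M) [FiniteDimensional ℂ Y] (hY : ∀ j : ℕ, (f ^ j) x ∈ Y) :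
    0 ≤ m := by
  by_contra hm
  obtain ⟨N, hN⟩ := nilp t ht k f Y x m (-2) (by norm_num) hY (pow_wt ht0 hkf hk)
  exact sl2_ne ht0 ht hef hkf hk'f hex hk hk' hx N (fun i _ => by omega) hN

lemma sl2_reflect [FiniteDimensional ℂ M] (ht0 : t ≠ 0)
    (ht : ∀ m m' : ℤ, t ^ m = t ^ m' → m = m')
    (hef : e * f - f * e = (t - t⁻¹)⁻¹ • (k - k'))
    (hkf : k * f = t ^ (-2 : ℤ) • (f * k)) (hk'f : k' * f = t ^ (2 : ℤ) • (f * k'))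
    (hke : k * e = t ^ (2 : ℤ) • (e * k)) (hk'e : k' * e = t ^ (-2 : ℤ) • (e * k'))
    {x : M} {m : ℕ} (hk : k x = t ^ (m : ℤ) • x) (hk' : k' x = t ^ (-m : ℤ) • x)
    (hx : x ≠ 0) : ∃ j : ℕ, (f ^ (m + j)) ((e ^ j) x) ≠ 0 := by
  classical
  have hN := nilp t ht k e ⊤ x m 2 (by norm_num) (fun _ => trivial) (pow_wt ht0 hke hk)
  have h0 : Nat.find hN ≠ 0 := by
    intro h
    have := Nat.find_spec hN
    rw [h] at this
    exact hx (by simpa using this)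
  obtain ⟨j, hj⟩ := Nat.exists_eq_succ_of_ne_zero h0
  have hj1 : (e ^ j) x ≠ 0 := Nat.find_min hN (by omega)
  have hj2 : e ((e ^ j) x) = 0 := by
    have := Nat.find_spec hN
    rw [hj, Nat.succ_eq_add_one, pow_succ', Module.End.mul_apply] at this
    exact this
  refine ⟨j, ?_⟩
  have hk2 := pow_wt ht0 hk'e hk' j
  rw [show (-(m : ℤ) + -2 * (j : ℤ)) = -(m + 2 * j) by ring] at hk2
  exact sl2_ne ht0 ht hef hkf hk'f hj2 (pow_wt ht0 hke hk j) hk2 hj1 _ (fun i hi => by omega)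

end sl2

/-- Components of an element of a stable subspace with respect to joint eigenspaces. -/
lemma comp_mem {M : Type*} [AddCommGroup M] [Module ℂ M] {P G : Type*} [DecidableEq P]
    (S : P → Submodule ℂ M) (f : G → Module.End ℂ M) (ev : P → G → ℂ)
    (hS : ∀ p g, ∀ x ∈ S p, f g x = ev p g • x)
    (hev : ∀ p p', p ≠ p' → ∃ g, ev p g ≠ ev p' g)
    (X : Submodule ℂ M) (hX : ∀ g, ∀ x ∈ X, f g x ∈ X) (N : ℕ) :
    ∀ (s : Finset P) (y : P → M), s.card = N → (∀ p, y p ∈ S p) → ∑ p ∈ s, y p ∈ X →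
      ∀ p ∈ s, y p ∈ X := by
  induction N with
  | zero =>
    intro s y hs _ _ p hp
    rw [Finset.card_eq_zero] at hs
    simp [hs] at hp
  | succ N ih =>
    intro s y hs hy hsum p hp
    by_cases hone : ∀ p' ∈ s, p' = p
    · have : s = {p} := by
        ext p'; simp only [Finset.mem_singleton]
        exact ⟨hone p', fun h => h ▸ hp⟩
      rw [this, Finset.sum_singleton] at hsum
      exact hsum
    · push Not at hone
      obtain ⟨p', hp', hne⟩ := hone
      obtain ⟨g, hg⟩ := hev p p' hne.symm
      have h1 : ∑ r ∈ s.erase p', (ev r g - ev p' g) • y r ∈ X := by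
        have : ∑ r ∈ s.erase p', (ev r g - ev p' g) • y r =
            f g (∑ r ∈ s, y r) - ev p' g • ∑ r ∈ s, y r := by
          rw [map_sum, Finset.smul_sum, ← Finset.sum_sub_distrib, ← Finset.sum_erase_add _ _ hp',
            hS p' g _ (hy p'), sub_self, add_zero]
          refine Finset.sum_congr rfl fun r _ => ?_
          rw [hS r g _ (hy r), sub_smul]
        rw [this]
        exact X.sub_mem (hX g _ hsum) (X.smul_mem _ hsum)
      have h2 := ih (s.erase p') (fun r => (ev r g - ev p' g) • y r)
        (by rw [Finset.card_erase_of_mem hp', hs]; rfl) (fun r => (S r).smul_mem _ (hy r)) h1 p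
        (Finset.mem_erase.2 ⟨hne.symm, hp⟩)
      have h3 := X.smul_mem (ev p g - ev p' g)⁻¹ h2
      rwa [smul_smul, inv_mul_cancel₀ (sub_ne_zero.2 hg), one_smul] at h3

end HSimple

namespace HSimple

/-- The weight of a word. -/
def lwt {n : ℕ} (a : Fin n → Fin n → ℤ) (l : List (Fin n)) : Fin n → ℤ := (l.map (al a)).sum

@[simp] lemma lwt_nil {n : ℕ} (a : Fin n → Fin n → ℤ) : lwt a [] = 0 := rfl
@[simp] lemma lwt_cons {n : ℕ} (a : Fin n → Fin n → ℤ) (i) (l : List (Fin n)) :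
    lwt a (i :: l) = al a i + lwt a l := by simp [lwt]

lemma ht_lwt {n : ℕ} {a : Fin n → Fin n → ℤ} (ht : (Fin n → ℤ) →+ ℤ)
    (hht : ∀ k, 0 < ht (al a k)) (l : List (Fin n)) :
    0 ≤ ht (lwt a l) ∧ (ht (lwt a l) = 0 → lwt a l = 0) := by
  induction l with
  | nil => simp
  | cons i l ih =>
    have := hht i
    rw [lwt_cons, map_add]
    exact ⟨by omega, fun h => by omega⟩

lemma sep_iSup {M : Type*} [AddCommGroup M] [Module ℂ M] {P G : Type*}
    (S : P → Submodule ℂ M) (f : G → Module.End ℂ M) (ev : P → G → ℂ)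
    (hS : ∀ p g, ∀ x ∈ S p, f g x = ev p g • x)
    (hev : ∀ p p', p ≠ p' → ∃ g, ev p g ≠ ev p' g)
    (T : Set P) (p : P) (hp : p ∉ T) (x : M) (hx : x ∈ S p) (hxT : x ∈ ⨆ r ∈ T, S r) : x = 0 := by
  classical
  obtain ⟨y, hy, hsum⟩ := (Submodule.mem_iSup_iff_exists_finsupp _ _).1 hxT
  have hyT : ∀ r, y r ≠ 0 → r ∈ T ∧ y r ∈ S r := by
    intro r hr
    by_cases h : r ∈ T
    · have := hy r
      simp only [h, iSup_pos] at this
      exact ⟨h, this⟩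
    · have := hy r
      simp only [h, iSup_false, Submodule.mem_bot] at this
      exact absurd this hr
  have hps : p ∉ y.support := by
    intro h
    exact hp (hyT p (Finsupp.mem_support_iff.1 h)).1
  have key := comp_mem S f ev hS hev ⊥ (by simp) _ (insert p y.support)
    (fun r => if r = p then -x else y r) rfl ?_ ?_ p (Finset.mem_insert_self _ _)
  · simpa using key
  · intro r
    by_cases h : r = p
    · simp [h, hx]
    · simp only [h, if_false]
      by_cases h0 : y r = 0
      · rw [h0]; exact zero_mem _
      · exact (hyT r h0).2
  · rw [Finset.sum_insert hps]
    have : ∑ r ∈ y.support, (if r = p then -x else y r) = ∑ r ∈ y.support, y r := by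
      refine Finset.sum_congr rfl fun r hr => ?_
      have hrp : r ≠ p := by
        rintro rfl; exact hps hr
      rw [if_neg hrp]
    rw [this]
    have h2 : ∑ r ∈ y.support, y r = x := hsum
    simp [h2]

section Vmod

variable {q : ℂ} {n : ℕ} {a : Fin n → Fin n → ℤ} {d : Fin n → ℕ}
  {U : Type} [Ring U] [Algebra ℂ U] {E F : Fin n → U} {K : Fin n → Uˣ}
  {V : Type} [AddCommGroup V] [Module ℂ V] {ρ : U →ₐ[ℂ] Module.End ℂ V}

lemma mem_wtSp {μ : Fin n → ℤ} {x : V} :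
    x ∈ wtSp q d K ρ μ ↔ ∀ i, ρ (K i : U) x = q ^ (μ i * (d i : ℤ)) • x := by
  simp [wtSp, Submodule.mem_iInf, sub_eq_zero]

lemma inv_smul_of {k : Uˣ} {x : V} {c : ℂ} (hc : c ≠ 0) (h : ρ (k : U) x = c • x) :
    ρ ((k⁻¹ : Uˣ) : U) x = c⁻¹ • x := by
  have h1 : ρ ((k⁻¹ : Uˣ) : U) (ρ (k : U) x) = x := by
    rw [← Module.End.mul_apply, ← map_mul, Units.inv_mul, map_one, Module.End.one_apply]
  rw [h, map_smul] at h1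
  rw [← h1, smul_smul, inv_mul_cancel₀ hc, one_smul, h1]

lemma wtSp_inv (hq : q ≠ 0) {μ : Fin n → ℤ} {x : V} (hx : x ∈ wtSp q d K ρ μ) (i : Fin n) :
    ρ (((K i)⁻¹ : Uˣ) : U) x = q ^ (-(μ i * (d i : ℤ))) • x := by
  rw [inv_smul_of (zpow_ne_zero _ hq) (mem_wtSp.1 hx i), zpow_neg]

lemma wtSp_E (hq : q ≠ 0) (hrel : UqRels q a d U E F K) {μ : Fin n → ℤ} {x : V}
    (hx : x ∈ wtSp q d K ρ μ) (j : Fin n) : ρ (E j) x ∈ wtSp q d K ρ (μ + al a j) := by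
  rw [mem_wtSp]
  intro i
  rw [← Module.End.mul_apply, ← map_mul, hrel.2.1, map_smul, map_mul, LinearMap.smul_apply,
    Module.End.mul_apply, mem_wtSp.1 hx i, map_smul, smul_smul, ← zpow_add₀ hq]
  congr 2
  simp only [Pi.add_apply, al]; ring

lemma wtSp_F (hq : q ≠ 0) (hrel : UqRels q a d U E F K) {μ : Fin n → ℤ} {x : V}
    (hx : x ∈ wtSp q d K ρ μ) (j : Fin n) : ρ (F j) x ∈ wtSp q d K ρ (μ - al a j) := by
  rw [mem_wtSp]
  intro i
  rw [← Module.End.mul_apply, ← map_mul, hrel.2.2.1, map_smul, map_mul, LinearMap.smul_apply,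
    Module.End.mul_apply, mem_wtSp.1 hx i, map_smul, smul_smul, ← zpow_add₀ hq]
  congr 2
  simp only [Pi.sub_apply, al]; ring

lemma wtSp_Epow (hq : q ≠ 0) (hrel : UqRels q a d U E F K) {μ : Fin n → ℤ} {x : V}
    (hx : x ∈ wtSp q d K ρ μ) (j : Fin n) (m : ℕ) :
    (ρ (E j) ^ m) x ∈ wtSp q d K ρ (μ + (m : ℤ) • al a j) := by
  induction m with
  | zero => simpa using hx
  | succ m ih =>
    rw [pow_succ', Module.End.mul_apply]
    have := wtSp_E hq hrel ih j
    convert this using 1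
    push_cast; rw [add_smul, one_smul]; abel

lemma wtSp_Fpow (hq : q ≠ 0) (hrel : UqRels q a d U E F K) {μ : Fin n → ℤ} {x : V}
    (hx : x ∈ wtSp q d K ρ μ) (j : Fin n) (m : ℕ) :
    (ρ (F j) ^ m) x ∈ wtSp q d K ρ (μ - (m : ℤ) • al a j) := by
  induction m with
  | zero => simpa using hx
  | succ m ih =>
    rw [pow_succ', Module.End.mul_apply]
    have := wtSp_F hq hrel ih j
    convert this using 1
    push_cast; rw [add_smul, one_smul]; abel

lemma wtSp_Fword (hq : q ≠ 0) (hrel : UqRels q a d U E F K) {μ : Fin n → ℤ} {x : V}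
    (hx : x ∈ wtSp q d K ρ μ) (l : List (Fin n)) :
    ρ (word F l) x ∈ wtSp q d K ρ (μ - lwt a l) := by
  induction l with
  | nil => simpa using hx
  | cons i l ih =>
    rw [word_cons, map_mul, Module.End.mul_apply]
    have := wtSp_F hq hrel ih i
    convert this using 1
    rw [lwt_cons]; abel

lemma wtSp_sep (hq : Transcendental ℚ q) (hd_pos : ∀ i, 0 < d i) (T : Set (Fin n → ℤ))
    (μ : Fin n → ℤ) (hμ : μ ∉ T) (x : V) (hx : x ∈ wtSp q d K ρ μ)
    (hxT : x ∈ ⨆ r ∈ T, wtSp q d K ρ r) : x = 0 := by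
  refine sep_iSup (fun μ => wtSp q d K ρ μ) (fun i : Fin n => ρ (K i : U))
    (fun μ i => q ^ (μ i * (d i : ℤ))) (fun μ i x hx => mem_wtSp.1 hx i) ?_ T μ hμ x hx hxT
  intro p p' hne
  by_contra hcon
  push Not at hcon
  apply hne
  funext i
  have := q_zpow_inj hq (hcon i)
  have hdi := hd_pos i
  exact mul_right_cancel₀ (by positivity) this

/-- A nonzero vector of weight `μ` that lies in a sum of other weight spaces: contradiction;
functional supported at one weight. -/
lemma exists_dual (hq : Transcendental ℚ q) (hd_pos : ∀ i, 0 < d i) (μ : Fin n → ℤ) (x : V)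
    (hx : x ∈ wtSp q d K ρ μ) (hx0 : x ≠ 0) :
    ∃ ξ : Module.Dual ℂ V, inDualWt q d K ρ (-μ) ξ ∧ ξ x ≠ 0 := by
  have hnot : x ∉ ⨆ r ∈ ({μ}ᶜ : Set (Fin n → ℤ)), wtSp q d K ρ r := by
    intro h
    exact hx0 (wtSp_sep hq hd_pos _ μ (by simp) x hx h)
  obtain ⟨ξ, h1, h2⟩ := Submodule.exists_le_ker_of_notMem hnot
  refine ⟨ξ, ?_, h1⟩
  intro ν hν y hy
  rw [neg_neg] at hν
  exact h2 (Submodule.mem_iSup_of_mem ν (Submodule.mem_iSup_of_mem (by simpa using hν) hy))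

/-- scalar by which an element of the torus acts on a highest weight space -/
lemma KG_scalar (hq : q ≠ 0) {μ : Fin n → ℤ} {k : Uˣ} (hk : k ∈ KG K) :
    ∃ c : ℂ, c ≠ 0 ∧ ∀ x ∈ wtSp q d K ρ μ, ρ (k : U) x = c • x := by
  induction hk using Subgroup.closure_induction with
  | mem k hk =>
    obtain ⟨i, rfl⟩ := hk
    exact ⟨_, zpow_ne_zero _ hq, fun x hx => mem_wtSp.1 hx i⟩
  | one => exact ⟨1, one_ne_zero, by simp⟩
  | mul k k' _ _ h h' =>
    obtain ⟨c, hc, h⟩ := h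
    obtain ⟨c', hc', h'⟩ := h'
    refine ⟨c' * c, mul_ne_zero hc' hc, fun x hx => ?_⟩
    rw [Units.val_mul, map_mul, Module.End.mul_apply, h' x hx, map_smul, h x hx, smul_smul]
  | inv k _ h =>
    obtain ⟨c, hc, h⟩ := h
    exact ⟨c⁻¹, inv_ne_zero hc, fun x hx => inv_smul_of hc (h x hx)⟩

lemma word_E_kill {v : V} (hE : ∀ i, ρ (E i) v = 0) {l : List (Fin n)} (hl : l ≠ []) :
    ρ (word E l) v = 0 := by
  induction l with
  | nil => exact absurd rfl hl
  | cons i l ih =>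
    rw [word_cons, map_mul, Module.End.mul_apply]
    cases l with
    | nil => simp [hE]
    | cons j l => rw [ih (by simp), map_zero]

lemma hw_span (hq : q ≠ 0) (hrel : UqRels q a d U E F K)
    (hgen : Algebra.adjoin ℂ (gens E F K) = ⊤)
    (hsimple : ∀ (N : Submodule ℂ V), (∀ (u : U), ∀ v ∈ N, ρ u v ∈ N) → N = ⊥ ∨ N = ⊤)
    {μ : Fin n → ℤ} {v : V} (hv : v ∈ wtSp q d K ρ μ) (hv0 : v ≠ 0) (hE : ∀ i, ρ (E i) v = 0) :
    Submodule.span ℂ {x : V | ∃ l, x = ρ (word F l) v} = ⊤ := by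
  -- the submodule generated by v is everything
  let N : Submodule ℂ V := LinearMap.range ((LinearMap.applyₗ v).comp ρ.toLinearMap)
  have hN : N = ⊤ := by
    refine (hsimple N ?_).resolve_left ?_
    · rintro u _ ⟨u', rfl⟩
      exact ⟨u * u', by simp⟩
    · intro h
      have : v ∈ N := ⟨1, by simp⟩
      rw [h] at this
      exact hv0 (by simpa using this)
  rw [eq_top_iff, ← hN]
  rintro _ ⟨u, rfl⟩
  have hu : u ∈ Submodule.span ℂ {x : U | ∃ l l', ∃ k ∈ KG K, x = word F l * (k : U) * word E l'} := by
    rw [tri_span hq hrel hgen]; trivial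
  simp only [LinearMap.comp_apply, LinearMap.applyₗ_apply_apply, AlgHom.toLinearMap_apply]
  induction hu using Submodule.span_induction with
  | mem x hx =>
    obtain ⟨l, l', k, hk, rfl⟩ := hx
    rw [map_mul, map_mul, Module.End.mul_apply, Module.End.mul_apply]
    by_cases hl : l' = []
    · obtain ⟨c, -, hc⟩ := KG_scalar (ρ := ρ) (d := d) (μ := μ) hq hk
      subst hl
      rw [word_nil, map_one, Module.End.one_apply, hc v hv, map_smul]
      exact Submodule.smul_mem _ _ (Submodule.subset_span ⟨l, rfl⟩)
    · rw [word_E_kill hE hl, map_zero, map_zero]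
      exact zero_mem _
  | zero => simp
  | add x y _ _ hx hy => rw [map_add, LinearMap.add_apply]; exact Submodule.add_mem _ hx hy
  | smul c x _ hx => rw [map_smul, LinearMap.smul_apply]; exact Submodule.smul_mem _ _ hx

lemma wt_le (hq : Transcendental ℚ q) (hd_pos : ∀ i, 0 < d i) (hrel : UqRels q a d U E F K)
    {μ : Fin n → ℤ} {v : V} (hv : v ∈ wtSp q d K ρ μ)
    (hspan : Submodule.span ℂ {x : V | ∃ l, x = ρ (word F l) v} = ⊤)
    {ν : Fin n → ℤ} (hν : wtSp q d K ρ ν ≠ ⊥) : ∃ l, ν = μ - lwt a l := by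
  by_contra hcon
  obtain ⟨x, hx, hx0⟩ := Submodule.exists_mem_ne_zero_of_ne_bot hν
  refine hx0 (wtSp_sep hq hd_pos {p | ∃ l, p = μ - lwt a l} ν hcon x hx ?_)
  have : x ∈ Submodule.span ℂ {x : V | ∃ l, x = ρ (word F l) v} := by rw [hspan]; trivial
  refine Submodule.span_le.2 ?_ this
  rintro _ ⟨l, rfl⟩
  exact Submodule.mem_iSup_of_mem (μ - lwt a l)
    (Submodule.mem_iSup_of_mem ⟨l, rfl⟩ (wtSp_Fword (q_ne_zero hq) hrel hv l))

lemma wt_ind (hwtsum : (⨆ μ : Fin n → ℤ, wtSp q d K ρ μ) = ⊤) {p : V → Prop}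
    (mem : ∀ μ x, x ∈ wtSp q d K ρ μ → p x) (zero : p 0) (add : ∀ x y, p x → p y → p (x + y))
    (x : V) : p x := by
  have hx : x ∈ ⨆ μ : Fin n → ℤ, wtSp q d K ρ μ := by rw [hwtsum]; trivial
  exact Submodule.iSup_induction _ (motive := p) hx mem zero add

lemma dual_K (hwtsum : (⨆ μ : Fin n → ℤ, wtSp q d K ρ μ) = ⊤) {κ : Fin n → ℤ}
    {ξ : Module.Dual ℂ V} (hξ : inDualWt q d K ρ (-κ) ξ) (i : Fin n) (x : V) :
    ξ (ρ (K i : U) x) = q ^ (κ i * (d i : ℤ)) * ξ x := by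
  induction x using wt_ind hwtsum with
  | mem μ x hx =>
    rw [mem_wtSp.1 hx i, map_smul, smul_eq_mul]
    by_cases h : μ = κ
    · rw [h]
    · rw [hξ μ (by simpa using h) x hx]; simp
  | zero => simp
  | add x y hx hy => simp only [map_add, hx, hy]; ring

lemma dual_comp_E (hq : q ≠ 0) (hrel : UqRels q a d U E F K) {κ : Fin n → ℤ}
    {ξ : Module.Dual ℂ V} (hξ : inDualWt q d K ρ (-κ) ξ) (j : Fin n) :
    inDualWt q d K ρ (-(κ - al a j)) (ξ ∘ₗ ρ (E j)) := by
  intro ν hν x hx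
  refine hξ _ ?_ _ (wtSp_E hq hrel hx j)
  intro h
  apply hν
  rw [neg_neg] at *
  rw [← h]; abel

lemma dual_comp_F (hq : q ≠ 0) (hrel : UqRels q a d U E F K) {κ : Fin n → ℤ}
    {ξ : Module.Dual ℂ V} (hξ : inDualWt q d K ρ (-κ) ξ) (j : Fin n) :
    inDualWt q d K ρ (-(κ + al a j)) (ξ ∘ₗ ρ (F j)) := by
  intro ν hν x hx
  refine hξ _ ?_ _ (wtSp_F hq hrel hx j)
  intro h
  apply hν
  rw [neg_neg] at *
  rw [← h]; abel

lemma dual_zero (hwtsum : (⨆ μ : Fin n → ℤ, wtSp q d K ρ μ) = ⊤) {κ : Fin n → ℤ}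
    {ξ : Module.Dual ℂ V} (hξ : inDualWt q d K ρ (-κ) ξ) (h0 : wtSp q d K ρ κ = ⊥) : ξ = 0 := by
  ext x
  induction x using wt_ind hwtsum with
  | mem μ x hx =>
    by_cases h : μ = κ
    · rw [h, h0] at hx
      rw [(Submodule.mem_bot ℂ).1 hx]; simp
    · rw [hξ μ (by simpa using h) x hx]; simp
  | zero => simp
  | add x y hx hy => rw [map_add, hx, hy]; simp

lemma dual_prop (hwtsum : (⨆ μ : Fin n → ℤ, wtSp q d K ρ μ) = ⊤) {κ : Fin n → ℤ}
    (h1 : Module.finrank ℂ (wtSp q d K ρ κ) = 1)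
    {ξ ξ' : Module.Dual ℂ V} (hξ : inDualWt q d K ρ (-κ) ξ) (hξ' : inDualWt q d K ρ (-κ) ξ')
    (h0 : ξ ≠ 0) : ∃ c : ℂ, ξ' = c • ξ := by
  obtain ⟨⟨y, hy⟩, hy0, hyspan⟩ := finrank_eq_one_iff'.1 h1
  have hyspan' : ∀ x ∈ wtSp q d K ρ κ, ∃ c : ℂ, x = c • y := by
    intro x hx
    obtain ⟨c, hc⟩ := hyspan ⟨x, hx⟩
    exact ⟨c, (congrArg Subtype.val hc).symm⟩
  have hext : ∀ ζ ζ' : Module.Dual ℂ V, inDualWt q d K ρ (-κ) ζ → inDualWt q d K ρ (-κ) ζ' →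
      ζ y = ζ' y → ζ = ζ' := by
    intro ζ ζ' hζ hζ' hyy
    ext x
    induction x using wt_ind hwtsum with
    | mem μ x hx =>
      by_cases h : μ = κ
      · rw [h] at hx
        obtain ⟨c, rfl⟩ := hyspan' x hx
        rw [map_smul, map_smul, hyy]
      · rw [hζ μ (by simpa using h) x hx, hζ' μ (by simpa using h) x hx]
    | zero => simp
    | add x y hx hy => rw [map_add, map_add, hx, hy]
  have hξy : ξ y ≠ 0 := by
    intro h
    exact h0 (hext ξ 0 hξ (fun _ _ _ _ => rfl) (by simpa using h))
  refine ⟨ξ' y / ξ y, hext _ _ hξ' ?_ ?_⟩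
  · intro ν hν x hx
    rw [LinearMap.smul_apply, hξ ν hν x hx, smul_zero]
  · rw [LinearMap.smul_apply, smul_eq_mul, div_mul_cancel₀ _ hξy]

end Vmod

end HSimple

namespace HSimple

section Urel

variable {q : ℂ} {n : ℕ} {a : Fin n → Fin n → ℤ} {d : Fin n → ℕ}
  {U : Type} [Ring U] [Algebra ℂ U] {E F : Fin n → U} {K : Fin n → Uˣ}

lemma inv_comm_of {k : Uˣ} {x : U} {c : ℂ} (hc : c ≠ 0) (h : (k : U) * x = c • (x * (k : U))) :
    ((k⁻¹ : Uˣ) : U) * x = c⁻¹ • (x * ((k⁻¹ : Uˣ) : U)) := by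
  have h1 : ((k⁻¹ : Uˣ) : U) * ((k : U) * x) * ((k⁻¹ : Uˣ) : U) = x * ((k⁻¹ : Uˣ) : U) := by
    rw [← mul_assoc, Units.inv_mul, one_mul]
  rw [h] at h1
  rw [← h1, mul_smul_comm, smul_mul_assoc, smul_smul, inv_mul_cancel₀ hc, one_smul, mul_assoc,
    mul_assoc, Units.mul_inv, mul_one]

lemma U_KE (ha_diag : ∀ i, a i i = 2) (hrel : UqRels q a d U E F K) (i : Fin n) :
    (K i : U) * E i = (q ^ (d i : ℤ)) ^ (2 : ℤ) • (E i * (K i : U)) := by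
  rw [hrel.2.1, ha_diag, zpow_mul]

lemma U_KF (ha_diag : ∀ i, a i i = 2) (hrel : UqRels q a d U E F K) (i : Fin n) :
    (K i : U) * F i = (q ^ (d i : ℤ)) ^ (-2 : ℤ) • (F i * (K i : U)) := by
  rw [hrel.2.2.1, ha_diag, ← zpow_mul]; congr 2

lemma U_KiE (hq : q ≠ 0) (ha_diag : ∀ i, a i i = 2) (hrel : UqRels q a d U E F K) (i : Fin n) :
    (((K i)⁻¹ : Uˣ) : U) * E i = (q ^ (d i : ℤ)) ^ (-2 : ℤ) • (E i * (((K i)⁻¹ : Uˣ) : U)) := by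
  rw [inv_comm_of (zpow_ne_zero _ (zpow_ne_zero _ hq)) (U_KE ha_diag hrel i), ← zpow_neg]

lemma U_KiF (hq : q ≠ 0) (ha_diag : ∀ i, a i i = 2) (hrel : UqRels q a d U E F K) (i : Fin n) :
    (((K i)⁻¹ : Uˣ) : U) * F i = (q ^ (d i : ℤ)) ^ (2 : ℤ) • (F i * (((K i)⁻¹ : Uˣ) : U)) := by
  rw [inv_comm_of (zpow_ne_zero _ (zpow_ne_zero _ hq)) (U_KF ha_diag hrel i), ← zpow_neg]; norm_num

lemma U_EF (hrel : UqRels q a d U E F K) (i : Fin n) :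
    E i * F i - F i * E i = ((q ^ (d i : ℤ)) - (q ^ (d i : ℤ))⁻¹)⁻¹ •
      ((K i : U) - (((K i)⁻¹ : Uˣ) : U)) := by
  rw [hrel.2.2.2.1, if_pos rfl, zpow_neg]

lemma t_inj (hq : Transcendental ℚ q) (hd_pos : ∀ i, 0 < d i) (i : Fin n) (m m' : ℤ)
    (h : (q ^ (d i : ℤ)) ^ m = (q ^ (d i : ℤ)) ^ m') : m = m' := by
  rw [← zpow_mul, ← zpow_mul] at h
  have := q_zpow_inj hq h
  have hdi := hd_pos i
  exact mul_left_cancel₀ (by positivity) this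

variable {V : Type} [AddCommGroup V] [Module ℂ V] {ρ : U →ₐ[ℂ] Module.End ℂ V}

lemma wt_reflect (hq : Transcendental ℚ q) (ha_diag : ∀ i, a i i = 2) (hd_pos : ∀ i, 0 < d i)
    (hrel : UqRels q a d U E F K) [FiniteDimensional ℂ V] {μ : Fin n → ℤ}
    (hμ : wtSp q d K ρ μ ≠ ⊥) (i : Fin n) : wtSp q d K ρ (μ - μ i • al a i) ≠ ⊥ := by
  have hq0 := q_ne_zero hq
  obtain ⟨x, hx, hx0⟩ := Submodule.exists_mem_ne_zero_of_ne_bot hμ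
  have hk : ρ (K i : U) x = (q ^ (d i : ℤ)) ^ (μ i) • x := by
    rw [mem_wtSp.1 hx i, ← zpow_mul, mul_comm]
  have hk' : ρ (((K i)⁻¹ : Uˣ) : U) x = (q ^ (d i : ℤ)) ^ (-μ i) • x := by
    rw [wtSp_inv hq0 hx i, ← zpow_mul]; congr 2; ring
  have hef := congrArg ρ (U_EF hrel i)
  have r1 := congrArg ρ (U_KE ha_diag hrel i)
  have r2 := congrArg ρ (U_KF ha_diag hrel i)
  have r3 := congrArg ρ (U_KiE hq0 ha_diag hrel i)
  have r4 := congrArg ρ (U_KiF hq0 ha_diag hrel i)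
  simp only [map_mul, map_smul, map_sub] at hef r1 r2 r3 r4
  rcases le_total 0 (μ i) with h | h
  · obtain ⟨m, hm⟩ := Int.eq_ofNat_of_zero_le h
    rw [hm] at hk hk'
    obtain ⟨j, hj⟩ := sl2_reflect (zpow_ne_zero _ hq0) (t_inj hq hd_pos i) hef r2 r4 r1 r3 hk hk' hx0
    rw [Submodule.ne_bot_iff]
    refine ⟨_, ?_, hj⟩
    have := wtSp_Fpow hq0 hrel (wtSp_Epow hq0 hrel hx i j) i (m + j)
    convert this using 1
    rw [hm]; push_cast; rw [add_smul]; abel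
  · obtain ⟨m, hm⟩ := Int.eq_ofNat_of_zero_le (neg_nonneg.2 h)
    have hm' : μ i = -m := by omega
    rw [hm', neg_neg] at hk'
    rw [hm'] at hk
    obtain ⟨j, hj⟩ := sl2_reflect (e := ρ (F i)) (f := ρ (E i)) (zpow_ne_zero _ hq0) (t_inj hq hd_pos i)
      (by rw [← neg_sub, hef, ← smul_neg, neg_sub]) r3 r1 r4 r2 hk' hk hx0
    rw [Submodule.ne_bot_iff]
    refine ⟨_, ?_, hj⟩
    have := wtSp_Epow hq0 hrel (wtSp_Fpow hq0 hrel hx i j) i (m + j)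
    convert this using 1
    rw [hm']; push_cast; rw [add_smul, neg_smul]; abel

end Urel

section Weyl

variable {q : ℂ} {n : ℕ} {a : Fin n → Fin n → ℤ} {d : Fin n → ℕ}
  {U : Type} [Ring U] [Algebra ℂ U] {E F : Fin n → U} {K : Fin n → Uˣ}
  {V : Type} [AddCommGroup V] [Module ℂ V] {ρ : U →ₐ[ℂ] Module.End ℂ V}
  {W : Type} [Group W] {r : W → ((Fin n → ℤ) ≃+ (Fin n → ℤ))} {s : Fin n → W}

lemma s_sq (ha_diag : ∀ i, a i i = 2) (hrm : ∀ w w' μ, r (w * w') μ = r w (r w' μ))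
    (hs : ∀ i (μ : Fin n → ℤ), r (s i) μ = μ - μ i • al a i) (i) (μ) : r (s i) (r (s i) μ) = μ := by
  rw [hs, hs]
  funext k
  simp [al, ha_diag]; ring

lemma r_inv (hr1 : ∀ μ, r 1 μ = μ) (hrm : ∀ w w' μ, r (w * w') μ = r w (r w' μ)) (w μ) :
    r w⁻¹ (r w μ) = μ := by rw [← hrm, inv_mul_cancel, hr1]

lemma r_inv' (hr1 : ∀ μ, r 1 μ = μ) (hrm : ∀ w w' μ, r (w * w') μ = r w (r w' μ)) (w μ) :
    r w (r w⁻¹ μ) = μ := by rw [← hrm, mul_inv_cancel, hr1]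

lemma wt_W (hq : Transcendental ℚ q) (ha_diag : ∀ i, a i i = 2) (hd_pos : ∀ i, 0 < d i)
    (hrel : UqRels q a d U E F K) [FiniteDimensional ℂ V]
    (hr1 : ∀ μ, r 1 μ = μ) (hrm : ∀ w w' μ, r (w * w') μ = r w (r w' μ))
    (hsgen : Subgroup.closure (Set.range s) = ⊤)
    (hs : ∀ i (μ : Fin n → ℤ), r (s i) μ = μ - μ i • al a i) (w : W) :
    ∀ μ : Fin n → ℤ, wtSp q d K ρ μ ≠ ⊥ → wtSp q d K ρ (r w μ) ≠ ⊥ := by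
  have hw : w ∈ Subgroup.closure (Set.range s) := by rw [hsgen]; trivial
  have hsi : ∀ i μ, wtSp q d K ρ μ ≠ ⊥ → wtSp q d K ρ (r (s i) μ) ≠ ⊥ := by
    intro i μ h
    rw [hs]; exact wt_reflect hq ha_diag hd_pos hrel h i
  induction hw using Subgroup.closure_induction'' with
  | mem x hx => obtain ⟨i, rfl⟩ := hx; exact hsi i
  | inv_mem x hx =>
    obtain ⟨i, rfl⟩ := hx
    intro μ h
    have : r (s i)⁻¹ μ = r (s i) μ := by
      conv_lhs => rw [← s_sq (a := a) ha_diag hrm hs i μ]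
      rw [r_inv hr1 hrm]
    rw [this]; exact hsi i μ h
  | one => intro μ h; rwa [hr1]
  | mul x y _ _ hx hy => intro μ h; rw [hrm]; exact hx _ (hy _ h)

/-- weights of a highest weight module: predicate package. -/
lemma root_pos (ha_diag : ∀ i, a i i = 2) (ht : (Fin n → ℤ) →+ ℤ) (hht : ∀ k, 0 < ht (al a k))
    (hr1 : ∀ μ, r 1 μ = μ) (hrm : ∀ w w' μ, r (w * w') μ = r w (r w' μ))
    (hs : ∀ i (μ : Fin n → ℤ), r (s i) μ = μ - μ i • al a i)
    {ϖ : Fin n → ℤ} (hwt : ∀ w, ∃ l, r w ϖ = ϖ - lwt a l) (w : W) (i : Fin n) :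
    (0 < r w ϖ i → 0 < ht (r w⁻¹ (al a i))) ∧ (r w ϖ i < 0 → ht (r w⁻¹ (al a i)) < 0) := by
  obtain ⟨l, hl⟩ := hwt (w⁻¹ * (s i * w))
  rw [hrm, hrm, hs, map_sub, r_inv hr1 hrm, map_zsmul] at hl
  have hl' : (r w ϖ i) • r w⁻¹ (al a i) = lwt a l := by
    have := sub_right_injective hl
    exact this
  have h1 := ht_lwt ht hht l
  rw [← hl', map_zsmul, smul_eq_mul] at h1
  have hne : r w ϖ i ≠ 0 → ht (r w⁻¹ (al a i)) ≠ 0 := by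
    intro h0 h2
    have h3 := h1.2 (by rw [h2, mul_zero])
    rw [smul_eq_zero] at h3
    have h4 := h3.resolve_left h0
    rw [map_eq_zero_iff _ (r w⁻¹).injective] at h4
    have := congrFun h4 i
    simp [al, ha_diag] at this
  constructor
  · intro h
    have := hne h.ne'
    have h5 := nonneg_of_mul_nonneg_right h1.1 h
    omega
  · intro h
    have := hne h.ne
    by_contra h6
    have h7 : 0 < ht (r w⁻¹ (al a i)) := by omega
    nlinarith [h1.1]

lemma ext_plus (hq : Transcendental ℚ q) (ha_diag : ∀ i, a i i = 2) (hd_pos : ∀ i, 0 < d i)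
    (hrel : UqRels q a d U E F K) [FiniteDimensional ℂ V]
    (ht : (Fin n → ℤ) →+ ℤ) (hht : ∀ k, 0 < ht (al a k))
    (hr1 : ∀ μ, r 1 μ = μ) (hrm : ∀ w w' μ, r (w * w') μ = r w (r w' μ))
    (hsgen : Subgroup.closure (Set.range s) = ⊤)
    (hs : ∀ i (μ : Fin n → ℤ), r (s i) μ = μ - μ i • al a i)
    {ϖ : Fin n → ℤ} (hle : ∀ ν, wtSp q d K ρ ν ≠ ⊥ → ∃ l, ν = ϖ - lwt a l) (w : W) (i : Fin n) :
    (0 < ht (r w⁻¹ (al a i)) → wtSp q d K ρ (r w ϖ + al a i) = ⊥) ∧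
    (ht (r w⁻¹ (al a i)) < 0 → wtSp q d K ρ (r w ϖ - al a i) = ⊥) := by
  constructor
  · intro h
    by_contra hne
    obtain ⟨l, hl⟩ := hle _ (wt_W hq ha_diag hd_pos hrel hr1 hrm hsgen hs w⁻¹ _ hne)
    rw [map_add, r_inv hr1 hrm, sub_eq_add_neg] at hl
    have h1 := (ht_lwt ht hht l).1
    have h2 := add_left_cancel hl
    rw [h2, map_neg] at h
    omega
  · intro h
    by_contra hne
    obtain ⟨l, hl⟩ := hle _ (wt_W hq ha_diag hd_pos hrel hr1 hrm hsgen hs w⁻¹ _ hne)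
    rw [map_sub, r_inv hr1 hrm] at hl
    have h1 := (ht_lwt ht hht l).1
    have h2 : r w⁻¹ (al a i) = lwt a l := sub_right_injective hl
    rw [h2] at h
    omega

end Weyl

section Hi

variable {q : ℂ} {n : ℕ} {a : Fin n → Fin n → ℤ} {d : Fin n → ℕ}
  {U : Type} [Ring U] [Algebra ℂ U] {E F : Fin n → U} {K : Fin n → Uˣ}
  {V : Type} [AddCommGroup V] [Module ℂ V] {ρ : U →ₐ[ℂ] Module.End ℂ V}

lemma KG_dual (hq : q ≠ 0) (hwtsum : (⨆ μ : Fin n → ℤ, wtSp q d K ρ μ) = ⊤) {κ : Fin n → ℤ}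
    {ξ : Module.Dual ℂ V} (hξ : inDualWt q d K ρ (-κ) ξ) {k : Uˣ} (hk : k ∈ KG K) :
    ∃ c : ℂ, c ≠ 0 ∧ ∀ x, ξ (ρ (k : U) x) = c * ξ x := by
  induction hk using Subgroup.closure_induction with
  | mem k hk =>
    obtain ⟨i, rfl⟩ := hk
    exact ⟨_, zpow_ne_zero _ hq, fun x => dual_K hwtsum hξ i x⟩
  | one => exact ⟨1, one_ne_zero, by simp⟩
  | mul k k' _ _ h h' =>
    obtain ⟨c, hc, h⟩ := h
    obtain ⟨c', hc', h'⟩ := h'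
    refine ⟨c * c', mul_ne_zero hc hc', fun x => ?_⟩
    rw [Units.val_mul, map_mul, Module.End.mul_apply, h, h', mul_assoc]
  | inv k _ h =>
    obtain ⟨c, hc, h⟩ := h
    refine ⟨c⁻¹, inv_ne_zero hc, fun x => ?_⟩
    have := h (ρ ((k⁻¹ : Uˣ) : U) x)
    rw [← Module.End.mul_apply, ← map_mul, Units.mul_inv, map_one, Module.End.one_apply] at this
    rw [this, ← mul_assoc, inv_mul_cancel₀ hc, one_mul]

lemma hi_dual_span (hq : q ≠ 0) (hrel : UqRels q a d U E F K)
    (hgen : Algebra.adjoin ℂ (gens E F K) = ⊤) [FiniteDimensional ℂ V]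
    (hsimple : ∀ (N : Submodule ℂ V), (∀ (u : U), ∀ v ∈ N, ρ u v ∈ N) → N = ⊥ ∨ N = ⊤)
    (hwtsum : (⨆ μ : Fin n → ℤ, wtSp q d K ρ μ) = ⊤) {κ : Fin n → ℤ}
    {η : Module.Dual ℂ V} (hη : inDualWt q d K ρ (-κ) η) (hη0 : η ≠ 0)
    (hF : ∀ i, η ∘ₗ ρ (F i) = 0) :
    Submodule.span ℂ {ζ : Module.Dual ℂ V | ∃ l, ζ = η ∘ₗ ρ (word E l)} = ⊤ := by
  set S := Submodule.span ℂ {ζ : Module.Dual ℂ V | ∃ l, ζ = η ∘ₗ ρ (word E l)} with hS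
  have h0 : S.dualCoannihilator = ⊥ := by
    rw [eq_bot_iff]
    intro x hx
    rw [Submodule.mem_dualCoannihilator] at hx
    let N : Submodule ℂ V :=
      { carrier := {y | ∀ u : U, η (ρ u y) = 0}
        zero_mem' := by simp
        add_mem' := by
          intro y z hy hz u
          rw [map_add, map_add, hy u, hz u, add_zero]
        smul_mem' := by
          intro c y hy u
          rw [map_smul, map_smul, hy u, smul_zero] }
    have hN : N = ⊥ := by
      refine (hsimple N ?_).resolve_right ?_
      · intro u v hv u'
        rw [← Module.End.mul_apply, ← map_mul]
        exact hv _
      · intro h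
        apply hη0
        ext y
        have : y ∈ N := by rw [h]; trivial
        simpa using this 1
    rw [← hN]
    intro u
    have hz : η ∘ₗ (LinearMap.applyₗ x).comp ρ.toLinearMap = 0 := by
      refine tri_ext hq hrel hgen _ _ ?_
      intro l l' k hk
      simp only [LinearMap.comp_apply, LinearMap.applyₗ_apply_apply, AlgHom.toLinearMap_apply,
        map_mul, Module.End.mul_apply, LinearMap.zero_apply]
      cases l with
      | nil =>
        obtain ⟨c, -, hc⟩ := KG_dual hq hwtsum hη hk
        rw [word_nil, map_one, Module.End.one_apply, hc]
        have := hx _ (Submodule.subset_span ⟨l', rfl⟩)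
        rw [LinearMap.comp_apply] at this
        rw [this, mul_zero]
      | cons i l =>
        rw [word_cons, map_mul, Module.End.mul_apply]
        exact LinearMap.congr_fun (hF i) _
    exact LinearMap.congr_fun hz u
  rw [← Subspace.dualCoannihilator_dualAnnihilator_eq (W := S), h0, Submodule.dualAnnihilator_bot]

end Hi

end HSimple

namespace HSimple

open scoped TensorProduct

section Conv

variable {U : Type} [Ring U] [Algebra ℂ U]

/-- The product of two functionals as a functional on the tensor square. -/
noncomputable def MM (f g : U →ₗ[ℂ] ℂ) : U ⊗[ℂ] U →ₗ[ℂ] ℂ :=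
  (TensorProduct.lid ℂ ℂ).toLinearMap ∘ₗ (TensorProduct.map f g)

@[simp] lemma MM_tmul (f g : U →ₗ[ℂ] ℂ) (x y : U) : MM f g (x ⊗ₜ y) = f x * g y := by
  simp [MM]

lemma MM_mul_right {f g f' g' : U →ₗ[ℂ] ℂ} {x y : U} (hf : ∀ u, f' u = f (u * x))
    (hg : ∀ u, g' u = g (u * y)) (w : U ⊗[ℂ] U) : MM f' g' w = MM f g (w * (x ⊗ₜ y)) := by
  induction w using TensorProduct.induction_on with
  | zero => simp
  | tmul u v => rw [MM_tmul, Algebra.TensorProduct.tmul_mul_tmul, MM_tmul, hf, hg]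
  | add w w' h h' => rw [map_add, h, h', add_mul, map_add]

lemma MM_mul_left {f g f' g' : U →ₗ[ℂ] ℂ} {x y : U} (hf : ∀ u, f' u = f (x * u))
    (hg : ∀ u, g' u = g (y * u)) (w : U ⊗[ℂ] U) : MM f' g' w = MM f g ((x ⊗ₜ y) * w) := by
  induction w using TensorProduct.induction_on with
  | zero => simp
  | tmul u v => rw [MM_tmul, Algebra.TensorProduct.tmul_mul_tmul, MM_tmul, hf, hg]
  | add w w' h h' => rw [map_add, h, h', mul_add, map_add]

variable {n : ℕ} (Δ : U →ₐ[ℂ] U ⊗[ℂ] U) (ε : U →ₐ[ℂ] ℂ)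
    {V : (Fin n → ℕ) → Type} [∀ c, AddCommGroup (V c)] [∀ c, Module ℂ (V c)]
    (ρ : ∀ c, U →ₐ[ℂ] Module.End ℂ (V c))
    {A : Type} [Ring A] [Algebra ℂ A]
    (ι : A →ₗ[ℂ] (U →ₗ[ℂ] ℂ)) (hιinj : Function.Injective ι)
    (hι1 : ι 1 = ε.toLinearMap)
    (hιmul : ∀ x y : A, ι (x * y) = MM (ι x) (ι y) ∘ₗ Δ.toLinearMap)
    (cf : ∀ c : Fin n → ℕ, Module.Dual ℂ (V c) → V c → A)
    (hcf : ∀ c ξ v u, ι (cf c ξ v) u = ξ (ρ c u v))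
    (hAgen : Algebra.adjoin ℂ {x : A | ∃ c ξ v, x = cf c ξ v} = ⊤)

include hι1 hιmul hcf hAgen hιinj

lemma exists_lA : ∃ lA : U →ₗ[ℂ] Module.End ℂ A, ∀ x b u, ι (lA x b) u = ι b (u * x) := by
  have h : ∀ b : A, ∀ x : U, ∃ b' : A, ∀ u, ι b' u = ι b (u * x) := by
    intro b
    have hb : b ∈ Algebra.adjoin ℂ {x : A | ∃ c ξ v, x = cf c ξ v} := by rw [hAgen]; trivial
    induction hb using Algebra.adjoin_induction with
    | mem b hb =>
      obtain ⟨c, ξ, v, rfl⟩ := hb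
      intro x
      exact ⟨cf c ξ (ρ c x v), fun u => by rw [hcf, hcf, map_mul, Module.End.mul_apply]⟩
    | algebraMap r =>
      intro x
      refine ⟨(r * ε x) • 1, fun u => ?_⟩
      rw [Algebra.algebraMap_eq_smul_one, map_smul, map_smul, hι1]
      simp; ring
    | add b b' _ _ h h' =>
      intro x
      obtain ⟨y, hy⟩ := h x
      obtain ⟨y', hy'⟩ := h' x
      exact ⟨y + y', fun u => by simp [hy, hy']⟩
    | mul b b' _ _ h h' =>
      intro x
      have key : ∀ z : U ⊗[ℂ] U, ∃ y : A, ∀ u, ι y u = MM (ι b) (ι b') (Δ u * z) := by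
        intro z
        induction z using TensorProduct.induction_on with
        | zero => exact ⟨0, by simp⟩
        | tmul x1 x2 =>
          obtain ⟨y, hy⟩ := h x1
          obtain ⟨y', hy'⟩ := h' x2
          refine ⟨y * y', fun u => ?_⟩
          rw [hιmul, ← MM_mul_right hy hy']; rfl
        | add z z' h h' =>
          obtain ⟨y, hy⟩ := h
          obtain ⟨y', hy'⟩ := h'
          exact ⟨y + y', fun u => by simp [hy, hy', mul_add]⟩
      obtain ⟨y, hy⟩ := key (Δ x)
      refine ⟨y, fun u => ?_⟩
      rw [hy, hιmul, LinearMap.comp_apply, AlgHom.toLinearMap_apply, map_mul Δ]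
  choose f hf using h
  refine ⟨LinearMap.mk₂ ℂ (fun x b => f b x) ?_ ?_ ?_ ?_, fun x b u => hf b x u⟩
  all_goals
    intros
    apply hιinj
    ext u
    simp [hf, mul_add]

lemma exists_rA : ∃ rA : U →ₗ[ℂ] Module.End ℂ A, ∀ x b u, ι (rA x b) u = ι b (x * u) := by
  have h : ∀ b : A, ∀ x : U, ∃ b' : A, ∀ u, ι b' u = ι b (x * u) := by
    intro b
    have hb : b ∈ Algebra.adjoin ℂ {x : A | ∃ c ξ v, x = cf c ξ v} := by rw [hAgen]; trivial
    induction hb using Algebra.adjoin_induction with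
    | mem b hb =>
      obtain ⟨c, ξ, v, rfl⟩ := hb
      intro x
      exact ⟨cf c (ξ ∘ₗ ρ c x) v, fun u => by
        rw [hcf, hcf, map_mul, Module.End.mul_apply, LinearMap.comp_apply]⟩
    | algebraMap r =>
      intro x
      refine ⟨(r * ε x) • 1, fun u => ?_⟩
      rw [Algebra.algebraMap_eq_smul_one, map_smul, map_smul, hι1]
      simp; ring
    | add b b' _ _ h h' =>
      intro x
      obtain ⟨y, hy⟩ := h x
      obtain ⟨y', hy'⟩ := h' x
      exact ⟨y + y', fun u => by simp [hy, hy']⟩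
    | mul b b' _ _ h h' =>
      intro x
      have key : ∀ z : U ⊗[ℂ] U, ∃ y : A, ∀ u, ι y u = MM (ι b) (ι b') (z * Δ u) := by
        intro z
        induction z using TensorProduct.induction_on with
        | zero => exact ⟨0, by simp⟩
        | tmul x1 x2 =>
          obtain ⟨y, hy⟩ := h x1
          obtain ⟨y', hy'⟩ := h' x2
          refine ⟨y * y', fun u => ?_⟩
          rw [hιmul, ← MM_mul_left hy hy']; rfl
        | add z z' h h' =>
          obtain ⟨y, hy⟩ := h
          obtain ⟨y', hy'⟩ := h'
          exact ⟨y + y', fun u => by simp [hy, hy', add_mul]⟩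
      obtain ⟨y, hy⟩ := key (Δ x)
      refine ⟨y, fun u => ?_⟩
      rw [hy, hιmul, LinearMap.comp_apply, AlgHom.toLinearMap_apply, map_mul Δ]
  choose f hf using h
  refine ⟨LinearMap.mk₂ ℂ (fun x b => f b x) ?_ ?_ ?_ ?_, fun x b u => hf b x u⟩
  all_goals
    intros
    apply hιinj
    ext u
    simp [hf, add_mul]

end Conv

end HSimple

namespace HSimple

open scoped TensorProduct

/-- The collected data of the quantised coordinate ring, with its bimodule structure. -/
structure SU (q : ℂ) {n : ℕ} (a : Fin n → Fin n → ℤ) (d : Fin n → ℕ)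
    {U : Type} [Ring U] [Algebra ℂ U] (E F : Fin n → U) (K : Fin n → Uˣ)
    (Δ : U →ₐ[ℂ] U ⊗[ℂ] U) (ε : U →ₐ[ℂ] ℂ)
    {V : (Fin n → ℕ) → Type} [∀ c, AddCommGroup (V c)] [∀ c, Module ℂ (V c)]
    (ρ : ∀ c, U →ₐ[ℂ] Module.End ℂ (V c))
    {A : Type} [Ring A] [Algebra ℂ A]
    (ι : A →ₗ[ℂ] (U →ₗ[ℂ] ℂ))
    (cf : ∀ c : Fin n → ℕ, Module.Dual ℂ (V c) → V c → A)
    (lA rA : U →ₗ[ℂ] Module.End ℂ A)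
    (act : (Fin n → ℂˣ) × (Fin n → ℂˣ) →* (A ≃ₐ[ℂ] A)) : Prop where
  hq : Transcendental ℚ q
  ha_diag : ∀ i, a i i = 2
  hd_pos : ∀ i, 0 < d i
  hrel : UqRels q a d U E F K
  hgen : Algebra.adjoin ℂ (gens E F K) = ⊤
  hΔE : ∀ i, Δ (E i) = E i ⊗ₜ 1 + (K i : U) ⊗ₜ E i
  hΔF : ∀ i, Δ (F i) = F i ⊗ₜ (((K i)⁻¹ : Uˣ) : U) + 1 ⊗ₜ F i
  hΔK : ∀ i, Δ (K i : U) = (K i : U) ⊗ₜ (K i : U)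
  hεE : ∀ i, ε (E i) = 0
  hεF : ∀ i, ε (F i) = 0
  hεK : ∀ i, ε (K i : U) = 1
  hfd : ∀ c, FiniteDimensional ℂ (V c)
  hsimple : ∀ c (N : Submodule ℂ (V c)), (∀ (u : U), ∀ v ∈ N, ρ c u v ∈ N) → N = ⊥ ∨ N = ⊤
  hwtsum : ∀ c, (⨆ μ : Fin n → ℤ, wtSp q d K (ρ c) μ) = ⊤
  hιinj : Function.Injective ι
  hι1 : ι 1 = ε.toLinearMap
  hιmul : ∀ x y : A, ι (x * y) = MM (ι x) (ι y) ∘ₗ Δ.toLinearMap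
  hcf : ∀ c ξ v u, ι (cf c ξ v) u = ξ (ρ c u v)
  hAgen : Algebra.adjoin ℂ {x : A | ∃ c ξ v, x = cf c ξ v} = ⊤
  hlA : ∀ x b u, ι (lA x b) u = ι b (u * x)
  hrA : ∀ x b u, ι (rA x b) u = ι b (x * u)
  hact : ∀ g c (ξ : Module.Dual ℂ (V c)) v (μ η : Fin n → ℤ),
      inDualWt q d K (ρ c) μ ξ → v ∈ wtSp q d K (ρ c) η →
      act g (cf c ξ v) =
        ((((∏ i, g.1 i ^ μ i) * (∏ i, g.2 i ^ η i) : ℂˣ) : ℂ)) • cf c ξ v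

variable {q : ℂ} {n : ℕ} {a : Fin n → Fin n → ℤ} {d : Fin n → ℕ}
    {U : Type} [Ring U] [Algebra ℂ U] {E F : Fin n → U} {K : Fin n → Uˣ}
    {Δ : U →ₐ[ℂ] U ⊗[ℂ] U} {ε : U →ₐ[ℂ] ℂ}
    {V : (Fin n → ℕ) → Type} [∀ c, AddCommGroup (V c)] [∀ c, Module ℂ (V c)]
    {ρ : ∀ c, U →ₐ[ℂ] Module.End ℂ (V c)}
    {A : Type} [Ring A] [Algebra ℂ A]
    {ι : A →ₗ[ℂ] (U →ₗ[ℂ] ℂ)}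
    {cf : ∀ c : Fin n → ℕ, Module.Dual ℂ (V c) → V c → A}
    {lA rA : U →ₗ[ℂ] Module.End ℂ A}
    {act : (Fin n → ℂˣ) × (Fin n → ℂˣ) →* (A ≃ₐ[ℂ] A)}

namespace SU

lemma hq0 (S : SU q a d E F K Δ ε ρ ι cf lA rA act) : q ≠ 0 := q_ne_zero S.hq

lemma ext (S : SU q a d E F K Δ ε ρ ι cf lA rA act) {b b' : A} (h : ∀ u, ι b u = ι b' u) :
    b = b' := S.hιinj (LinearMap.ext h)

lemma lA_mul (S : SU q a d E F K Δ ε ρ ι cf lA rA act) (x y : U) : lA (x * y) = lA x * lA y := by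
  ext b; apply S.ext; intro u
  rw [Module.End.mul_apply, S.hlA, S.hlA, S.hlA, mul_assoc]

lemma rA_mul (S : SU q a d E F K Δ ε ρ ι cf lA rA act) (x y : U) : rA (x * y) = rA y * rA x := by
  ext b; apply S.ext; intro u
  rw [Module.End.mul_apply, S.hrA, S.hrA, S.hrA, mul_assoc]

lemma lA_one (S : SU q a d E F K Δ ε ρ ι cf lA rA act) : lA 1 = 1 := by
  ext b; apply S.ext; intro u
  rw [S.hlA, mul_one, Module.End.one_apply]

lemma rA_one (S : SU q a d E F K Δ ε ρ ι cf lA rA act) : rA 1 = 1 := by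
  ext b; apply S.ext; intro u
  rw [S.hrA, one_mul, Module.End.one_apply]

lemma lr_comm (S : SU q a d E F K Δ ε ρ ι cf lA rA act) (x y : U) (b : A) :
    lA x (rA y b) = rA y (lA x b) := by
  apply S.ext; intro u
  rw [S.hlA, S.hrA, S.hrA, S.hlA, mul_assoc]

lemma lA_cf (S : SU q a d E F K Δ ε ρ ι cf lA rA act) (x : U) (c ξ v) :
    lA x (cf c ξ v) = cf c ξ (ρ c x v) := by
  apply S.ext; intro u
  rw [S.hlA, S.hcf, S.hcf, map_mul, Module.End.mul_apply]

lemma rA_cf (S : SU q a d E F K Δ ε ρ ι cf lA rA act) (x : U) (c ξ v) :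
    rA x (cf c ξ v) = cf c (ξ ∘ₗ ρ c x) v := by
  apply S.ext; intro u
  rw [S.hrA, S.hcf, S.hcf, map_mul, Module.End.mul_apply, LinearMap.comp_apply]

lemma exists_cfL (S : SU q a d E F K Δ ε ρ ι cf lA rA act) (c) :
    ∃ f : Module.Dual ℂ (V c) →ₗ[ℂ] V c →ₗ[ℂ] A, ∀ ξ v, f ξ v = cf c ξ v := by
  refine ⟨LinearMap.mk₂ ℂ (cf c) ?_ ?_ ?_ ?_, fun _ _ => rfl⟩
  all_goals
    intros
    apply S.ext
    intro u
    simp [S.hcf]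

lemma lA_tensor (S : SU q a d E F K Δ ε ρ ι cf lA rA act) {x x1 x2 y1 y2 : U}
    (h : Δ x = x1 ⊗ₜ x2 + y1 ⊗ₜ y2) (b b' : A) :
    lA x (b * b') = lA x1 b * lA x2 b' + lA y1 b * lA y2 b' := by
  apply S.ext; intro u
  rw [S.hlA, S.hιmul, map_add, S.hιmul, S.hιmul]
  simp only [LinearMap.comp_apply, LinearMap.add_apply, AlgHom.toLinearMap_apply, map_mul Δ]
  rw [MM_mul_right (S.hlA x1 b) (S.hlA x2 b'), MM_mul_right (S.hlA y1 b) (S.hlA y2 b'), h,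
    mul_add, map_add]

lemma rA_tensor (S : SU q a d E F K Δ ε ρ ι cf lA rA act) {x x1 x2 y1 y2 : U}
    (h : Δ x = x1 ⊗ₜ x2 + y1 ⊗ₜ y2) (b b' : A) :
    rA x (b * b') = rA x1 b * rA x2 b' + rA y1 b * rA y2 b' := by
  apply S.ext; intro u
  rw [S.hrA, S.hιmul, map_add, S.hιmul, S.hιmul]
  simp only [LinearMap.comp_apply, LinearMap.add_apply, AlgHom.toLinearMap_apply, map_mul Δ]
  rw [MM_mul_left (S.hrA x1 b) (S.hrA x2 b'), MM_mul_left (S.hrA y1 b) (S.hrA y2 b'), h,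
    add_mul, map_add]

lemma lE_mul (S : SU q a d E F K Δ ε ρ ι cf lA rA act) (i) (b b' : A) :
    lA (E i) (b * b') = lA (E i) b * b' + lA (K i : U) b * lA (E i) b' := by
  rw [S.lA_tensor (S.hΔE i), S.lA_one]; rfl

lemma rE_mul (S : SU q a d E F K Δ ε ρ ι cf lA rA act) (i) (b b' : A) :
    rA (E i) (b * b') = rA (E i) b * b' + rA (K i : U) b * rA (E i) b' := by
  rw [S.rA_tensor (S.hΔE i), S.rA_one]; rfl

lemma lF_mul (S : SU q a d E F K Δ ε ρ ι cf lA rA act) (i) (b b' : A) :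
    lA (F i) (b * b') = lA (F i) b * lA (((K i)⁻¹ : Uˣ) : U) b' + b * lA (F i) b' := by
  rw [S.lA_tensor (S.hΔF i), S.lA_one]; rfl

lemma rF_mul (S : SU q a d E F K Δ ε ρ ι cf lA rA act) (i) (b b' : A) :
    rA (F i) (b * b') = rA (F i) b * rA (((K i)⁻¹ : Uˣ) : U) b' + b * rA (F i) b' := by
  rw [S.rA_tensor (S.hΔF i), S.rA_one]; rfl

lemma Δ_KG (S : SU q a d E F K Δ ε ρ ι cf lA rA act) {k : Uˣ} (hk : k ∈ KG K) :
    Δ (k : U) = (k : U) ⊗ₜ (k : U) ∧ ε (k : U) = 1 := by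
  induction hk using Subgroup.closure_induction with
  | mem k hk => obtain ⟨i, rfl⟩ := hk; exact ⟨S.hΔK i, S.hεK i⟩
  | one => simp [Algebra.TensorProduct.one_def]
  | mul k k' _ _ h h' =>
    rw [Units.val_mul, map_mul, map_mul, h.1, h'.1, h.2, h'.2, Algebra.TensorProduct.tmul_mul_tmul]
    simp
  | inv k _ h =>
    have e1 : Δ ((k⁻¹ : Uˣ) : U) * ((k : U) ⊗ₜ (k : U)) = 1 := by
      rw [← h.1, ← map_mul, Units.inv_mul, map_one]
    have e2 : ((k : U) ⊗ₜ[ℂ] (k : U)) * (((k⁻¹ : Uˣ) : U) ⊗ₜ[ℂ] ((k⁻¹ : Uˣ) : U)) = 1 := by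
      rw [Algebra.TensorProduct.tmul_mul_tmul, Units.mul_inv]; rfl
    refine ⟨left_inv_eq_right_inv e1 e2, ?_⟩
    have e3 : ε ((k⁻¹ : Uˣ) : U) * ε (k : U) = 1 := by rw [← map_mul, Units.inv_mul, map_one]
    rwa [h.2, mul_one] at e3

lemma lK_mul (S : SU q a d E F K Δ ε ρ ι cf lA rA act) {k : Uˣ} (hk : k ∈ KG K) (b b' : A) :
    lA (k : U) (b * b') = lA (k : U) b * lA (k : U) b' := by
  have := S.lA_tensor (x := (k : U)) (x1 := k) (x2 := k) (y1 := 0) (y2 := 0)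
    (by rw [(S.Δ_KG hk).1]; simp) b b'
  simpa using this

lemma rK_mul (S : SU q a d E F K Δ ε ρ ι cf lA rA act) {k : Uˣ} (hk : k ∈ KG K) (b b' : A) :
    rA (k : U) (b * b') = rA (k : U) b * rA (k : U) b' := by
  have := S.rA_tensor (x := (k : U)) (x1 := k) (x2 := k) (y1 := 0) (y2 := 0)
    (by rw [(S.Δ_KG hk).1]; simp) b b'
  simpa using this

lemma ev_KG (S : SU q a d E F K Δ ε ρ ι cf lA rA act) {k : Uˣ} (hk : k ∈ KG K) (b b' : A) :
    ι (b * b') (k : U) = ι b (k : U) * ι b' (k : U) := by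
  rw [S.hιmul, LinearMap.comp_apply, AlgHom.toLinearMap_apply, (S.Δ_KG hk).1, MM_tmul]

lemma lA_unit (S : SU q a d E F K Δ ε ρ ι cf lA rA act) (x : U) : lA x 1 = ε x • 1 := by
  apply S.ext; intro u
  rw [S.hlA, map_smul, S.hι1]; simp [mul_comm]

lemma rA_unit (S : SU q a d E F K Δ ε ρ ι cf lA rA act) (x : U) : rA x 1 = ε x • 1 := by
  apply S.ext; intro u
  rw [S.hrA, map_smul, S.hι1]; simp

lemma fin_stable (S : SU q a d E F K Δ ε ρ ι cf lA rA act) (b : A) :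
    ∃ Y : Submodule ℂ A, Y.FG ∧ b ∈ Y ∧ (∀ x, ∀ y ∈ Y, lA x y ∈ Y) ∧ ∀ x, ∀ y ∈ Y, rA x y ∈ Y := by
  have hb : b ∈ Algebra.adjoin ℂ {x : A | ∃ c ξ v, x = cf c ξ v} := by rw [S.hAgen]; trivial
  induction hb using Algebra.adjoin_induction with
  | mem b hb =>
    obtain ⟨c, ξ, v, rfl⟩ := hb
    obtain ⟨f, hf⟩ := S.exists_cfL c
    have := S.hfd c
    have i1 : Module.Finite ℂ (V c) := this
    have i2 : Module.Finite ℂ (Module.Dual ℂ (V c)) := Subspace.instModuleDualFiniteDimensional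
    have f1 : (⊤ : Submodule ℂ (V c)).FG := i1.fg_top
    have f2 : (⊤ : Submodule ℂ (Module.Dual ℂ (V c))).FG := i2.fg_top
    refine ⟨Submodule.map₂ f ⊤ ⊤, Submodule.FG.map₂ f f2 f1, ?_, ?_, ?_⟩
    · rw [← hf]; exact Submodule.apply_mem_map₂ _ Submodule.mem_top Submodule.mem_top
    · intro x y hy
      have hle : Submodule.map₂ f ⊤ ⊤ ≤ (Submodule.map₂ f ⊤ ⊤).comap (lA x) := by
        rw [Submodule.map₂_le]
        intro ξ _ v _
        rw [Submodule.mem_comap, hf, S.lA_cf, ← hf]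
        exact Submodule.apply_mem_map₂ _ Submodule.mem_top Submodule.mem_top
      exact hle hy
    · intro x y hy
      have hle : Submodule.map₂ f ⊤ ⊤ ≤ (Submodule.map₂ f ⊤ ⊤).comap (rA x) := by
        rw [Submodule.map₂_le]
        intro ξ _ v _
        rw [Submodule.mem_comap, hf, S.rA_cf, ← hf]
        exact Submodule.apply_mem_map₂ _ Submodule.mem_top Submodule.mem_top
      exact hle hy
  | algebraMap r =>
    refine ⟨Submodule.span ℂ {1}, Submodule.fg_span_singleton _, ?_, ?_, ?_⟩
    · rw [Algebra.algebraMap_eq_smul_one]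
      exact Submodule.smul_mem _ _ (Submodule.mem_span_singleton_self _)
    · intro x y hy
      obtain ⟨c, rfl⟩ := Submodule.mem_span_singleton.1 hy
      rw [map_smul, S.lA_unit]
      exact Submodule.smul_mem _ _ (Submodule.smul_mem _ _ (Submodule.mem_span_singleton_self _))
    · intro x y hy
      obtain ⟨c, rfl⟩ := Submodule.mem_span_singleton.1 hy
      rw [map_smul, S.rA_unit]
      exact Submodule.smul_mem _ _ (Submodule.smul_mem _ _ (Submodule.mem_span_singleton_self _))
  | add b b' _ _ h h' =>
    obtain ⟨Y, hY, hb, hl, hr⟩ := h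
    obtain ⟨Y', hY', hb', hl', hr'⟩ := h'
    refine ⟨Y ⊔ Y', hY.sup hY', Submodule.add_mem_sup hb hb', ?_, ?_⟩
    · intro x y hy
      obtain ⟨z, hz, z', hz', rfl⟩ := Submodule.mem_sup.1 hy
      rw [map_add]; exact Submodule.add_mem_sup (hl x z hz) (hl' x z' hz')
    · intro x y hy
      obtain ⟨z, hz, z', hz', rfl⟩ := Submodule.mem_sup.1 hy
      rw [map_add]; exact Submodule.add_mem_sup (hr x z hz) (hr' x z' hz')
  | mul b b' _ _ h h' =>
    obtain ⟨Y, hY, hb, hl, hr⟩ := h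
    obtain ⟨Y', hY', hb', hl', hr'⟩ := h'
    refine ⟨Y * Y', hY.mul hY', Submodule.mul_mem_mul hb hb', ?_, ?_⟩
    · intro x y hy
      refine (Submodule.mul_le (P := (Y * Y').comap (lA x))).2 ?_ hy
      intro y hy y' hy'
      rw [Submodule.mem_comap]
      have key : ∀ z : U ⊗[ℂ] U, ∃ w ∈ Y * Y', ∀ u, ι w u = MM (ι y) (ι y') (Δ u * z) := by
        intro z
        induction z using TensorProduct.induction_on with
        | zero => exact ⟨0, zero_mem _, by simp⟩
        | tmul x1 x2 =>
          refine ⟨lA x1 y * lA x2 y', Submodule.mul_mem_mul (hl _ _ hy) (hl' _ _ hy'), fun u => ?_⟩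
          rw [S.hιmul, ← MM_mul_right (S.hlA x1 y) (S.hlA x2 y')]; rfl
        | add z z' h h' =>
          obtain ⟨y, h1, hy⟩ := h
          obtain ⟨y', h1', hy'⟩ := h'
          exact ⟨y + y', Submodule.add_mem _ h1 h1', fun u => by simp [hy, hy', mul_add]⟩
      obtain ⟨w, hw, hw'⟩ := key (Δ x)
      have : lA x (y * y') = w := by
        apply S.ext; intro u
        rw [S.hlA, S.hιmul, hw', LinearMap.comp_apply, AlgHom.toLinearMap_apply, map_mul Δ]
      rwa [this]
    · intro x y hy
      refine (Submodule.mul_le (P := (Y * Y').comap (rA x))).2 ?_ hy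
      intro y hy y' hy'
      rw [Submodule.mem_comap]
      have key : ∀ z : U ⊗[ℂ] U, ∃ w ∈ Y * Y', ∀ u, ι w u = MM (ι y) (ι y') (z * Δ u) := by
        intro z
        induction z using TensorProduct.induction_on with
        | zero => exact ⟨0, zero_mem _, by simp⟩
        | tmul x1 x2 =>
          refine ⟨rA x1 y * rA x2 y', Submodule.mul_mem_mul (hr _ _ hy) (hr' _ _ hy'), fun u => ?_⟩
          rw [S.hιmul, ← MM_mul_left (S.hrA x1 y) (S.hrA x2 y')]; rfl
        | add z z' h h' =>
          obtain ⟨y, h1, hy⟩ := h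
          obtain ⟨y', h1', hy'⟩ := h'
          exact ⟨y + y', Submodule.add_mem _ h1 h1', fun u => by simp [hy, hy', add_mul]⟩
      obtain ⟨w, hw, hw'⟩ := key (Δ x)
      have : rA x (y * y') = w := by
        apply S.ext; intro u
        rw [S.hrA, S.hιmul, hw', LinearMap.comp_apply, AlgHom.toLinearMap_apply, map_mul Δ]
      rwa [this]

end SU

end HSimple

namespace HSimple

open scoped TensorProduct

variable {q : ℂ} {n : ℕ} {a : Fin n → Fin n → ℤ} {d : Fin n → ℕ}
    {U : Type} [Ring U] [Algebra ℂ U] {E F : Fin n → U} {K : Fin n → Uˣ}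
    {Δ : U →ₐ[ℂ] U ⊗[ℂ] U} {ε : U →ₐ[ℂ] ℂ}
    {V : (Fin n → ℕ) → Type} [∀ c, AddCommGroup (V c)] [∀ c, Module ℂ (V c)]
    {ρ : ∀ c, U →ₐ[ℂ] Module.End ℂ (V c)}
    {A : Type} [Ring A] [Algebra ℂ A]
    {ι : A →ₗ[ℂ] (U →ₗ[ℂ] ℂ)}
    {cf : ∀ c : Fin n → ℕ, Module.Dual ℂ (V c) → V c → A}
    {lA rA : U →ₗ[ℂ] Module.End ℂ A}
    {act : (Fin n → ℂˣ) × (Fin n → ℂˣ) →* (A ≃ₐ[ℂ] A)}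


/-- The value of a weight on a torus element. -/
def ch {n : ℕ} (g : Fin n → ℂˣ) (μ : Fin n → ℤ) : ℂˣ := ∏ i, g i ^ μ i

lemma ch_add {n : ℕ} (g : Fin n → ℂˣ) (μ ν : Fin n → ℤ) : ch g (μ + ν) = ch g μ * ch g ν := by
  simp [ch, zpow_add, Finset.prod_mul_distrib]

lemma ch_neg {n : ℕ} (g : Fin n → ℂˣ) (μ : Fin n → ℤ) : ch g (-μ) = (ch g μ)⁻¹ := by
  simp [ch]

lemma ch_zero {n : ℕ} (g : Fin n → ℂˣ) : ch g 0 = 1 := by simp [ch]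

lemma ch_one {n : ℕ} (μ : Fin n → ℤ) : ch (1 : Fin n → ℂˣ) μ = 1 := by simp [ch]

lemma ch_update {n : ℕ} (i : Fin n) (z : ℂˣ) (μ : Fin n → ℤ) :
    ch (Function.update (1 : Fin n → ℂˣ) i z) μ = z ^ μ i := by
  rw [ch, Finset.prod_eq_single i]
  · simp
  · intro j _ hj; simp [hj]
  · simp

/-- The combined character. -/
def ch2 {n : ℕ} (g : (Fin n → ℂˣ) × (Fin n → ℂˣ)) (κ θ : Fin n → ℤ) : ℂˣ :=
  ch g.1 (-κ) * ch g.2 θ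

lemma ch2_add {n : ℕ} (g : (Fin n → ℂˣ) × (Fin n → ℂˣ)) (κ θ κ' θ' : Fin n → ℤ) :
    ch2 g (κ + κ') (θ + θ') = ch2 g κ θ * ch2 g κ' θ' := by
  rw [ch2, ch2, ch2, neg_add, ch_add, ch_add, mul_mul_mul_comm]

/-- Weight spaces of `A`. -/
def Wt (act : (Fin n → ℂˣ) × (Fin n → ℂˣ) →* (A ≃ₐ[ℂ] A)) (κ θ : Fin n → ℤ) : Submodule ℂ A where
  carrier := {b | ∀ g, act g b = (ch2 g κ θ : ℂ) • b}
  zero_mem' := by simp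
  add_mem' := by intro x y hx hy g; rw [map_add, hx g, hy g, smul_add]
  smul_mem' := by intro c x hx g; rw [map_smul, hx g, smul_comm]

lemma mem_Wt {κ θ : Fin n → ℤ} {b : A} :
    b ∈ Wt act κ θ ↔ ∀ g, act g b = (ch2 g κ θ : ℂ) • b := Iff.rfl

lemma Wt_mul {κ θ κ' θ' : Fin n → ℤ} {b b' : A} (h : b ∈ Wt act κ θ) (h' : b' ∈ Wt act κ' θ') :
    b * b' ∈ Wt act (κ + κ') (θ + θ') := by
  intro g
  rw [map_mul, h g, h' g, ch2_add, Units.val_mul, smul_mul_smul_comm]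

lemma Wt_one : (1 : A) ∈ Wt act 0 0 := by
  intro g
  simp [ch2, ch_zero]

lemma dual_span {q : ℂ} (hq : Transcendental ℚ q) {n : ℕ} {d : Fin n → ℕ} (hd_pos : ∀ i, 0 < d i)
    {U : Type} [Ring U] [Algebra ℂ U] {K : Fin n → Uˣ}
    {V : Type} [AddCommGroup V] [Module ℂ V] {ρ : U →ₐ[ℂ] Module.End ℂ V} [FiniteDimensional ℂ V]
    (hwtsum : (⨆ μ : Fin n → ℤ, wtSp q d K ρ μ) = ⊤) :
    Submodule.span ℂ {ξ : Module.Dual ℂ V | ∃ κ, inDualWt q d K ρ (-κ) ξ} = ⊤ := by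
  set S := Submodule.span ℂ {ξ : Module.Dual ℂ V | ∃ κ, inDualWt q d K ρ (-κ) ξ} with hS
  have h0 : S.dualCoannihilator = ⊥ := by
    rw [eq_bot_iff]
    intro x hx
    rw [Submodule.mem_dualCoannihilator] at hx
    have hxs : x ∈ ⨆ μ : Fin n → ℤ, wtSp q d K ρ μ := by rw [hwtsum]; trivial
    obtain ⟨y, hy, hsum⟩ := (Submodule.mem_iSup_iff_exists_finsupp _ _).1 hxs
    have : ∀ μ, y μ = 0 := by
      intro μ
      by_contra hne
      obtain ⟨ξ, h1, h2⟩ := exists_dual hq hd_pos μ (y μ) (hy μ) hne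
      apply h2
      have h3 := hx ξ (Submodule.subset_span ⟨μ, h1⟩)
      rw [← hsum, Finsupp.sum, map_sum, Finset.sum_eq_single μ] at h3
      · exact h3
      · intro ν _ hν
        exact h1 ν (by simpa using hν) _ (hy ν)
      · intro h
        rw [Finsupp.notMem_support_iff.1 h, map_zero]
    rw [← hsum]
    simp [Finsupp.sum, this]
  rw [← Subspace.dualCoannihilator_dualAnnihilator_eq (W := S), h0, Submodule.dualAnnihilator_bot]

namespace SU

lemma cf_Wt (S : SU q a d E F K Δ ε ρ ι cf lA rA act) {c} {κ θ : Fin n → ℤ}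
    {ξ : Module.Dual ℂ (V c)} {v : V c} (hξ : inDualWt q d K (ρ c) (-κ) ξ)
    (hv : v ∈ wtSp q d K (ρ c) θ) : cf c ξ v ∈ Wt act κ θ :=
  fun g => S.hact g c ξ v (-κ) θ hξ hv

lemma homog_adjoin (S : SU q a d E F K Δ ε ρ ι cf lA rA act) :
    Algebra.adjoin ℂ {x : A | ∃ c κ θ ξ v, inDualWt q d K (ρ c) (-κ) ξ ∧
      v ∈ wtSp q d K (ρ c) θ ∧ x = cf c ξ v} = ⊤ := by
  rw [eq_top_iff, ← S.hAgen]
  refine Algebra.adjoin_le ?_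
  rintro _ ⟨c, ξ, v, rfl⟩
  obtain ⟨f, hf⟩ := S.exists_cfL c
  have := S.hfd c
  rw [← hf]
  have hξ : ξ ∈ Submodule.span ℂ {ξ : Module.Dual ℂ (V c) | ∃ κ, inDualWt q d K (ρ c) (-κ) ξ} := by
    rw [dual_span S.hq S.hd_pos (S.hwtsum c)]; trivial
  induction hξ using Submodule.span_induction with
  | mem ξ hξ =>
    obtain ⟨κ, hξ⟩ := hξ
    induction v using wt_ind (S.hwtsum c) with
    | mem θ v hv => exact Algebra.subset_adjoin ⟨c, κ, θ, ξ, v, hξ, hv, hf _ _⟩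
    | zero => rw [map_zero]; exact zero_mem _
    | add x y hx hy => rw [map_add]; exact add_mem hx hy
  | zero => rw [map_zero]; exact zero_mem _
  | add x y _ _ hx hy => rw [map_add]; exact add_mem hx hy
  | smul r x _ hx => rw [map_smul]; exact Subalgebra.smul_mem _ hx r

lemma Wt_top (S : SU q a d E F K Δ ε ρ ι cf lA rA act) :
    (⨆ p : (Fin n → ℤ) × (Fin n → ℤ), Wt act p.1 p.2) = ⊤ := by
  rw [eq_top_iff]
  intro b _
  have hb : b ∈ Algebra.adjoin ℂ {x : A | ∃ c κ θ ξ v, inDualWt q d K (ρ c) (-κ) ξ ∧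
      v ∈ wtSp q d K (ρ c) θ ∧ x = cf c ξ v} := by rw [S.homog_adjoin]; trivial
  rw [← Subalgebra.mem_toSubmodule, Algebra.adjoin_eq_span] at hb
  refine Submodule.span_le.2 ?_ hb
  intro x hx
  have : ∃ κ θ, x ∈ Wt act κ θ := by
    induction hx using Submonoid.closure_induction with
    | mem x hx =>
      obtain ⟨c, κ, θ, ξ, v, h1, h2, rfl⟩ := hx
      exact ⟨κ, θ, S.cf_Wt h1 h2⟩
    | one => exact ⟨0, 0, Wt_one⟩
    | mul x y _ _ hx hy =>
      obtain ⟨κ, θ, h⟩ := hx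
      obtain ⟨κ', θ', h'⟩ := hy
      exact ⟨_, _, Wt_mul h h'⟩
  obtain ⟨κ, θ, h⟩ := this
  exact Submodule.mem_iSup_of_mem (κ, θ) h

lemma wt_ind (S : SU q a d E F K Δ ε ρ ι cf lA rA act) {p : A → Prop}
    (mem : ∀ κ θ x, x ∈ Wt act κ θ → p x) (zero : p 0) (add : ∀ x y, p x → p y → p (x + y))
    (x : A) : p x := by
  have hx : x ∈ ⨆ p : (Fin n → ℤ) × (Fin n → ℤ), Wt act p.1 p.2 := by rw [S.Wt_top]; trivial
  exact Submodule.iSup_induction _ (motive := p) hx (fun r x h => mem r.1 r.2 x h) zero add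

lemma homog_ind (S : SU q a d E F K Δ ε ρ ι cf lA rA act) {p : A → Prop}
    (mem : ∀ c κ θ ξ v, inDualWt q d K (ρ c) (-κ) ξ → v ∈ wtSp q d K (ρ c) θ → p (cf c ξ v))
    (scal : ∀ r : ℂ, p (algebraMap ℂ A r))
    (add : ∀ x y, p x → p y → p (x + y)) (mul : ∀ x y, p x → p y → p (x * y))
    (x : A) : p x := by
  have hx : x ∈ Algebra.adjoin ℂ {x : A | ∃ c κ θ ξ v, inDualWt q d K (ρ c) (-κ) ξ ∧
      v ∈ wtSp q d K (ρ c) θ ∧ x = cf c ξ v} := by rw [S.homog_adjoin]; trivial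
  induction hx using Algebra.adjoin_induction with
  | mem x hx => obtain ⟨c, κ, θ, ξ, v, h1, h2, rfl⟩ := hx; exact mem c κ θ ξ v h1 h2
  | algebraMap r => exact scal r
  | add x y _ _ hx hy => exact add x y hx hy
  | mul x y _ _ hx hy => exact mul x y hx hy

lemma K_mem (i : Fin n) : K i ∈ KG K := Subgroup.subset_closure ⟨i, rfl⟩

lemma cf_smul_right (S : SU q a d E F K Δ ε ρ ι cf lA rA act) (c ξ v) (r : ℂ) :
    cf c ξ (r • v) = r • cf c ξ v := by
  obtain ⟨f, hf⟩ := S.exists_cfL c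
  rw [← hf, ← hf, map_smul]

lemma cf_smul_left (S : SU q a d E F K Δ ε ρ ι cf lA rA act) (c ξ v) (r : ℂ) :
    cf c (r • ξ) v = r • cf c ξ v := by
  obtain ⟨f, hf⟩ := S.exists_cfL c
  rw [← hf, ← hf, map_smul, LinearMap.smul_apply]

lemma lK_act (S : SU q a d E F K Δ ε ρ ι cf lA rA act) (i : Fin n) (z : ℂˣ)
    (hz : (z : ℂ) = q ^ (d i : ℤ)) (b : A) :
    lA (K i : U) b = act (1, Function.update 1 i z) b := by
  induction b using S.homog_ind with
  | mem c κ θ ξ v h1 h2 =>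
    rw [S.cf_Wt h1 h2, S.lA_cf, mem_wtSp.1 h2 i, S.cf_smul_right]
    simp only [ch2, ch_one, ch_update, one_mul, Units.val_zpow_eq_zpow_val, hz]
    rw [← zpow_mul, mul_comm]
  | scal r =>
    rw [AlgEquiv.commutes, Algebra.algebraMap_eq_smul_one, map_smul, S.lA_unit, S.hεK, one_smul]
  | add x y hx hy => rw [map_add, map_add, hx, hy]
  | mul x y hx hy => rw [S.lK_mul (K_mem i), map_mul, hx, hy]

lemma rK_act (S : SU q a d E F K Δ ε ρ ι cf lA rA act) (i : Fin n) (z : ℂˣ)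
    (hz : (z : ℂ) = q ^ (d i : ℤ)) (b : A) :
    rA (K i : U) b = act (Function.update 1 i z⁻¹, 1) b := by
  induction b using S.homog_ind with
  | mem c κ θ ξ v h1 h2 =>
    have : ξ ∘ₗ ρ c (K i : U) = q ^ (κ i * (d i : ℤ)) • ξ := by
      ext x; exact dual_K (S.hwtsum c) h1 i x
    rw [S.cf_Wt h1 h2, S.rA_cf, this, S.cf_smul_left]
    simp only [ch2, ch_one, ch_update, mul_one, Units.val_zpow_eq_zpow_val, Units.val_inv_eq_inv_val,
      hz, Pi.neg_apply, zpow_neg, inv_zpow, inv_inv]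
    rw [mul_comm, zpow_mul]
  | scal r =>
    rw [AlgEquiv.commutes, Algebra.algebraMap_eq_smul_one, map_smul, S.rA_unit, S.hεK, one_smul]
  | add x y hx hy => rw [map_add, map_add, hx, hy]
  | mul x y hx hy => rw [S.rK_mul (K_mem i), map_mul, hx, hy]

lemma exists_z (S : SU q a d E F K Δ ε ρ ι cf lA rA act) (i : Fin n) :
    ∃ z : ℂˣ, (z : ℂ) = q ^ (d i : ℤ) := ⟨Units.mk0 _ (zpow_ne_zero _ S.hq0), rfl⟩

lemma lK_Wt (S : SU q a d E F K Δ ε ρ ι cf lA rA act) {κ θ : Fin n → ℤ} {b : A}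
    (h : b ∈ Wt act κ θ) (i : Fin n) : lA (K i : U) b = (q ^ (d i : ℤ)) ^ θ i • b := by
  obtain ⟨z, hz⟩ := S.exists_z i
  rw [S.lK_act i z hz, h]
  simp only [ch2, ch_one, ch_update, one_mul, Units.val_zpow_eq_zpow_val, hz]

lemma rK_Wt (S : SU q a d E F K Δ ε ρ ι cf lA rA act) {κ θ : Fin n → ℤ} {b : A}
    (h : b ∈ Wt act κ θ) (i : Fin n) : rA (K i : U) b = (q ^ (d i : ℤ)) ^ κ i • b := by
  obtain ⟨z, hz⟩ := S.exists_z i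
  rw [S.rK_act i z hz, h]
  simp only [ch2, ch_one, ch_update, mul_one, Units.val_zpow_eq_zpow_val, Units.val_inv_eq_inv_val,
      hz, Pi.neg_apply, zpow_neg, inv_zpow, inv_inv]

lemma inv_eig {f g : Module.End ℂ A} (hfg : g * f = 1) {c : ℂ} (hc : c ≠ 0) {b : A}
    (h : f b = c • b) : g b = c⁻¹ • b := by
  have h1 : g (f b) = b := by rw [← Module.End.mul_apply, hfg, Module.End.one_apply]
  rw [h, map_smul] at h1
  rw [eq_inv_smul_iff₀ hc, h1]

lemma lKi_Wt (S : SU q a d E F K Δ ε ρ ι cf lA rA act) {κ θ : Fin n → ℤ} {b : A}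
    (h : b ∈ Wt act κ θ) (i : Fin n) :
    lA (((K i)⁻¹ : Uˣ) : U) b = (q ^ (d i : ℤ)) ^ (-θ i) • b := by
  rw [zpow_neg]
  refine inv_eig ?_ (zpow_ne_zero _ (zpow_ne_zero _ S.hq0)) (S.lK_Wt h i)
  rw [← S.lA_mul, Units.inv_mul, S.lA_one]

lemma rKi_Wt (S : SU q a d E F K Δ ε ρ ι cf lA rA act) {κ θ : Fin n → ℤ} {b : A}
    (h : b ∈ Wt act κ θ) (i : Fin n) :
    rA (((K i)⁻¹ : Uˣ) : U) b = (q ^ (d i : ℤ)) ^ (-κ i) • b := by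
  rw [zpow_neg]
  refine inv_eig ?_ (zpow_ne_zero _ (zpow_ne_zero _ S.hq0)) (S.rK_Wt h i)
  rw [← S.rA_mul, Units.mul_inv, S.rA_one]

/-- `K⁻¹` acts through the torus as well. -/
lemma lKi_act (S : SU q a d E F K Δ ε ρ ι cf lA rA act) (i : Fin n) :
    ∃ g, ∀ b, lA (((K i)⁻¹ : Uˣ) : U) b = act g b := by
  obtain ⟨z, hz⟩ := S.exists_z i
  refine ⟨(1, Function.update 1 i z)⁻¹, fun b => ?_⟩
  have h1 : lA (K i : U) (act (1, Function.update 1 i z)⁻¹ b) = b := by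
    rw [S.lK_act i z hz, ← AlgEquiv.mul_apply, ← map_mul, mul_inv_cancel, map_one,
      AlgEquiv.one_apply]
  conv_lhs => rw [← h1]
  rw [← Module.End.mul_apply, ← S.lA_mul, Units.inv_mul, S.lA_one, Module.End.one_apply]

lemma rKi_act (S : SU q a d E F K Δ ε ρ ι cf lA rA act) (i : Fin n) :
    ∃ g, ∀ b, rA (((K i)⁻¹ : Uˣ) : U) b = act g b := by
  obtain ⟨z, hz⟩ := S.exists_z i
  refine ⟨(Function.update 1 i z⁻¹, 1)⁻¹, fun b => ?_⟩
  have h1 : rA (K i : U) (act (Function.update 1 i z⁻¹, 1)⁻¹ b) = b := by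
    rw [S.rK_act i z hz, ← AlgEquiv.mul_apply, ← map_mul, mul_inv_cancel, map_one,
      AlgEquiv.one_apply]
  conv_lhs => rw [← h1]
  rw [← Module.End.mul_apply, ← S.rA_mul, Units.mul_inv, S.rA_one, Module.End.one_apply]

lemma act_comm (g g' : (Fin n → ℂˣ) × (Fin n → ℂˣ)) (b : A) :
    act g (act g' b) = act g' (act g b) := by
  rw [← AlgEquiv.mul_apply, ← AlgEquiv.mul_apply, ← map_mul, ← map_mul, mul_comm]

lemma twist (S : SU q a d E F K Δ ε ρ ι cf lA rA act) (D k k' : Module.End ℂ A)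
    (hD : ∀ b b', D (b * b') = D b * k' b' + k b * D b') (hD1 : D 1 = 0)
    (hk : ∀ g b, act g (k b) = k (act g b)) (hk' : ∀ g b, act g (k' b) = k' (act g b))
    (g) (c : ℂ)
    (hgen : ∀ e κ θ ξ v, inDualWt q d K (ρ e) (-κ) ξ → v ∈ wtSp q d K (ρ e) θ →
      act g (D (cf e ξ v)) = c • D (act g (cf e ξ v))) (b : A) :
    act g (D b) = c • D (act g b) := by
  induction b using S.homog_ind with
  | mem e κ θ ξ v h1 h2 => exact hgen e κ θ ξ v h1 h2
  | scal r => simp [Algebra.algebraMap_eq_smul_one, hD1]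
  | add x y hx hy => simp only [map_add, hx, hy, smul_add]
  | mul x y hx hy =>
    rw [hD, map_add, map_mul, map_mul, hx, hy, hk, hk', map_mul, hD, smul_add, smul_mul_assoc,
      mul_smul_comm]

lemma lK_comm (S : SU q a d E F K Δ ε ρ ι cf lA rA act) (i) (g) (b : A) :
    act g (lA (K i : U) b) = lA (K i : U) (act g b) := by
  obtain ⟨z, hz⟩ := S.exists_z i
  rw [S.lK_act i z hz, S.lK_act i z hz, act_comm]

lemma rK_comm (S : SU q a d E F K Δ ε ρ ι cf lA rA act) (i) (g) (b : A) :
    act g (rA (K i : U) b) = rA (K i : U) (act g b) := by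
  obtain ⟨z, hz⟩ := S.exists_z i
  rw [S.rK_act i z hz, S.rK_act i z hz, act_comm]

lemma lKi_comm (S : SU q a d E F K Δ ε ρ ι cf lA rA act) (i) (g) (b : A) :
    act g (lA (((K i)⁻¹ : Uˣ) : U) b) = lA (((K i)⁻¹ : Uˣ) : U) (act g b) := by
  obtain ⟨z, hz⟩ := S.lKi_act i
  rw [hz, hz, act_comm]

lemma rKi_comm (S : SU q a d E F K Δ ε ρ ι cf lA rA act) (i) (g) (b : A) :
    act g (rA (((K i)⁻¹ : Uˣ) : U) b) = rA (((K i)⁻¹ : Uˣ) : U) (act g b) := by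
  obtain ⟨z, hz⟩ := S.rKi_act i
  rw [hz, hz, act_comm]

lemma ch2_shift (g : (Fin n → ℂˣ) × (Fin n → ℂˣ)) (κ θ κ' θ' : Fin n → ℤ) (b b' : A)
    (h : b' = (ch2 g (κ + κ') (θ + θ') : ℂ) • b) :
    b' = (ch2 g κ' θ' : ℂ) • ((ch2 g κ θ : ℂ) • b) := by
  rw [h, ch2_add, smul_smul, Units.val_mul, mul_comm]

lemma act_lE (S : SU q a d E F K Δ ε ρ ι cf lA rA act) (i) (g) (b : A) :
    act g (lA (E i) b) = (ch2 g 0 (al a i) : ℂ) • lA (E i) (act g b) := by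
  refine S.twist (lA (E i)) (lA (K i : U)) 1 (S.lE_mul i) (by simp [S.lA_unit, S.hεE])
    (S.lK_comm i) (by simp) g _ ?_ b
  intro e κ θ ξ v h1 h2
  rw [S.cf_Wt h1 h2, map_smul, S.lA_cf]
  refine ch2_shift g κ θ 0 (al a i) _ _ ?_
  rw [add_zero]
  exact S.cf_Wt h1 (wtSp_E S.hq0 S.hrel h2 i) g

lemma act_lF (S : SU q a d E F K Δ ε ρ ι cf lA rA act) (i) (g) (b : A) :
    act g (lA (F i) b) = (ch2 g 0 (-al a i) : ℂ) • lA (F i) (act g b) := by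
  refine S.twist (lA (F i)) 1 (lA (((K i)⁻¹ : Uˣ) : U)) (S.lF_mul i) (by simp [S.lA_unit, S.hεF])
    (by simp) (S.lKi_comm i) g _ ?_ b
  intro e κ θ ξ v h1 h2
  rw [S.cf_Wt h1 h2, map_smul, S.lA_cf]
  refine ch2_shift g κ θ 0 (-al a i) _ _ ?_
  rw [add_zero, ← sub_eq_add_neg]
  exact S.cf_Wt h1 (wtSp_F S.hq0 S.hrel h2 i) g

lemma act_rE (S : SU q a d E F K Δ ε ρ ι cf lA rA act) (i) (g) (b : A) :
    act g (rA (E i) b) = (ch2 g (-al a i) 0 : ℂ) • rA (E i) (act g b) := by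
  refine S.twist (rA (E i)) (rA (K i : U)) 1 (S.rE_mul i) (by simp [S.rA_unit, S.hεE])
    (S.rK_comm i) (by simp) g _ ?_ b
  intro e κ θ ξ v h1 h2
  rw [S.cf_Wt h1 h2, map_smul, S.rA_cf]
  refine ch2_shift g κ θ (-al a i) 0 _ _ ?_
  rw [add_zero, ← sub_eq_add_neg]
  exact S.cf_Wt (dual_comp_E S.hq0 S.hrel h1 i) h2 g

lemma act_rF (S : SU q a d E F K Δ ε ρ ι cf lA rA act) (i) (g) (b : A) :
    act g (rA (F i) b) = (ch2 g (al a i) 0 : ℂ) • rA (F i) (act g b) := by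
  refine S.twist (rA (F i)) 1 (rA (((K i)⁻¹ : Uˣ) : U)) (S.rF_mul i) (by simp [S.rA_unit, S.hεF])
    (by simp) (S.rKi_comm i) g _ ?_ b
  intro e κ θ ξ v h1 h2
  rw [S.cf_Wt h1 h2, map_smul, S.rA_cf]
  refine ch2_shift g κ θ (al a i) 0 _ _ ?_
  rw [add_zero]
  exact S.cf_Wt (dual_comp_F S.hq0 S.hrel h1 i) h2 g

lemma lE_Wt (S : SU q a d E F K Δ ε ρ ι cf lA rA act) {κ θ : Fin n → ℤ} {b : A}
    (h : b ∈ Wt act κ θ) (i) : lA (E i) b ∈ Wt act κ (θ + al a i) := by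
  intro g
  rw [S.act_lE, h g, map_smul, smul_smul, ← Units.val_mul, ← ch2_add, zero_add, add_comm]

lemma lF_Wt (S : SU q a d E F K Δ ε ρ ι cf lA rA act) {κ θ : Fin n → ℤ} {b : A}
    (h : b ∈ Wt act κ θ) (i) : lA (F i) b ∈ Wt act κ (θ - al a i) := by
  intro g
  rw [S.act_lF, h g, map_smul, smul_smul, ← Units.val_mul, ← ch2_add, zero_add, sub_eq_neg_add]

lemma rE_Wt (S : SU q a d E F K Δ ε ρ ι cf lA rA act) {κ θ : Fin n → ℤ} {b : A}
    (h : b ∈ Wt act κ θ) (i) : rA (E i) b ∈ Wt act (κ - al a i) θ := by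
  intro g
  rw [S.act_rE, h g, map_smul, smul_smul, ← Units.val_mul, ← ch2_add, zero_add, sub_eq_neg_add]

lemma rF_Wt (S : SU q a d E F K Δ ε ρ ι cf lA rA act) {κ θ : Fin n → ℤ} {b : A}
    (h : b ∈ Wt act κ θ) (i) : rA (F i) b ∈ Wt act (κ + al a i) θ := by
  intro g
  rw [S.act_rF, h g, map_smul, smul_smul, ← Units.val_mul, ← ch2_add, zero_add, add_comm]

end SU

end HSimple

namespace HSimple

open scoped TensorProduct

variable {q : ℂ} {n : ℕ} {a : Fin n → Fin n → ℤ} {d : Fin n → ℕ}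
    {U : Type} [Ring U] [Algebra ℂ U] {E F : Fin n → U} {K : Fin n → Uˣ}
    {Δ : U →ₐ[ℂ] U ⊗[ℂ] U} {ε : U →ₐ[ℂ] ℂ}
    {V : (Fin n → ℕ) → Type} [∀ c, AddCommGroup (V c)] [∀ c, Module ℂ (V c)]
    {ρ : ∀ c, U →ₐ[ℂ] Module.End ℂ (V c)}
    {A : Type} [Ring A] [Algebra ℂ A]
    {ι : A →ₗ[ℂ] (U →ₗ[ℂ] ℂ)}
    {cf : ∀ c : Fin n → ℕ, Module.Dual ℂ (V c) → V c → A}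
    {lA rA : U →ₗ[ℂ] Module.End ℂ A}
    {act : (Fin n → ℂˣ) × (Fin n → ℂˣ) →* (A ≃ₐ[ℂ] A)}


/-- A symmetric bimultiplicative form on the weight lattice. -/
structure QForm (q : ℂ) {n : ℕ} (a : Fin n → Fin n → ℤ) (d : Fin n → ℕ)
    (Q : (Fin n → ℤ) → (Fin n → ℤ) → ℂˣ) : Prop where
  add : ∀ x y z, Q x (y + z) = Q x y * Q x z
  symm : ∀ x y, Q x y = Q y x
  al : ∀ x k, (Q x (al a k) : ℂ) = (q ^ (d k : ℤ)) ^ x k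

variable {Q : (Fin n → ℤ) → (Fin n → ℤ) → ℂˣ}

lemma QForm.zero (H : QForm q a d Q) (x) : Q x 0 = 1 := by
  have := H.add x 0 0
  rw [add_zero] at this
  exact left_eq_mul.1 this

lemma QForm.neg (H : QForm q a d Q) (x y) : Q x (-y) = (Q x y)⁻¹ := by
  rw [eq_inv_iff_mul_eq_one, ← H.add, neg_add_cancel, H.zero]

lemma QForm.exists_g (H : QForm q a d Q) (x : Fin n → ℤ) : ∃ g : Fin n → ℂˣ, ∀ y, ch g y = Q x y := by
  classical
  let f : (Fin n → ℤ) →+ Additive ℂˣ := AddMonoidHom.mk' (fun y => Additive.ofMul (Q x y))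
    (fun y z => by rw [H.add]; rfl)
  refine ⟨fun i => Q x (Pi.single i 1), fun y => ?_⟩
  have h1 : f y = ∑ i, y i • f (Pi.single i 1) := by
    conv_lhs => rw [← Finset.univ_sum_single y]
    rw [map_sum]
    refine Finset.sum_congr rfl fun i _ => ?_
    rw [← map_zsmul]
    congr 1
    rw [← Pi.single_smul]; simp
  exact h1.symm

lemma ch_inv {n : ℕ} (g : Fin n → ℂˣ) (μ : Fin n → ℤ) : ch g⁻¹ μ = (ch g μ)⁻¹ := by
  simp [ch]

/-- torus element implementing the scalars of commutation -/
lemma QForm.exists_g2 (H : QForm q a d Q) (x y : Fin n → ℤ) :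
    ∃ g : (Fin n → ℂˣ) × (Fin n → ℂˣ), ∀ κ θ, ch2 g κ θ = Q x κ * (Q y θ)⁻¹ := by
  obtain ⟨g1, h1⟩ := H.exists_g x
  obtain ⟨g2, h2⟩ := H.exists_g y
  refine ⟨(g1⁻¹, g2⁻¹), fun κ θ => ?_⟩
  rw [ch2, ch_inv, ch_inv, ch_neg, inv_inv, h1, h2]

namespace SU

lemma KG_comm_K (S : SU q a d E F K Δ ε ρ ι cf lA rA act) {k : Uˣ} (hk : k ∈ KG K) (i : Fin n) :
    Commute k (K i) := by
  induction hk using Subgroup.closure_induction with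
  | mem k hk => obtain ⟨j, rfl⟩ := hk; exact Units.ext (S.hrel.1 j i)
  | one => exact Commute.one_left _
  | mul k k' _ _ h h' => exact h.mul_left h'
  | inv k _ h => exact h.inv_left

lemma ev_zero (S : SU q a d E F K Δ ε ρ ι cf lA rA act) {k : Uˣ} (hk : k ∈ KG K)
    {κ θ : Fin n → ℤ} {b : A} (hb : b ∈ Wt act κ θ) (h : ι b (k : U) ≠ 0) : κ = θ := by
  funext i
  have h1 : ι (lA (K i : U) b) (k : U) = ι (rA (K i : U) b) (k : U) := by
    rw [S.hlA, S.hrA]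
    have := congrArg Units.val (S.KG_comm_K hk i).eq
    rw [Units.val_mul, Units.val_mul] at this
    rw [this]
  rw [S.lK_Wt hb, S.rK_Wt hb, map_smul, map_smul, LinearMap.smul_apply, LinearMap.smul_apply,
    smul_eq_mul, smul_eq_mul] at h1
  exact t_inj S.hq S.hd_pos i _ _ (mul_right_cancel₀ h h1).symm

lemma rFw_Wt (S : SU q a d E F K Δ ε ρ ι cf lA rA act) {κ θ : Fin n → ℤ} {b : A}
    (l : List (Fin n)) (h : b ∈ Wt act κ θ) : rA (word F l) b ∈ Wt act (κ + lwt a l) θ := by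
  induction l generalizing b κ with
  | nil => simpa [S.rA_one] using h
  | cons i l ih =>
    rw [word_cons, S.rA_mul, Module.End.mul_apply, lwt_cons, ← add_assoc]
    exact ih (S.rF_Wt h i)

lemma lEw_Wt (S : SU q a d E F K Δ ε ρ ι cf lA rA act) {κ θ : Fin n → ℤ} {b : A}
    (l : List (Fin n)) (h : b ∈ Wt act κ θ) : lA (word E l) b ∈ Wt act κ (θ + lwt a l) := by
  induction l with
  | nil => simpa [S.lA_one] using h
  | cons i l ih =>
    rw [word_cons, S.lA_mul, Module.End.mul_apply, lwt_cons, add_comm (al a i), ← add_assoc]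
    exact S.lE_Wt ih i

lemma rFw_mul (S : SU q a d E F K Δ ε ρ ι cf lA rA act) (H : QForm q a d Q) {κ θ : Fin n → ℤ}
    {b : A} (hb : b ∈ Wt act κ θ) (hF : ∀ i, rA (F i) b = 0) (l : List (Fin n)) (c : A) :
    rA (word F l) (c * b) = (((Q κ (lwt a l))⁻¹ : ℂˣ) : ℂ) • (rA (word F l) c * b) := by
  induction l generalizing c with
  | nil => simp [S.rA_one, H.zero]
  | cons i l ih =>
    rw [word_cons, S.rA_mul, Module.End.mul_apply, Module.End.mul_apply, S.rF_mul, hF, mul_zero,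
      add_zero, S.rKi_Wt hb, mul_smul_comm, map_smul, ih, smul_smul, lwt_cons, H.add, mul_inv,
      Units.val_mul]
    simp only [Units.val_inv_eq_inv_val, H.al, zpow_neg]

lemma rFw_mul' (S : SU q a d E F K Δ ε ρ ι cf lA rA act)
    {b : A} (hF : ∀ i, rA (F i) b = 0) (l : List (Fin n)) (c : A) :
    rA (word F l) (b * c) = b * rA (word F l) c := by
  induction l generalizing c with
  | nil => simp [S.rA_one]
  | cons i l ih =>
    rw [word_cons, S.rA_mul, Module.End.mul_apply, Module.End.mul_apply, S.rF_mul, hF, zero_mul,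
      zero_add, ih]

lemma lEw_mul (S : SU q a d E F K Δ ε ρ ι cf lA rA act) (H : QForm q a d Q) {κ θ : Fin n → ℤ}
    {c : A} (hc : c ∈ Wt act κ θ) (hE : ∀ i, lA (E i) c = 0) (l : List (Fin n)) (b : A) :
    lA (word E l) (c * b) = (Q θ (lwt a l) : ℂ) • (c * lA (word E l) b) := by
  induction l with
  | nil => simp [S.lA_one, H.zero]
  | cons i l ih =>
    rw [word_cons, S.lA_mul, Module.End.mul_apply, Module.End.mul_apply, ih, map_smul, S.lE_mul, hE,
      zero_mul, zero_add, S.lK_Wt hc, smul_mul_assoc, smul_smul, lwt_cons, H.add, Units.val_mul,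
      H.al, mul_comm]

lemma lEw_mul' (S : SU q a d E F K Δ ε ρ ι cf lA rA act)
    {c : A} (hE : ∀ i, lA (E i) c = 0) (l : List (Fin n)) (b : A) :
    lA (word E l) (b * c) = lA (word E l) b * c := by
  induction l with
  | nil => simp [S.lA_one]
  | cons i l ih =>
    rw [word_cons, S.lA_mul, Module.End.mul_apply, Module.End.mul_apply, ih, S.lE_mul, hE, mul_zero,
      add_zero]

lemma ev_tri (S : SU q a d E F K Δ ε ρ ι cf lA rA act) (b : A) (x y z : U) :
    ι b (x * y * z) = ι (lA z (rA x b)) y := by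
  rw [S.hlA, S.hrA, mul_assoc]

lemma base_comm (S : SU q a d E F K Δ ε ρ ι cf lA rA act) (H : QForm q a d Q)
    {κ₁ θ₁ κ₂ θ₂ : Fin n → ℤ} {c b : A} (hc : c ∈ Wt act κ₁ θ₁) (hE : ∀ i, lA (E i) c = 0)
    (hb : b ∈ Wt act κ₂ θ₂) (hF : ∀ i, rA (F i) b = 0) :
    c * b = ((Q κ₁ κ₂ * (Q θ₁ θ₂)⁻¹ : ℂˣ) : ℂ) • (b * c) := by
  apply S.hιinj
  refine tri_ext S.hq0 S.hrel S.hgen _ _ ?_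
  intro l l' k hk
  rw [S.ev_tri, S.ev_tri, map_smul, map_smul, S.rFw_mul H hb hF, S.rFw_mul' hF, map_smul]
  have hc' := S.rFw_Wt l hc
  have hE' : ∀ i, lA (E i) (rA (word F l) c) = 0 := by
    intro i; rw [S.lr_comm, hE, map_zero]
  have hb' := S.lEw_Wt l' hb
  generalize rA (word F l) c = c' at hc' hE'
  rw [S.lEw_mul H hc' hE', S.lEw_mul' hE']
  generalize lA (word E l') b = b' at hb'
  rw [map_smul, map_smul, map_smul]
  simp only [LinearMap.smul_apply, smul_eq_mul]
  rw [S.ev_KG hk, S.ev_KG hk]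
  by_cases h1 : ι c' (k : U) = 0
  · simp [h1]
  by_cases h2 : ι b' (k : U) = 0
  · simp [h2]
  have e1 := S.ev_zero hk hc' h1
  have e2 := S.ev_zero hk hb' h2
  rw [← mul_assoc, ← Units.val_mul, mul_comm (ι b' _)]
  congr 2
  have e3 : Q θ₁ κ₂ = Q κ₂ κ₁ * Q κ₂ (lwt a l) := by rw [← H.add, e1, H.symm]
  have e4 : Q θ₁ κ₂ = Q θ₁ θ₂ * Q θ₁ (lwt a l') := by rw [← H.add, e2]
  rw [inv_mul_eq_iff_eq_mul, ← mul_assoc, eq_mul_inv_iff_mul_eq, mul_comm (Q κ₂ _), H.symm κ₁, ← e3, e4,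
    mul_comm]

lemma normal_minus (S : SU q a d E F K Δ ε ρ ι cf lA rA act) (H : QForm q a d Q)
    (hη : ∀ c, ∃ κ, ∃ η : Module.Dual ℂ (V c), inDualWt q d K (ρ c) (-κ) η ∧ η ≠ 0 ∧
      ∀ i, η ∘ₗ ρ c (F i) = 0)
    {κ₁ θ₁ : Fin n → ℤ} {c : A} (hc : c ∈ Wt act κ₁ θ₁) (hE : ∀ i, lA (E i) c = 0)
    (hE' : ∀ i, rA (E i) c = 0) {g} (hg : ∀ κ θ, ch2 g κ θ = Q κ₁ κ * (Q θ₁ θ)⁻¹) (b : A) :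
    c * b = act g b * c := by
  have hrE : ∀ i b, c * b = act g b * c → c * rA (E i) b = act g (rA (E i) b) * c := by
    intro i b h
    have h1 := congrArg (rA (E i)) h
    rw [S.rE_mul, S.rE_mul, hE', zero_mul, zero_add, mul_zero, add_zero, S.rK_Wt hc,
      smul_mul_assoc] at h1
    rw [S.act_rE, smul_mul_assoc, ← h1, smul_smul, hg, H.zero, inv_one, mul_one, H.neg,
      Units.val_inv_eq_inv_val, H.al, inv_mul_cancel₀ (zpow_ne_zero _ (zpow_ne_zero _ S.hq0)), one_smul]
  have hrEw : ∀ l b, c * b = act g b * c → c * rA (word E l) b = act g (rA (word E l) b) * c := by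
    intro l
    induction l with
    | nil => intro b h; simpa [S.rA_one] using h
    | cons i l ih =>
      intro b h
      rw [word_cons, S.rA_mul, Module.End.mul_apply]
      exact ih _ (hrE i b h)
  induction b using S.homog_ind with
  | mem e κ θ ξ v h1 h2 =>
    clear h1
    obtain ⟨κ', η, h3, h4, h5⟩ := hη e
    have := S.hfd e
    have hξ : ξ ∈ Submodule.span ℂ {ζ : Module.Dual ℂ (V e) | ∃ l, ζ = η ∘ₗ ρ e (word E l)} := by
      rw [hi_dual_span S.hq0 S.hrel S.hgen (S.hsimple e) (S.hwtsum e) h3 h4 h5]; trivial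
    obtain ⟨f, hf⟩ := S.exists_cfL e
    rw [← hf]
    have hbase : c * cf e η v = act g (cf e η v) * c := by
      have hw := S.cf_Wt h3 h2
      rw [S.base_comm H hc hE hw, hw g, hg, smul_mul_assoc]
      intro i
      rw [S.rA_cf, h5, ← hf]; simp
    induction hξ using Submodule.span_induction with
    | mem ξ hξ =>
      obtain ⟨l, rfl⟩ := hξ
      rw [hf, ← S.rA_cf]
      exact hrEw l _ hbase
    | zero => simp
    | add x y _ _ hx hy => simp only [map_add, LinearMap.add_apply, mul_add, hx, hy, add_mul]
    | smul r x _ hx =>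
      simp only [map_smul, LinearMap.smul_apply, mul_smul_comm, hx, smul_mul_assoc]
  | scal r => rw [AlgEquiv.commutes, Algebra.commutes]
  | add x y hx hy => rw [mul_add, hx, hy, map_add, add_mul]
  | mul x y hx hy => rw [← mul_assoc, hx, mul_assoc, hy, map_mul, mul_assoc]

lemma normal_plus (S : SU q a d E F K Δ ε ρ ι cf lA rA act) (H : QForm q a d Q)
    (hv : ∀ c, ∃ μ, ∃ v ∈ wtSp q d K (ρ c) μ, v ≠ 0 ∧ ∀ i, ρ c (E i) v = 0)
    {κ₁ θ₁ : Fin n → ℤ} {c : A} (hc : c ∈ Wt act κ₁ θ₁) (hF : ∀ i, rA (F i) c = 0)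
    (hF' : ∀ i, lA (F i) c = 0) {g} (hg : ∀ κ θ, ch2 g κ θ = Q κ₁ κ * (Q θ₁ θ)⁻¹) (b : A) :
    c * b = act g⁻¹ b * c := by
  have hg' : ∀ b, act g (act g⁻¹ b) = b := by
    intro b
    rw [← AlgEquiv.mul_apply, ← map_mul, mul_inv_cancel, map_one, AlgEquiv.one_apply]
  suffices hmain : ∀ b, c * act g b = b * c by
    have := hmain (act g⁻¹ b)
    rwa [hg'] at this
  intro b
  have hlF : ∀ i b, c * act g b = b * c → c * act g (lA (F i) b) = lA (F i) b * c := by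
    intro i b h
    have h1 := congrArg (lA (F i)) h
    rw [S.lF_mul, S.lF_mul, hF', zero_mul, zero_add, mul_zero, add_zero, S.lKi_Wt hc,
      mul_smul_comm] at h1
    rw [S.act_lF, mul_smul_comm, h1, smul_smul, hg, H.zero, one_mul, H.neg, inv_inv,
      H.al, zpow_neg, mul_inv_cancel₀ (zpow_ne_zero _ (zpow_ne_zero _ S.hq0)), one_smul]
  have hlFw : ∀ l b, c * act g b = b * c → c * act g (lA (word F l) b) = lA (word F l) b * c := by
    intro l
    induction l with
    | nil => intro b h; simpa [S.lA_one] using h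
    | cons i l ih =>
      intro b h
      rw [word_cons, S.lA_mul, Module.End.mul_apply]
      exact hlF i _ (ih b h)
  induction b using S.homog_ind with
  | mem e κ θ ξ w h1 h2 =>
    clear h2
    obtain ⟨μ, v, h3, h4, h5⟩ := hv e
    have := S.hfd e
    have hw : w ∈ Submodule.span ℂ {x : V e | ∃ l, x = ρ e (word F l) v} := by
      rw [hw_span S.hq0 S.hrel S.hgen (S.hsimple e) h3 h4 h5]; trivial
    obtain ⟨f, hf⟩ := S.exists_cfL e
    rw [← hf]
    have hbase : c * act g (cf e ξ v) = cf e ξ v * c := by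
      have hw := S.cf_Wt h1 h3
      have hbc := S.base_comm H hw (by intro i; rw [S.lA_cf, h5, ← hf]; simp) hc hF
      rw [hbc, hw g, hg, mul_smul_comm, H.symm κ, H.symm μ]
    induction hw using Submodule.span_induction with
    | mem ξ hξ =>
      obtain ⟨l, rfl⟩ := hξ
      rw [hf, ← S.lA_cf]
      exact hlFw l _ hbase
    | zero => simp
    | add x y _ _ hx hy => simp only [map_add, mul_add, hx, hy, add_mul]
    | smul r x _ hx =>
      simp only [map_smul, mul_smul_comm, hx, smul_mul_assoc]
  | scal r => rw [AlgEquiv.commutes, Algebra.commutes]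
  | add x y hx hy => rw [map_add, mul_add, hx, hy, add_mul]
  | mul x y hx hy => rw [map_mul, ← mul_assoc, hx, mul_assoc, hy, mul_assoc]

end SU

end HSimple

namespace HSimple

open scoped TensorProduct

variable {q : ℂ} {n : ℕ} {a : Fin n → Fin n → ℤ} {d : Fin n → ℕ}
    {U : Type} [Ring U] [Algebra ℂ U] {E F : Fin n → U} {K : Fin n → Uˣ}
    {Δ : U →ₐ[ℂ] U ⊗[ℂ] U} {ε : U →ₐ[ℂ] ℂ}
    {V : (Fin n → ℕ) → Type} [∀ c, AddCommGroup (V c)] [∀ c, Module ℂ (V c)]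
    {ρ : ∀ c, U →ₐ[ℂ] Module.End ℂ (V c)}
    {A : Type} [Ring A] [Algebra ℂ A]
    {ι : A →ₗ[ℂ] (U →ₗ[ℂ] ℂ)}
    {cf : ∀ c : Fin n → ℕ, Module.Dual ℂ (V c) → V c → A}
    {lA rA : U →ₗ[ℂ] Module.End ℂ A}
    {act : (Fin n → ℂˣ) × (Fin n → ℂˣ) →* (A ≃ₐ[ℂ] A)}


/-- integral weight attached to natural coordinates -/
def cw {n : ℕ} (c : Fin n → ℕ) : Fin n → ℤ := fun i => (c i : ℤ)

lemma cw_single {n : ℕ} (j : Fin n) : cw (Pi.single j 1) = Pi.single j 1 := by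
  funext k
  by_cases h : k = j
  · subst h; simp [cw]
  · simp [cw, h]

variable {W : Type} [Group W] {r : W → ((Fin n → ℤ) ≃+ (Fin n → ℤ))} {s : Fin n → W}
  {ht : (Fin n → ℤ) →+ ℤ} {Q : (Fin n → ℤ) → (Fin n → ℤ) → ℂˣ}

/-- Weyl group data. -/
structure WD (q : ℂ) {n : ℕ} (a : Fin n → Fin n → ℤ) (d : Fin n → ℕ)
    {U : Type} [Ring U] [Algebra ℂ U] (E : Fin n → U) (K : Fin n → Uˣ)
    {V : (Fin n → ℕ) → Type} [∀ c, AddCommGroup (V c)] [∀ c, Module ℂ (V c)]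
    (ρ : ∀ c, U →ₐ[ℂ] Module.End ℂ (V c))
    {W : Type} [Group W] (r : W → ((Fin n → ℤ) ≃+ (Fin n → ℤ))) (s : Fin n → W)
    (ht : (Fin n → ℤ) →+ ℤ) : Prop where
  hht : ∀ k, 0 < ht (al a k)
  hr1 : ∀ μ, r 1 μ = μ
  hrm : ∀ w w' μ, r (w * w') μ = r w (r w' μ)
  hsgen : Subgroup.closure (Set.range s) = ⊤
  hs : ∀ i (μ : Fin n → ℤ), r (s i) μ = μ - μ i • al a i
  hhw : ∀ c, ∃ v : V c, v ≠ 0 ∧ v ∈ wtSp q d K (ρ c) (cw c) ∧ ∀ i, ρ c (E i) v = 0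

namespace SU

lemma hle (S : SU q a d E F K Δ ε ρ ι cf lA rA act) (D : WD q a d E K ρ r s ht) (c ν)
    (h : wtSp q d K (ρ c) ν ≠ ⊥) : ∃ l, ν = cw c - lwt a l := by
  obtain ⟨v, h0, h1, h2⟩ := D.hhw c
  exact wt_le S.hq S.hd_pos S.hrel h1 (hw_span S.hq0 S.hrel S.hgen (S.hsimple c) h1 h0 h2) h

lemma hwt (S : SU q a d E F K Δ ε ρ ι cf lA rA act) (D : WD q a d E K ρ r s ht) (c w) :
    ∃ l, r w (cw c) = cw c - lwt a l := by
  have := S.hfd c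
  refine S.hle D c _ (wt_W S.hq S.ha_diag S.hd_pos S.hrel D.hr1 D.hrm D.hsgen D.hs w _ ?_)
  obtain ⟨v, h0, h1, h2⟩ := D.hhw c
  exact fun h => h0 (by rwa [h, Submodule.mem_bot] at h1)

lemma root_pos' (S : SU q a d E F K Δ ε ρ ι cf lA rA act) (D : WD q a d E K ρ r s ht) (c w i) :
    (0 < r w (cw c) i → 0 < ht (r w⁻¹ (al a i))) ∧ (r w (cw c) i < 0 → ht (r w⁻¹ (al a i)) < 0) :=
  root_pos S.ha_diag ht D.hht D.hr1 D.hrm D.hs (S.hwt D c) w i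

lemma exists_ne (D : WD q a d E K ρ r s ht) (w i) : ∃ j, r w (cw (Pi.single j 1)) i ≠ 0 := by
  by_contra! h
  have h1 : ∀ μ, r w μ i = 0 := by
    intro μ
    have h2 : μ = ∑ j, μ j • (Pi.single j 1 : Fin n → ℤ) := by
      conv_lhs => rw [← Finset.univ_sum_single μ]
      refine Finset.sum_congr rfl fun j _ => ?_
      rw [← Pi.single_smul]; simp
    rw [h2, map_sum, Finset.sum_apply]
    refine Finset.sum_eq_zero fun j _ => ?_
    have := h j
    rw [cw_single] at this
    rw [map_zsmul, Pi.smul_apply, this, smul_zero]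
  have := h1 (r w⁻¹ (Pi.single i 1))
  rw [r_inv' D.hr1 D.hrm] at this
  simp at this

lemma sign (S : SU q a d E F K Δ ε ρ ι cf lA rA act) (D : WD q a d E K ρ r s ht) (w i) :
    (0 < ht (r w⁻¹ (al a i)) ∧ ∀ c, 0 ≤ r w (cw c) i) ∨
    (ht (r w⁻¹ (al a i)) < 0 ∧ ∀ c, r w (cw c) i ≤ 0) := by
  obtain ⟨j, hj⟩ := exists_ne D w i
  rcases lt_or_gt_of_ne hj with h | h
  · have h1 := (S.root_pos' D _ w i).2 h
    refine Or.inr ⟨h1, fun c => ?_⟩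
    by_contra! h2
    have := (S.root_pos' D _ w i).1 h2
    omega
  · have h1 := (S.root_pos' D _ w i).1 h
    refine Or.inl ⟨h1, fun c => ?_⟩
    by_contra! h2
    have := (S.root_pos' D _ w i).2 h2
    omega

lemma ext' (S : SU q a d E F K Δ ε ρ ι cf lA rA act) (D : WD q a d E K ρ r s ht) (c w i) :
    (0 < ht (r w⁻¹ (al a i)) → wtSp q d K (ρ c) (r w (cw c) + al a i) = ⊥) ∧
    (ht (r w⁻¹ (al a i)) < 0 → wtSp q d K (ρ c) (r w (cw c) - al a i) = ⊥) := by
  have := S.hfd c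
  exact ext_plus S.hq S.ha_diag S.hd_pos S.hrel ht D.hht D.hr1 D.hrm D.hsgen D.hs (S.hle D c) w i

lemma dF_zero (S : SU q a d E F K Δ ε ρ ι cf lA rA act) (D : WD q a d E K ρ r s ht) {c w i}
    {ξ : Module.Dual ℂ (V c)} (hξ : inDualWt q d K (ρ c) (-(r w (cw c))) ξ)
    (h : 0 < ht (r w⁻¹ (al a i))) : ξ ∘ₗ ρ c (F i) = 0 :=
  dual_zero (S.hwtsum c) (dual_comp_F S.hq0 S.hrel hξ i) ((S.ext' D c w i).1 h)

lemma dE_zero (S : SU q a d E F K Δ ε ρ ι cf lA rA act) (D : WD q a d E K ρ r s ht) {c w i}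
    {ξ : Module.Dual ℂ (V c)} (hξ : inDualWt q d K (ρ c) (-(r w (cw c))) ξ)
    (h : ht (r w⁻¹ (al a i)) < 0) : ξ ∘ₗ ρ c (E i) = 0 :=
  dual_zero (S.hwtsum c) (dual_comp_E S.hq0 S.hrel hξ i) ((S.ext' D c w i).2 h)

lemma vE_zero (S : SU q a d E F K Δ ε ρ ι cf lA rA act) (D : WD q a d E K ρ r s ht) {c w i}
    {v : V c} (hv : v ∈ wtSp q d K (ρ c) (r w (cw c)))
    (h : 0 < ht (r w⁻¹ (al a i))) : ρ c (E i) v = 0 := by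
  have := wtSp_E S.hq0 S.hrel hv i
  rwa [(S.ext' D c w i).1 h, Submodule.mem_bot] at this

lemma vF_zero (S : SU q a d E F K Δ ε ρ ι cf lA rA act) (D : WD q a d E K ρ r s ht) {c w i}
    {v : V c} (hv : v ∈ wtSp q d K (ρ c) (r w (cw c)))
    (h : ht (r w⁻¹ (al a i)) < 0) : ρ c (F i) v = 0 := by
  have := wtSp_F S.hq0 S.hrel hv i
  rwa [(S.ext' D c w i).2 h, Submodule.mem_bot] at this

lemma ht_one (D : WD q a d E K ρ r s ht) (i) : 0 < ht (r 1⁻¹ (al a i)) := by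
  rw [inv_one, D.hr1]; exact D.hht i

lemma ht_w0 (S : SU q a d E F K Δ ε ρ ι cf lA rA act) (D : WD q a d E K ρ r s ht) {w₀ : W}
    (hw₀ : ∀ μ : Fin n → ℤ, (∀ i, 0 ≤ μ i) → ∀ i, r w₀ μ i ≤ 0) (i) :
    ht (r w₀⁻¹ (al a i)) < 0 := by
  obtain ⟨j, hj⟩ := exists_ne D w₀ i
  refine (S.root_pos' D _ w₀ i).2 (lt_of_le_of_ne (hw₀ _ (fun i => ?_) i) hj)
  simp [cw]

lemma cf_zero_left (S : SU q a d E F K Δ ε ρ ι cf lA rA act) (c v) : cf c 0 v = 0 := by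
  obtain ⟨f, hf⟩ := S.exists_cfL c
  rw [← hf]; simp

lemma cf_zero_right (S : SU q a d E F K Δ ε ρ ι cf lA rA act) (c ξ) : cf c ξ 0 = 0 := by
  obtain ⟨f, hf⟩ := S.exists_cfL c
  rw [← hf]; simp

/-- highest dual vectors -/
lemma hη (S : SU q a d E F K Δ ε ρ ι cf lA rA act) (D : WD q a d E K ρ r s ht) :
    ∀ c, ∃ κ, ∃ η : Module.Dual ℂ (V c), inDualWt q d K (ρ c) (-κ) η ∧ η ≠ 0 ∧
      ∀ i, η ∘ₗ ρ c (F i) = 0 := by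
  intro c
  obtain ⟨v, h0, h1, h2⟩ := D.hhw c
  obtain ⟨ξ, h3, h4⟩ := exists_dual S.hq S.hd_pos _ v h1 h0
  refine ⟨cw c, ξ, h3, fun h => h4 (by rw [h]; rfl), fun i => ?_⟩
  exact S.dF_zero D (w := 1) (by rwa [D.hr1]) (ht_one D i)

lemma hv (D : WD q a d E K ρ r s ht) :
    ∀ c, ∃ μ, ∃ v ∈ wtSp q d K (ρ c) μ, v ≠ 0 ∧ ∀ i, ρ c (E i) v = 0 := by
  intro c
  obtain ⟨v, h0, h1, h2⟩ := D.hhw c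
  exact ⟨_, v, h1, h0, h2⟩

/-- commutation rule of the elements `c⁻` -/
lemma cminus (S : SU q a d E F K Δ ε ρ ι cf lA rA act) (D : WD q a d E K ρ r s ht)
    (H : QForm q a d Q) {w₀ : W}
    (hw₀ : ∀ μ : Fin n → ℤ, (∀ i, 0 ≤ μ i) → ∀ i, r w₀ μ i ≤ 0) {e}
    {ξ : Module.Dual ℂ (V e)} (hξ : inDualWt q d K (ρ e) (-(r w₀ (cw e))) ξ)
    {v : V e} (hv : v ∈ wtSp q d K (ρ e) (cw e)) :
    ∃ g, (∀ κ θ, ch2 g κ θ = Q (r w₀ (cw e)) κ * (Q (cw e) θ)⁻¹) ∧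
      ∀ b, cf e ξ v * b = act g b * cf e ξ v := by
  obtain ⟨g, hg⟩ := H.exists_g2 (r w₀ (cw e)) (cw e)
  refine ⟨g, hg, S.normal_minus H (S.hη D) (S.cf_Wt hξ hv) (fun i => ?_) (fun i => ?_) hg⟩
  · rw [S.lA_cf, S.vE_zero D (w := 1) (by rwa [D.hr1]) (ht_one D i), S.cf_zero_right]
  · rw [S.rA_cf, S.dE_zero D hξ (S.ht_w0 D hw₀ i), S.cf_zero_left]

/-- commutation rule of the elements `c⁺` -/
lemma cplus (S : SU q a d E F K Δ ε ρ ι cf lA rA act) (D : WD q a d E K ρ r s ht)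
    (H : QForm q a d Q) {w₀ : W}
    (hw₀ : ∀ μ : Fin n → ℤ, (∀ i, 0 ≤ μ i) → ∀ i, r w₀ μ i ≤ 0) {e}
    {ξ : Module.Dual ℂ (V e)} (hξ : inDualWt q d K (ρ e) (-(cw e)) ξ)
    {v : V e} (hv : v ∈ wtSp q d K (ρ e) (r w₀ (cw e))) :
    ∃ g, (∀ κ θ, ch2 g κ θ = (Q (cw e) κ)⁻¹ * Q (r w₀ (cw e)) θ) ∧
      ∀ b, cf e ξ v * b = act g b * cf e ξ v := by
  obtain ⟨g, hg⟩ := H.exists_g2 (cw e) (r w₀ (cw e))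
  refine ⟨g⁻¹, fun κ θ => ?_, S.normal_plus H (SU.hv D) (S.cf_Wt hξ hv) (fun i => ?_) (fun i => ?_) hg⟩
  · have h1 : ch2 g⁻¹ κ θ = (ch2 g κ θ)⁻¹ := by
      rw [ch2, ch2, Prod.fst_inv, Prod.snd_inv, ch_inv, ch_inv, mul_inv]
    rw [h1, hg, mul_inv, inv_inv]
  · rw [S.rA_cf, S.dF_zero D (w := 1) (by rwa [D.hr1]) (ht_one D i), S.cf_zero_left]
  · rw [S.lA_cf, S.vF_zero D hv (S.ht_w0 D hw₀ i), S.cf_zero_right]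

end SU

/-- Submodule closed under two-sided multiplication and the torus. -/
structure GoodJ (act : (Fin n → ℂˣ) × (Fin n → ℂˣ) →* (A ≃ₐ[ℂ] A)) (J : Submodule ℂ A) : Prop where
  hl : ∀ x b, b ∈ J → x * b ∈ J
  hr : ∀ x b, b ∈ J → b * x ∈ J
  hact : ∀ g b, b ∈ J → act g b ∈ J

lemma GoodJ.surj {J : Submodule ℂ A} (G : GoodJ act J) (g) (b) (hb : b ∈ J) :
    ∃ b' ∈ J, act g b' = b := by
  refine ⟨act g⁻¹ b, G.hact _ _ hb, ?_⟩
  rw [← AlgEquiv.mul_apply, ← map_mul, mul_inv_cancel, map_one, AlgEquiv.one_apply]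

lemma GoodJ.stabF {J : Submodule ℂ A} (G : GoodJ act J) (D k : Module.End ℂ A)
    (hD : ∀ b b', D (b * b') = D b * k b' + b * D b') (hk : ∃ g, ∀ b, k b = act g b)
    (c : A) (hcan : ∀ b, b * c ∈ J → b ∈ J) (g) (hc : ∀ b, c * b = act g b * c) (s s' : ℂ)
    (hkc : k c = s • c) (hτ : ∀ b, act g (D b) = s' • D (act g b)) (hne : s ≠ s') :
    ∀ b ∈ J, D b ∈ J := by
  intro b hb
  obtain ⟨b, hb', rfl⟩ := G.surj g b hb
  apply hcan
  have h1 := congrArg D (hc b)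
  rw [hD, hD, hkc, hc (D b), hτ, smul_mul_assoc, mul_smul_comm] at h1
  have h2 : (s - s') • (D (act g b) * c) = D c * k b - act g b * D c := by
    rw [sub_smul, sub_eq_sub_iff_add_eq_add, ← h1, add_comm]
  have h3 : (s - s') • (D (act g b) * c) ∈ J := by
    rw [h2]
    obtain ⟨g', hg'⟩ := hk
    rw [hg']
    exact J.sub_mem (G.hl _ _ (G.hact _ _ hb')) (G.hr _ _ (G.hact _ _ hb'))
  exact (J.smul_mem_iff (sub_ne_zero.2 hne)).1 h3

lemma GoodJ.stabE {J : Submodule ℂ A} (G : GoodJ act J) (D k : Module.End ℂ A)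
    (hD : ∀ b b', D (b * b') = D b * b' + k b * D b') (hk : ∃ g, ∀ b, k b = act g b)
    (c : A) (hcan : ∀ b, b * c ∈ J → b ∈ J) (g) (hc : ∀ b, c * b = act g b * c) (s s' : ℂ)
    (hkc : k c = s • c) (hτ : ∀ b, act g (D b) = s' • D (act g b)) (hne : s * s' ≠ 1) :
    ∀ b ∈ J, D b ∈ J := by
  intro b hb
  obtain ⟨b, hb', rfl⟩ := G.surj g b hb
  apply hcan
  have h1 := congrArg D (hc b)
  rw [hD, hD, hkc, smul_mul_assoc, hc (D b), hτ, smul_mul_assoc, smul_smul] at h1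
  have h2 : (s * s' - 1) • (D (act g b) * c) = k (act g b) * D c - D c * b := by
    rw [sub_smul, sub_eq_sub_iff_add_eq_add, add_comm, h1, one_smul, add_comm]
  have h3 : (s * s' - 1) • (D (act g b) * c) ∈ J := by
    rw [h2]
    obtain ⟨g', hg'⟩ := hk
    rw [hg']
    exact J.sub_mem (G.hr _ _ (G.hact _ _ (G.hact _ _ hb'))) (G.hl _ _ hb')
  exact (J.smul_mem_iff (sub_ne_zero.2 hne)).1 h3

end HSimple

namespace HSimple

open scoped TensorProduct

variable {q : ℂ} {n : ℕ} {a : Fin n → Fin n → ℤ} {d : Fin n → ℕ}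
    {U : Type} [Ring U] [Algebra ℂ U] {E F : Fin n → U} {K : Fin n → Uˣ}
    {Δ : U →ₐ[ℂ] U ⊗[ℂ] U} {ε : U →ₐ[ℂ] ℂ}
    {V : (Fin n → ℕ) → Type} [∀ c, AddCommGroup (V c)] [∀ c, Module ℂ (V c)]
    {ρ : ∀ c, U →ₐ[ℂ] Module.End ℂ (V c)}
    {A : Type} [Ring A] [Algebra ℂ A]
    {ι : A →ₗ[ℂ] (U →ₗ[ℂ] ℂ)}
    {cf : ∀ c : Fin n → ℕ, Module.Dual ℂ (V c) → V c → A}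
    {lA rA : U →ₗ[ℂ] Module.End ℂ A}
    {act : (Fin n → ℂˣ) × (Fin n → ℂˣ) →* (A ≃ₐ[ℂ] A)}


variable {W : Type} [Group W] {r : W → ((Fin n → ℤ) ≃+ (Fin n → ℤ))} {s : Fin n → W}
  {ht : (Fin n → ℤ) →+ ℤ} {Q : (Fin n → ℤ) → (Fin n → ℤ) → ℂˣ}

namespace SU

lemma stab (S : SU q a d E F K Δ ε ρ ι cf lA rA act) (D : WD q a d E K ρ r s ht)
    (H : QForm q a d Q) {w₀ : W}
    (hw₀ : ∀ μ : Fin n → ℤ, (∀ i, 0 ≤ μ i) → ∀ i, r w₀ μ i ≤ 0)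
    (ξp ξm : ∀ i : Fin n, Module.Dual ℂ (V (Pi.single i 1)))
    (vp vm : ∀ i : Fin n, V (Pi.single i 1))
    (hξp : ∀ i, inDualWt q d K (ρ (Pi.single i 1)) (-(cw (Pi.single i 1))) (ξp i))
    (hvp : ∀ i, vp i ∈ wtSp q d K (ρ (Pi.single i 1)) (r w₀ (cw (Pi.single i 1))))
    (hξm : ∀ i, inDualWt q d K (ρ (Pi.single i 1)) (-(r w₀ (cw (Pi.single i 1)))) (ξm i))
    (hvm : ∀ i, vm i ∈ wtSp q d K (ρ (Pi.single i 1)) (cw (Pi.single i 1)))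
    {J : Submodule ℂ A} (G : GoodJ act J)
    (hcp : ∀ j b, b * cf (Pi.single j 1) (ξp j) (vp j) ∈ J → b ∈ J)
    (hcm : ∀ j b, b * cf (Pi.single j 1) (ξm j) (vm j) ∈ J → b ∈ J) (i : Fin n) :
    (∀ b ∈ J, lA (E i) b ∈ J) ∧ (∀ b ∈ J, rA (E i) b ∈ J) ∧ (∀ b ∈ J, rA (F i) b ∈ J) := by
  obtain ⟨j, hj⟩ := exists_ne D w₀ i
  have hi : cw (Pi.single i 1) i = 1 := by rw [cw_single]; simp
  obtain ⟨z, hz⟩ := S.exists_z i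
  have ht0 : q ^ (d i : ℤ) ≠ 0 := zpow_ne_zero _ S.hq0
  refine ⟨?_, ?_, ?_⟩
  · obtain ⟨g, hg, hc⟩ := S.cplus D H hw₀ (hξp j) (hvp j)
    refine G.stabE (lA (E i)) (lA (K i : U)) (S.lE_mul i) ⟨_, S.lK_act i z hz⟩ _ (hcp j) g hc _ _
      (S.lK_Wt (S.cf_Wt (hξp j) (hvp j)) i) (S.act_lE i g) ?_
    rw [hg, H.zero, inv_one, one_mul, H.al, ← zpow_add₀ ht0]
    intro h
    have := t_inj S.hq S.hd_pos i _ 0 (by rw [h, zpow_zero])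
    omega
  · obtain ⟨g, hg, hc⟩ := S.cplus D H hw₀ (hξp i) (hvp i)
    refine G.stabE (rA (E i)) (rA (K i : U)) (S.rE_mul i) ⟨_, S.rK_act i z hz⟩ _ (hcp i) g hc _ _
      (S.rK_Wt (S.cf_Wt (hξp i) (hvp i)) i) (S.act_rE i g) ?_
    rw [hg, H.zero, H.neg, inv_inv, mul_one, H.al, ← zpow_add₀ ht0]
    intro h
    have := t_inj S.hq S.hd_pos i _ 0 (by rw [h, zpow_zero])
    omega
  · obtain ⟨g, hg, hc⟩ := S.cminus D H hw₀ (hξm j) (hvm j)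
    refine G.stabF (rA (F i)) (rA (((K i)⁻¹ : Uˣ) : U)) (S.rF_mul i) (S.rKi_act i) _ (hcm j) g hc _ _
      (S.rKi_Wt (S.cf_Wt (hξm j) (hvm j)) i) (S.act_rF i g) ?_
    rw [hg, H.zero, inv_one, mul_one, H.al]
    intro h
    have := t_inj S.hq S.hd_pos i _ _ h
    omega

lemma exists_homog (S : SU q a d E F K Δ ε ρ ι cf lA rA act)
    {J : Submodule ℂ A} (G : GoodJ act J) (x : A) (hx : x ∈ J) (hx0 : x ≠ 0) :
    ∃ b ∈ J, b ≠ 0 ∧ ∃ κ θ, b ∈ Wt act κ θ := by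
  classical
  have h1 : x ∈ ⨆ p : (Fin n → ℤ) × (Fin n → ℤ), Wt act p.1 p.2 := by rw [S.Wt_top]; trivial
  rw [Submodule.mem_iSup_iff_exists_finsupp] at h1
  obtain ⟨y, hy, hsum⟩ := h1
  have h2 := comp_mem (fun p : (Fin n → ℤ) × (Fin n → ℤ) => Wt act p.1 p.2)
    (fun g => (act g).toLinearMap) (fun p g => (ch2 g p.1 p.2 : ℂ))
    (fun p g x hx => mem_Wt.1 hx g) ?_ J (fun g x hx => G.hact g x hx) _ y.support y rfl hy
    (by rw [Finsupp.sum] at hsum; rwa [hsum])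
  · by_contra! h3
    apply hx0
    rw [← hsum, Finsupp.sum]
    refine Finset.sum_eq_zero fun p hp => ?_
    by_contra h4
    exact h3 _ (h2 p hp) h4 p.1 p.2 (hy p)
  · intro p p' hne
    by_contra! h
    apply hne
    have h' : ∀ g, ch2 g p.1 p.2 = ch2 g p'.1 p'.2 := fun g => Units.ext (h g)
    have inj : ∀ m m' : ℤ, (Units.mk0 q S.hq0) ^ m = (Units.mk0 q S.hq0) ^ m' → m = m' := by
      intro m m' hm
      apply q_zpow_inj S.hq
      have := congrArg Units.val hm
      simpa using this
    ext i
    · have := h' (Function.update 1 i (Units.mk0 q S.hq0), 1)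
      simp only [ch2, ch_update, ch_one, mul_one] at this
      have := inj _ _ this
      simpa using this
    · have := h' (1, Function.update 1 i (Units.mk0 q S.hq0))
      simp only [ch2, ch_update, ch_one, one_mul] at this
      exact inj _ _ this

lemma exists_ht_g (S : SU q a d E F K Δ ε ρ ι cf lA rA act) (ht : (Fin n → ℤ) →+ ℤ) :
    ∃ g : (Fin n → ℂˣ) × (Fin n → ℂˣ), ∀ κ θ, (ch2 g κ θ : ℂ) = q ^ (ht κ + ht θ) := by
  have h1 : ∃ g : Fin n → ℂˣ, ∀ y, ch g y = (Units.mk0 q S.hq0) ^ ht y := by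
    refine ⟨fun i => (Units.mk0 q S.hq0) ^ ht (Pi.single i 1), fun y => ?_⟩
    have h2 : ht y = ∑ i, ht (Pi.single i 1) * y i := by
      conv_lhs => rw [← Finset.univ_sum_single y]
      rw [map_sum]
      refine Finset.sum_congr rfl fun i _ => ?_
      have : (Pi.single i (y i) : Fin n → ℤ) = y i • Pi.single i 1 := by
        rw [← Pi.single_smul]; simp
      rw [this, map_zsmul, smul_eq_mul, mul_comm]
    have h3 : ∀ (t : Finset (Fin n)) (f : Fin n → ℤ),
        (Units.mk0 q S.hq0) ^ (∑ i ∈ t, f i) = ∏ i ∈ t, (Units.mk0 q S.hq0) ^ f i := by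
      intro t f
      classical
      induction t using Finset.induction_on with
      | empty => simp
      | insert x t hx ih => rw [Finset.sum_insert hx, Finset.prod_insert hx, zpow_add, ih]
    rw [h2, ch, h3]
    simp only [zpow_mul]
  obtain ⟨g, hg⟩ := h1
  refine ⟨(g⁻¹, g), fun κ θ => ?_⟩
  rw [ch2, ch_inv, ch_neg, inv_inv, hg, hg, ← zpow_add]
  simp

lemma exists_top (S : SU q a d E F K Δ ε ρ ι cf lA rA act) (hht : ∀ k, 0 < ht (al a k))
    {J : Submodule ℂ A} (G : GoodJ act J) (x : A) (hx : x ∈ J) (hx0 : x ≠ 0)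
    (hE : ∀ i, ∀ b ∈ J, lA (E i) b ∈ J) (hF : ∀ i, ∀ b ∈ J, rA (F i) b ∈ J) :
    ∃ b ∈ J, b ≠ 0 ∧ (∃ κ θ, b ∈ Wt act κ θ) ∧ (∀ i, lA (E i) b = 0) ∧ ∀ i, rA (F i) b = 0 := by
  obtain ⟨b, hb, hb0, κ, θ, hw⟩ := S.exists_homog G x hx hx0
  obtain ⟨Y, hYfg, hbY, hYl, hYr⟩ := S.fin_stable b
  have : FiniteDimensional ℂ Y := Module.Finite.iff_fg.2 hYfg
  obtain ⟨g, hg⟩ := S.exists_ht_g ht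
  have hfin := eig_finite q (fun m m' => q_zpow_inj S.hq (m := m) (m' := m')) (act g).toLinearMap Y
  set Z : Set ℤ := {m | ∃ x ∈ J, x ∈ Y ∧ x ≠ 0 ∧ ∃ κ θ, x ∈ Wt act κ θ ∧ m = ht κ + ht θ} with hZ
  have hZf : Z.Finite := by
    refine hfin.subset ?_
    rintro m ⟨x, _, h2, h3, κ, θ, h4, rfl⟩
    exact ⟨x, h2, h3, by rw [← hg]; exact mem_Wt.1 h4 g⟩
  have hZn : Z.Nonempty := ⟨_, b, hb, hbY, hb0, κ, θ, hw, rfl⟩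
  obtain ⟨m, ⟨x, h1, h2, h3, κ, θ, h4, rfl⟩, hmax⟩ := hZf.exists_maximal hZn
  refine ⟨x, h1, h3, ⟨κ, θ, h4⟩, fun i => ?_, fun i => ?_⟩
  · by_contra h
    have h5 : ht κ + ht (θ + al a i) ∈ Z :=
      ⟨_, hE i _ h1, hYl _ _ h2, h, _, _, S.lE_Wt h4 i, rfl⟩
    have := hmax h5
    rw [map_add] at this
    have := hht i
    simp at *
    omega
  · by_contra h
    have h5 : ht (κ + al a i) + ht θ ∈ Z :=
      ⟨_, hF i _ h1, hYr _ _ h2, h, _, _, S.rF_Wt h4 i, rfl⟩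
    have := hmax h5
    rw [map_add] at this
    have := hht i
    simp at *
    omega

lemma lEw_kill (S : SU q a d E F K Δ ε ρ ι cf lA rA act) {b : A} (hE : ∀ i, lA (E i) b = 0)
    (l) (hl : l ≠ []) : lA (word E l) b = 0 := by
  induction l with
  | nil => exact absurd rfl hl
  | cons i l ih =>
    rw [word_cons, S.lA_mul, Module.End.mul_apply]
    by_cases h : l = []
    · subst h; simp [S.lA_one, hE]
    · rw [ih h, map_zero]

lemma rFw_kill (S : SU q a d E F K Δ ε ρ ι cf lA rA act) {b : A} (hF : ∀ i, rA (F i) b = 0)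
    (l) (hl : l ≠ []) : rA (word F l) b = 0 := by
  cases l with
  | nil => exact absurd rfl hl
  | cons i l => rw [word_cons, S.rA_mul, Module.End.mul_apply, hF, map_zero]

lemma KG_lA (S : SU q a d E F K Δ ε ρ ι cf lA rA act) (κ θ : Fin n → ℤ) {k : Uˣ} (hk : k ∈ KG K) :
    ∃ c : ℂ, c ≠ 0 ∧ ∀ b ∈ Wt act κ θ, lA (k : U) b = c • b := by
  induction hk using Subgroup.closure_induction with
  | mem k hk =>
    obtain ⟨j, rfl⟩ := hk
    exact ⟨_, zpow_ne_zero _ (zpow_ne_zero _ S.hq0), fun b hb => S.lK_Wt hb j⟩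
  | one => exact ⟨1, one_ne_zero, fun b _ => by simp [S.lA_one]⟩
  | mul k k' _ _ h h' =>
    obtain ⟨c, hc, h⟩ := h
    obtain ⟨c', hc', h'⟩ := h'
    refine ⟨c' * c, mul_ne_zero hc' hc, fun b hb => ?_⟩
    rw [Units.val_mul, S.lA_mul, Module.End.mul_apply, h' b hb, map_smul, h b hb, smul_smul]
  | inv k _ h =>
    obtain ⟨c, hc, h⟩ := h
    refine ⟨c⁻¹, inv_ne_zero hc, fun b hb => inv_eig (f := lA (k : U)) ?_ hc (h b hb)⟩
    rw [← S.lA_mul, Units.inv_mul, S.lA_one]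

lemma top_unique (S : SU q a d E F K Δ ε ρ ι cf lA rA act) {κ θ : Fin n → ℤ} {b p : A}
    (hb : b ∈ Wt act κ θ) (hp : p ∈ Wt act κ θ) (hbE : ∀ i, lA (E i) b = 0)
    (hbF : ∀ i, rA (F i) b = 0) (hpE : ∀ i, lA (E i) p = 0)
    (hpF : ∀ i, rA (F i) p = 0) (c : ℂ) (h : ι b 1 = c * ι p 1) : b = c • p := by
  apply S.hιinj
  refine tri_ext S.hq0 S.hrel S.hgen _ _ ?_
  intro l l' k hk
  rw [S.ev_tri, S.ev_tri, map_smul, map_smul, map_smul, LinearMap.smul_apply]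
  by_cases h1 : l = []
  · by_cases h2 : l' = []
    · subst h1 h2
      rw [word_nil, word_nil, S.lA_one, S.rA_one]
      obtain ⟨c', hc', hk'⟩ := S.KG_lA κ θ hk
      have e : ∀ x ∈ Wt act κ θ, ι x (k : U) = c' * ι x 1 := by
        intro x hx
        have := S.hlA (k : U) x 1
        rw [one_mul] at this
        rw [← this, hk' x hx]; simp
      simp only [Module.End.one_apply]
      rw [e b hb, e p hp, h]
      simp; ring
    · rw [S.lr_comm, S.lr_comm, S.lEw_kill hbE _ h2, S.lEw_kill hpE _ h2]; simp
  · rw [S.rFw_kill hbF _ h1, S.rFw_kill hpF _ h1]; simp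

lemma top_ne (S : SU q a d E F K Δ ε ρ ι cf lA rA act) {κ θ : Fin n → ℤ} {b : A}
    (hb : b ∈ Wt act κ θ) (hbE : ∀ i, lA (E i) b = 0)
    (hbF : ∀ i, rA (F i) b = 0) (hb0 : b ≠ 0) : ι b 1 ≠ 0 := by
  intro h
  apply hb0
  rw [S.top_unique hb (Submodule.zero_mem _) hbE hbF (by simp) (by simp) 0 (by simp [h]), zero_smul]

lemma top_dom (S : SU q a d E F K Δ ε ρ ι cf lA rA act) {κ θ : Fin n → ℤ} {b : A}
    (hb : b ∈ Wt act κ θ) (hbE : ∀ i, lA (E i) b = 0) (hb0 : b ≠ 0) (i) : 0 ≤ θ i := by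
  obtain ⟨Y, hYfg, hbY, hYl, hYr⟩ := S.fin_stable b
  have : FiniteDimensional ℂ Y := Module.Finite.iff_fg.2 hYfg
  have ht0 : q ^ (d i : ℤ) ≠ 0 := zpow_ne_zero _ S.hq0
  refine sl2_dominant (e := lA (E i)) (f := lA (F i)) (k := lA (K i : U))
    (k' := lA (((K i)⁻¹ : Uˣ) : U)) ht0 (t_inj S.hq S.hd_pos i) ?_ ?_ ?_ (hbE i) (S.lK_Wt hb i)
    (S.lKi_Wt hb i) hb0 Y ?_
  · rw [← S.lA_mul, ← S.lA_mul, ← map_sub, U_EF S.hrel, map_smul, map_sub]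
  · rw [← S.lA_mul, ← S.lA_mul, U_KF S.ha_diag S.hrel, map_smul]
  · rw [← S.lA_mul, ← S.lA_mul, U_KiF S.hq0 S.ha_diag S.hrel, map_smul]
  · intro j
    induction j with
    | zero => exact hbY
    | succ j ih => rw [pow_succ', Module.End.mul_apply]; exact hYl _ _ ih

lemma right_ne (S : SU q a d E F K Δ ε ρ ι cf lA rA act) {κ θ : Fin n → ℤ} {b : A}
    (hb : b ∈ Wt act κ θ) (i) (hbF : rA (F i) b = 0) (hb0 : b ≠ 0) (m : ℕ) (hm : κ i = m) :
    (rA (E i) ^ m) b ≠ 0 := by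
  have ht0 : q ^ (d i : ℤ) ≠ 0 := zpow_ne_zero _ S.hq0
  refine sl2_ne (e := rA (F i)) (f := rA (E i)) (k := rA (K i : U))
    (k' := rA (((K i)⁻¹ : Uˣ) : U)) ht0 (t_inj S.hq S.hd_pos i) ?_ ?_ ?_ hbF (S.rK_Wt hb i)
    (S.rKi_Wt hb i) hb0 m (fun i hi => by omega)
  · rw [← S.rA_mul, ← S.rA_mul, ← map_sub, U_EF S.hrel, map_smul, map_sub]
  · rw [← S.rA_mul, ← S.rA_mul, U_KE S.ha_diag S.hrel, map_smul, smul_smul, ← zpow_add₀ ht0]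
    simp
  · rw [← S.rA_mul, ← S.rA_mul, U_KiE S.hq0 S.ha_diag S.hrel, map_smul, smul_smul, ← zpow_add₀ ht0]
    simp

lemma right_ne' (S : SU q a d E F K Δ ε ρ ι cf lA rA act) {κ θ : Fin n → ℤ} {b : A}
    (hb : b ∈ Wt act κ θ) (i) (hbE : rA (E i) b = 0) (hb0 : b ≠ 0) (m : ℕ) (hm : κ i = -m) :
    (rA (F i) ^ m) b ≠ 0 := by
  have ht0 : q ^ (d i : ℤ) ≠ 0 := zpow_ne_zero _ S.hq0
  refine sl2_ne (e := rA (E i)) (f := rA (F i)) (k := rA (((K i)⁻¹ : Uˣ) : U))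
    (k' := rA (K i : U)) (m := -κ i) ht0 (t_inj S.hq S.hd_pos i) ?_ ?_ ?_ hbE (S.rKi_Wt hb i)
    (by rw [neg_neg]; exact S.rK_Wt hb i) hb0 m (fun i hi => by omega)
  · rw [← S.rA_mul, ← S.rA_mul, ← map_sub, ← neg_sub, U_EF S.hrel, ← smul_neg, neg_sub, map_smul,
      map_sub]
  · rw [← S.rA_mul, ← S.rA_mul, U_KiF S.hq0 S.ha_diag S.hrel, map_smul, smul_smul, ← zpow_add₀ ht0]
    simp
  · rw [← S.rA_mul, ← S.rA_mul, U_KF S.ha_diag S.hrel, map_smul, smul_smul, ← zpow_add₀ ht0]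
    simp

end SU

end HSimple

namespace HSimple

open scoped TensorProduct

variable {q : ℂ} {n : ℕ} {a : Fin n → Fin n → ℤ} {d : Fin n → ℕ}
    {U : Type} [Ring U] [Algebra ℂ U] {E F : Fin n → U} {K : Fin n → Uˣ}
    {Δ : U →ₐ[ℂ] U ⊗[ℂ] U} {ε : U →ₐ[ℂ] ℂ}
    {V : (Fin n → ℕ) → Type} [∀ c, AddCommGroup (V c)] [∀ c, Module ℂ (V c)]
    {ρ : ∀ c, U →ₐ[ℂ] Module.End ℂ (V c)}
    {A : Type} [Ring A] [Algebra ℂ A]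
    {ι : A →ₗ[ℂ] (U →ₗ[ℂ] ℂ)}
    {cf : ∀ c : Fin n → ℕ, Module.Dual ℂ (V c) → V c → A}
    {lA rA : U →ₗ[ℂ] Module.End ℂ A}
    {act : (Fin n → ℂˣ) × (Fin n → ℂˣ) →* (A ≃ₐ[ℂ] A)}


section Der

variable {D k k' : Module.End ℂ A} {Hm : A → Prop}

lemma der_span (hD : ∀ b b', D (b * b') = D b * k' b' + k b * D b')
    (hDH : ∀ b, Hm b → Hm (D b)) (hk : ∀ b, Hm b → ∃ c : ℂ, k b = c • b)
    (hk' : ∀ b, Hm b → ∃ c : ℂ, k' b = c • b) {x y : A} (hx : Hm x) (hy : Hm y) (N : ℕ) :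
    (D ^ N) (x * y) ∈ Submodule.span ℂ {z | ∃ i j, i + j = N ∧ z = (D ^ i) x * (D ^ j) y} := by
  have hpow : ∀ z, Hm z → ∀ j : ℕ, Hm ((D ^ j) z) := by
    intro z hz j
    induction j with
    | zero => exact hz
    | succ j ih => rw [pow_succ', Module.End.mul_apply]; exact hDH _ ih
  induction N with
  | zero => exact Submodule.subset_span ⟨0, 0, rfl, rfl⟩
  | succ N ih =>
    rw [pow_succ', Module.End.mul_apply]
    revert ih
    generalize (D ^ N) (x * y) = w
    intro hw
    induction hw using Submodule.span_induction with
    | mem w hw =>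
      obtain ⟨i, j, rfl, rfl⟩ := hw
      obtain ⟨c, hc⟩ := hk _ (hpow x hx i)
      obtain ⟨c', hc'⟩ := hk' _ (hpow y hy j)
      rw [hD, hc, hc', mul_smul_comm, smul_mul_assoc]
      refine Submodule.add_mem _ (Submodule.smul_mem _ _ (Submodule.subset_span ?_))
        (Submodule.smul_mem _ _ (Submodule.subset_span ?_))
      · exact ⟨i + 1, j, by omega, by rw [pow_succ', Module.End.mul_apply]⟩
      · exact ⟨i, j + 1, by omega, by rw [pow_succ' D j, Module.End.mul_apply]⟩
    | zero => rw [map_zero]; exact Submodule.zero_mem _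
    | add x y _ _ h1 h2 => rw [map_add]; exact Submodule.add_mem _ h1 h2
    | smul c x _ h => rw [map_smul]; exact Submodule.smul_mem _ _ h

lemma pow_kill {x : A} {m : ℕ} (h : (D ^ (m + 1)) x = 0) {i : ℕ} (hi : m < i) : (D ^ i) x = 0 := by
  obtain ⟨j, rfl⟩ := Nat.exists_eq_add_of_lt hi
  rw [show m + j + 1 = j + (m + 1) by omega, pow_add, Module.End.mul_apply, h, map_zero]

lemma der_top (hD : ∀ b b', D (b * b') = D b * k' b' + k b * D b')
    (hDH : ∀ b, Hm b → Hm (D b)) (hk : ∀ b, Hm b → ∃ c : ℂ, k b = c • b)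
    (hk' : ∀ b, Hm b → ∃ c : ℂ, k' b = c • b) {x y : A} (hx : Hm x) (hy : Hm y) (m m' : ℕ)
    (h : (D ^ (m + 1)) x = 0) (h' : (D ^ (m' + 1)) y = 0) :
    (∃ c : ℂ, (D ^ (m + m')) (x * y) = c • ((D ^ m) x * (D ^ m') y)) ∧
      (D ^ (m + m' + 1)) (x * y) = 0 := by
  constructor
  · have h1 := der_span hD hDH hk hk' hx hy (m + m')
    have h2 : Submodule.span ℂ {z | ∃ i j, i + j = m + m' ∧ z = (D ^ i) x * (D ^ j) y} ≤
        Submodule.span ℂ {(D ^ m) x * (D ^ m') y} := by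
      rw [Submodule.span_le]
      rintro _ ⟨i, j, hij, rfl⟩
      rcases lt_trichotomy i m with h3 | h3 | h3
      · rw [pow_kill h' (show m' < j by omega), mul_zero]; exact Submodule.zero_mem _
      · obtain rfl : j = m' := by omega
        rw [h3]; exact Submodule.mem_span_singleton_self _
      · rw [pow_kill h h3, zero_mul]; exact Submodule.zero_mem _
    obtain ⟨c, hc⟩ := Submodule.mem_span_singleton.1 (h2 h1)
    exact ⟨c, hc.symm⟩
  · have h1 := der_span hD hDH hk hk' hx hy (m + m' + 1)
    have h2 : Submodule.span ℂ {z | ∃ i j, i + j = m + m' + 1 ∧ z = (D ^ i) x * (D ^ j) y} ≤ ⊥ := by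
      rw [Submodule.span_le]
      rintro _ ⟨i, j, hij, rfl⟩
      by_cases h3 : m < i
      · rw [pow_kill h h3, zero_mul]; exact Submodule.zero_mem _
      · rw [pow_kill h' (show m' < j by omega), mul_zero]; exact Submodule.zero_mem _
    simpa using h2 h1

lemma der_list (hD : ∀ b b', D (b * b') = D b * k' b' + k b * D b')
    (hDH : ∀ b, Hm b → Hm (D b)) (hk : ∀ b, Hm b → ∃ c : ℂ, k b = c • b)
    (hk' : ∀ b, Hm b → ∃ c : ℂ, k' b = c • b) (hm1 : Hm 1)
    (hmm : ∀ b b', Hm b → Hm b' → Hm (b * b')) (hD1 : D 1 = 0)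
    {P : Type} (x : P → A) (m : P → ℕ) (hx : ∀ j, Hm (x j)) (hxm : ∀ j, (D ^ (m j + 1)) (x j) = 0)
    (L : List P) : Hm (L.map x).prod ∧
    (∃ c : ℂ, (D ^ (L.map m).sum) (L.map x).prod = c • (L.map fun j => (D ^ (m j)) (x j)).prod) ∧
      (D ^ ((L.map m).sum + 1)) (L.map x).prod = 0 := by
  induction L with
  | nil => exact ⟨hm1, ⟨1, by simp⟩, by simpa using hD1⟩
  | cons j L ih =>
    obtain ⟨h1, ⟨c, hc⟩, h3⟩ := ih
    simp only [List.map_cons, List.prod_cons, List.sum_cons]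
    obtain ⟨⟨c', hc'⟩, h5⟩ := der_top hD hDH hk hk' (hx j) h1 _ _ (hxm j) h3
    refine ⟨hmm _ _ (hx j) h1, ⟨c' * c, ?_⟩, h5⟩
    rw [hc', hc, mul_smul_comm, smul_smul]

end Der

lemma exists_list {n : ℕ} (c : Fin n → ℕ) :
    ∃ L : List (Fin n), (L.map fun j => cw (Pi.single j 1)).sum = cw c := by
  have hadd : ∀ μ ν : Fin n → ℤ, (∃ L : List (Fin n), (L.map fun j => cw (Pi.single j 1)).sum = μ) →
      (∃ L : List (Fin n), (L.map fun j => cw (Pi.single j 1)).sum = ν) →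
      ∃ L : List (Fin n), (L.map fun j => cw (Pi.single j 1)).sum = μ + ν := by
    rintro _ _ ⟨L, rfl⟩ ⟨L', rfl⟩
    exact ⟨L ++ L', by simp⟩
  have h : cw c = ∑ j, c j • (Pi.single j 1 : Fin n → ℤ) := by
    conv_lhs => rw [← Finset.univ_sum_single (cw c)]
    refine Finset.sum_congr rfl fun j _ => ?_
    rw [← Pi.single_smul]; simp [cw]
  rw [h]
  refine Finset.sum_induction _
    (fun μ => ∃ L : List (Fin n), (L.map fun j => cw (Pi.single j 1)).sum = μ) hadd ⟨[], rfl⟩ ?_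
  intro j _
  exact ⟨List.replicate (c j) j, by simp [cw_single]⟩

variable {W : Type} [Group W] {r : W → ((Fin n → ℤ) ≃+ (Fin n → ℤ))} {s : Fin n → W}
  {ht : (Fin n → ℤ) →+ ℤ} {Q : (Fin n → ℤ) → (Fin n → ℤ) → ℂˣ}

lemma list_Wt {P : Type} (x : P → A) (κ θ : P → Fin n → ℤ) (h : ∀ j, x j ∈ Wt act (κ j) (θ j))
    (L : List P) : (L.map x).prod ∈ Wt act (L.map κ).sum (L.map θ).sum := by
  induction L with
  | nil => exact Wt_one
  | cons j L ih => simpa using Wt_mul (h j) ih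

namespace SU

lemma kill_prod {P : Type} {D : Module.End ℂ A} (hD1 : D 1 = 0)
    (hmul : ∀ b b', D b = 0 → D b' = 0 → D (b * b') = 0) (x : P → A) (h : ∀ j, D (x j) = 0)
    (L : List P) : D (L.map x).prod = 0 := by
  induction L with
  | nil => simpa using hD1
  | cons j L ih => simpa using hmul _ _ (h j) ih

lemma lE_one (S : SU q a d E F K Δ ε ρ ι cf lA rA act) (i) : lA (E i) 1 = 0 := by
  rw [S.lA_unit, S.hεE, zero_smul]
lemma rE_one (S : SU q a d E F K Δ ε ρ ι cf lA rA act) (i) : rA (E i) 1 = 0 := by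
  rw [S.rA_unit, S.hεE, zero_smul]
lemma rF_one (S : SU q a d E F K Δ ε ρ ι cf lA rA act) (i) : rA (F i) 1 = 0 := by
  rw [S.rA_unit, S.hεF, zero_smul]

lemma rApow_cf (S : SU q a d E F K Δ ε ρ ι cf lA rA act) (X : U) (c ξ v) (m : ℕ) :
    (rA X ^ m) (cf c ξ v) = cf c (ξ ∘ₗ (ρ c X ^ m : Module.End ℂ (V c))) v := by
  induction m with
  | zero => rfl
  | succ m ih =>
    rw [pow_succ', Module.End.mul_apply, ih, S.rA_cf]
    congr 1
    
lemma dual_Epow (S : SU q a d E F K Δ ε ρ ι cf lA rA act) {c} {κ : Fin n → ℤ}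
    {ξ : Module.Dual ℂ (V c)} (hξ : inDualWt q d K (ρ c) (-κ) ξ) (j : Fin n) (m : ℕ) :
    inDualWt q d K (ρ c) (-(κ - (m : ℤ) • al a j)) (ξ ∘ₗ (ρ c (E j) ^ m : Module.End ℂ (V c))) := by
  induction m with
  | zero =>
    have h0 : ∀ X : Module.End ℂ (V c), ξ ∘ₗ (X ^ 0) = ξ := fun _ => rfl
    rw [h0]; simpa using hξ
  | succ m ih =>
    have := dual_comp_E S.hq0 S.hrel ih j
    rw [sub_sub, ← add_one_zsmul] at this
    push_cast
    exact this

lemma dual_Fpow (S : SU q a d E F K Δ ε ρ ι cf lA rA act) {c} {κ : Fin n → ℤ}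
    {ξ : Module.Dual ℂ (V c)} (hξ : inDualWt q d K (ρ c) (-κ) ξ) (j : Fin n) (m : ℕ) :
    inDualWt q d K (ρ c) (-(κ + (m : ℤ) • al a j)) (ξ ∘ₗ (ρ c (F j) ^ m : Module.End ℂ (V c))) := by
  induction m with
  | zero =>
    have h0 : ∀ X : Module.End ℂ (V c), ξ ∘ₗ (X ^ 0) = ξ := fun _ => rfl
    rw [h0]; simpa using hξ
  | succ m ih =>
    have := dual_comp_F S.hq0 S.hrel ih j
    rw [add_assoc, ← add_one_zsmul] at this
    push_cast
    exact this

lemma pow_mem {J : Submodule ℂ A} {D : Module.End ℂ A} (h : ∀ b ∈ J, D b ∈ J) (m : ℕ) (b) (hb : b ∈ J) :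
    (D ^ m) b ∈ J := by
  induction m with
  | zero => exact hb
  | succ m ih => rw [pow_succ', Module.End.mul_apply]; exact h _ ih

lemma ht_s (S : SU q a d E F K Δ ε ρ ι cf lA rA act) (D : WD q a d E K ρ r s ht) (w i) :
    ht (r (s i * w)⁻¹ (al a i)) = - ht (r w⁻¹ (al a i)) := by
  have h1 : r (s i)⁻¹ (al a i) = - al a i := by
    have h2 : r (s i) (- al a i) = al a i := by
      rw [D.hs]
      have : (- al a i) i = -2 := by simp [al, S.ha_diag]
      rw [this, neg_smul, two_smul]; abel
    rw [← h2, r_inv D.hr1 D.hrm, h2]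
  rw [mul_inv_rev, D.hrm, h1, map_neg, map_neg]

lemma sum_apply (L : List (Fin n)) (μ : Fin n → Fin n → ℤ) (i : Fin n) :
    (L.map μ).sum i = (L.map fun j => μ j i).sum := by
  induction L with
  | nil => rfl
  | cons j L ih => simp [ih]

lemma step (S : SU q a d E F K Δ ε ρ ι cf lA rA act) (D : WD q a d E K ρ r s ht)
    {J : Submodule ℂ A} (hE : ∀ i, ∀ b ∈ J, rA (E i) b ∈ J) (hF : ∀ i, ∀ b ∈ J, rA (F i) b ∈ J)
    (vm : ∀ i : Fin n, V (Pi.single i 1))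
    (hvm : ∀ i, vm i ∈ wtSp q d K (ρ (Pi.single i 1)) (cw (Pi.single i 1)))
    (L : List (Fin n)) (w : W) (i : Fin n)
    (h : ∃ ξ : ∀ j : Fin n, Module.Dual ℂ (V (Pi.single j 1)),
      (∀ j, inDualWt q d K (ρ (Pi.single j 1)) (-(r w (cw (Pi.single j 1)))) (ξ j)) ∧
      (L.map fun j => cf (Pi.single j 1) (ξ j) (vm j)).prod ∈ J ∧
      (L.map fun j => cf (Pi.single j 1) (ξ j) (vm j)).prod ≠ 0) :
    ∃ ξ : ∀ j : Fin n, Module.Dual ℂ (V (Pi.single j 1)),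
      (∀ j, inDualWt q d K (ρ (Pi.single j 1)) (-(r (s i * w) (cw (Pi.single j 1)))) (ξ j)) ∧
      (L.map fun j => cf (Pi.single j 1) (ξ j) (vm j)).prod ∈ J ∧
      (L.map fun j => cf (Pi.single j 1) (ξ j) (vm j)).prod ≠ 0 := by
  obtain ⟨ξ, h1, h2, h3⟩ := h
  have hw := list_Wt (fun j => cf (Pi.single j 1) (ξ j) (vm j)) _ _
    (fun j => S.cf_Wt (h1 j) (hvm j)) L
  have hsum := sum_apply L (fun j => r w (cw (Pi.single j 1))) i
  have hm1 : ∃ κ θ, (1 : A) ∈ Wt act κ θ := ⟨0, 0, Wt_one⟩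
  have hmm : ∀ b b' : A, (∃ κ θ, b ∈ Wt act κ θ) → (∃ κ θ, b' ∈ Wt act κ θ) →
      ∃ κ θ, b * b' ∈ Wt act κ θ := by
    rintro b b' ⟨κ, θ, hb⟩ ⟨κ', θ', hb'⟩
    exact ⟨_, _, Wt_mul hb hb'⟩
  have hfin : ∀ (X : U) (m : Fin n → ℕ),
      (∀ j, inDualWt q d K (ρ (Pi.single j 1)) (-(r (s i * w) (cw (Pi.single j 1))))
        (ξ j ∘ₗ (ρ (Pi.single j 1) X ^ m j : Module.End ℂ (V (Pi.single j 1))))) →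
      (∀ b ∈ J, rA X b ∈ J) →
      (∃ c : ℂ, (rA X ^ (L.map m).sum) (L.map fun j => cf (Pi.single j 1) (ξ j) (vm j)).prod =
        c • (L.map fun j => (rA X ^ (m j)) (cf (Pi.single j 1) (ξ j) (vm j))).prod) →
      (rA X ^ (L.map m).sum) (L.map fun j => cf (Pi.single j 1) (ξ j) (vm j)).prod ≠ 0 →
      ∃ ξ : ∀ j : Fin n, Module.Dual ℂ (V (Pi.single j 1)),
      (∀ j, inDualWt q d K (ρ (Pi.single j 1)) (-(r (s i * w) (cw (Pi.single j 1)))) (ξ j)) ∧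
      (L.map fun j => cf (Pi.single j 1) (ξ j) (vm j)).prod ∈ J ∧
      (L.map fun j => cf (Pi.single j 1) (ξ j) (vm j)).prod ≠ 0 := by
    rintro X m hX hJ ⟨c, hc⟩ hne
    refine ⟨_, hX, ?_⟩
    simp only [S.rApow_cf] at hc
    have hJ' := pow_mem hJ (L.map m).sum _ h2
    rw [hc] at hne hJ'
    have hc0 : c ≠ 0 := fun h => hne (by rw [h, zero_smul])
    exact ⟨(J.smul_mem_iff hc0).1 hJ', fun h => hne (by rw [h, smul_zero])⟩
  have hsr : ∀ j, r (s i * w) (cw (Pi.single j 1)) =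
      r w (cw (Pi.single j 1)) - (r w (cw (Pi.single j 1)) i) • al a i := by
    intro j; rw [D.hrm, D.hs]
  rcases S.sign D w i with ⟨hht, hpos⟩ | ⟨hht, hneg⟩
  · have hht' : ht (r (s i * w)⁻¹ (al a i)) < 0 := by rw [S.ht_s D]; omega
    let m : Fin n → ℕ := fun j => (r w (cw (Pi.single j 1)) i).toNat
    have hm : ∀ j, (m j : ℤ) = r w (cw (Pi.single j 1)) i := fun j => Int.toNat_of_nonneg (hpos _)
    have hX : ∀ j, inDualWt q d K (ρ (Pi.single j 1)) (-(r (s i * w) (cw (Pi.single j 1))))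
        (ξ j ∘ₗ (ρ (Pi.single j 1) (E i) ^ m j : Module.End ℂ (V (Pi.single j 1)))) := by
      intro j
      have := S.dual_Epow (h1 j) i (m j)
      rwa [hm, ← hsr] at this
    obtain ⟨-, hc, -⟩ := der_list (D := rA (E i)) (k := rA (K i : U)) (k' := 1)
      (Hm := fun b => ∃ κ θ, b ∈ Wt act κ θ) (fun b b' => S.rE_mul i b b')
      (fun b ⟨κ, θ, hb⟩ => ⟨_, _, S.rE_Wt hb i⟩) (fun b ⟨κ, θ, hb⟩ => ⟨_, S.rK_Wt hb i⟩)
      (fun b _ => ⟨1, by simp⟩) hm1 hmm (S.rE_one i)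
      (fun j => cf (Pi.single j 1) (ξ j) (vm j)) m (fun j => ⟨_, _, S.cf_Wt (h1 j) (hvm j)⟩)
      (fun j => by
        rw [pow_succ', Module.End.mul_apply, S.rApow_cf, S.rA_cf, S.dE_zero D (hX j) hht',
          S.cf_zero_left]) L
    refine hfin (E i) m hX (hE i) hc (S.right_ne hw i ?_ h3 _ ?_)
    · refine kill_prod (S.rF_one i) (fun b b' hb hb' => ?_) _ (fun j => ?_) L
      · rw [S.rF_mul, hb, hb', zero_mul, mul_zero, add_zero]
      · rw [S.rA_cf, S.dF_zero D (h1 j) hht, S.cf_zero_left]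
    · rw [hsum]
      simp only [← hm]
      clear hw hsum hfin h2 h3 hc
      induction L with
      | nil => rfl
      | cons j L ih => simp [ih]
  · have hht' : 0 < ht (r (s i * w)⁻¹ (al a i)) := by rw [S.ht_s D]; omega
    let m : Fin n → ℕ := fun j => (- r w (cw (Pi.single j 1)) i).toNat
    have hm : ∀ j, r w (cw (Pi.single j 1)) i = - (m j : ℤ) := fun j => by
      have := hneg (Pi.single j 1)
      simp only [m]; omega
    have hX : ∀ j, inDualWt q d K (ρ (Pi.single j 1)) (-(r (s i * w) (cw (Pi.single j 1))))
        (ξ j ∘ₗ (ρ (Pi.single j 1) (F i) ^ m j : Module.End ℂ (V (Pi.single j 1)))) := by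
      intro j
      have := S.dual_Fpow (h1 j) i (m j)
      rwa [hsr, hm, neg_smul, sub_neg_eq_add]
    obtain ⟨-, hc, -⟩ := der_list (D := rA (F i)) (k := 1) (k' := rA (((K i)⁻¹ : Uˣ) : U))
      (Hm := fun b => ∃ κ θ, b ∈ Wt act κ θ) (fun b b' => S.rF_mul i b b')
      (fun b ⟨κ, θ, hb⟩ => ⟨_, _, S.rF_Wt hb i⟩) (fun b _ => ⟨1, by simp⟩)
      (fun b ⟨κ, θ, hb⟩ => ⟨_, S.rKi_Wt hb i⟩) hm1 hmm (S.rF_one i)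
      (fun j => cf (Pi.single j 1) (ξ j) (vm j)) m (fun j => ⟨_, _, S.cf_Wt (h1 j) (hvm j)⟩)
      (fun j => by
        rw [pow_succ', Module.End.mul_apply, S.rApow_cf, S.rA_cf, S.dF_zero D (hX j) hht',
          S.cf_zero_left]) L
    refine hfin (F i) m hX (hF i) hc (S.right_ne' hw i ?_ h3 _ ?_)
    · refine kill_prod (S.rE_one i) (fun b b' hb hb' => ?_) _ (fun j => ?_) L
      · rw [S.rE_mul, hb, hb', zero_mul, mul_zero, add_zero]
      · rw [S.rA_cf, S.dE_zero D (h1 j) hht, S.cf_zero_left]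
    · rw [hsum]
      simp only [hm]
      clear hw hsum hfin h2 h3 hc
      induction L with
      | nil => rfl
      | cons j L ih => simp [ih]; ring

end SU

end HSimple

namespace HSimple

open scoped TensorProduct

variable {q : ℂ} {n : ℕ} {a : Fin n → Fin n → ℤ} {d : Fin n → ℕ}
    {U : Type} [Ring U] [Algebra ℂ U] {E F : Fin n → U} {K : Fin n → Uˣ}
    {Δ : U →ₐ[ℂ] U ⊗[ℂ] U} {ε : U →ₐ[ℂ] ℂ}
    {V : (Fin n → ℕ) → Type} [∀ c, AddCommGroup (V c)] [∀ c, Module ℂ (V c)]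
    {ρ : ∀ c, U →ₐ[ℂ] Module.End ℂ (V c)}
    {A : Type} [Ring A] [Algebra ℂ A]
    {ι : A →ₗ[ℂ] (U →ₗ[ℂ] ℂ)}
    {cf : ∀ c : Fin n → ℕ, Module.Dual ℂ (V c) → V c → A}
    {lA rA : U →ₗ[ℂ] Module.End ℂ A}
    {act : (Fin n → ℂˣ) × (Fin n → ℂˣ) →* (A ≃ₐ[ℂ] A)}



variable {W : Type} [Group W] {r : W → ((Fin n → ℤ) ≃+ (Fin n → ℤ))} {s : Fin n → W}
  {ht : (Fin n → ℤ) →+ ℤ} {Q : (Fin n → ℤ) → (Fin n → ℤ) → ℂˣ}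

namespace SU

lemma ev_one (S : SU q a d E F K Δ ε ρ ι cf lA rA act) (b b' : A) :
    ι (b * b') 1 = ι b 1 * ι b' 1 := S.ev_KG (k := 1) (one_mem _) b b'

lemma ev_list (S : SU q a d E F K Δ ε ρ ι cf lA rA act) {P : Type} (x : P → A)
    (h : ∀ j, ι (x j) 1 ≠ 0) (L : List P) : ι (L.map x).prod 1 ≠ 0 := by
  induction L with
  | nil => simp [S.hι1]
  | cons j L ih =>
    rw [List.map_cons, List.prod_cons, S.ev_one]
    exact mul_ne_zero (h j) ih

lemma smul_list {P : Type} (x y : P → A) (c : P → ℂ) (h : ∀ j, x j = c j • y j) (L : List P) :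
    ∃ c : ℂ, (L.map x).prod = c • (L.map y).prod := by
  induction L with
  | nil => exact ⟨1, by simp⟩
  | cons j L ih =>
    obtain ⟨e, he⟩ := ih
    refine ⟨c j * e, ?_⟩
    rw [List.map_cons, List.prod_cons, List.map_cons, List.prod_cons, he, h, smul_mul_smul_comm]

lemma final (S : SU q a d E F K Δ ε ρ ι cf lA rA act) (D : WD q a d E K ρ r s ht)
    (H : QForm q a d Q) {w₀ : W}
    (hw₀ : ∀ μ : Fin n → ℤ, (∀ i, 0 ≤ μ i) → ∀ i, r w₀ μ i ≤ 0)
    (hextremal : ∀ c (w : W), Module.finrank ℂ (wtSp q d K (ρ c) (r w (cw c))) = 1)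
    (ξp ξm : ∀ i : Fin n, Module.Dual ℂ (V (Pi.single i 1)))
    (vp vm : ∀ i : Fin n, V (Pi.single i 1))
    (hξp : ∀ i, inDualWt q d K (ρ (Pi.single i 1)) (-(cw (Pi.single i 1))) (ξp i))
    (hvp : ∀ i, vp i ∈ wtSp q d K (ρ (Pi.single i 1)) (r w₀ (cw (Pi.single i 1))))
    (hξm : ∀ i, inDualWt q d K (ρ (Pi.single i 1)) (-(r w₀ (cw (Pi.single i 1)))) (ξm i))
    (hvm : ∀ i, vm i ∈ wtSp q d K (ρ (Pi.single i 1)) (cw (Pi.single i 1)))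
    (hξm0 : ∀ i, ξm i ≠ 0) (hvm0 : ∀ i, vm i ≠ 0)
    {J : Submodule ℂ A} (G : GoodJ act J)
    (hcp : ∀ j b, b * cf (Pi.single j 1) (ξp j) (vp j) ∈ J → b ∈ J)
    (hcm : ∀ j b, b * cf (Pi.single j 1) (ξm j) (vm j) ∈ J → b ∈ J)
    (x : A) (hx : x ∈ J) (hx0 : x ≠ 0) :
    ∃ L : List (Fin n), (L.map fun j => cf (Pi.single j 1) (ξm j) (vm j)).prod ∈ J := by
  have hst := S.stab D H hw₀ ξp ξm vp vm hξp hvp hξm hvm G hcp hcm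
  obtain ⟨b, hbJ, hb0, ⟨κ, θ, hb⟩, hbE, hbF⟩ := S.exists_top D.hht G x hx hx0
    (fun i => (hst i).1) (fun i => (hst i).2.2)
  have hb1 := S.top_ne hb hbE hbF hb0
  obtain rfl : κ = θ := S.ev_zero (k := 1) (one_mem _) hb hb1
  have hdom := S.top_dom hb hbE hb0
  obtain ⟨L, hL⟩ := exists_list (fun i => (κ i).toNat)
  have hκ : cw (fun i => (κ i).toNat) = κ := by
    funext i; exact Int.toNat_of_nonneg (hdom i)
  rw [hκ] at hL
  refine ⟨L, ?_⟩
  -- the claim for the identity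
  have P1 : ∃ ξ : ∀ j : Fin n, Module.Dual ℂ (V (Pi.single j 1)),
      (∀ j, inDualWt q d K (ρ (Pi.single j 1)) (-(r 1 (cw (Pi.single j 1)))) (ξ j)) ∧
      (L.map fun j => cf (Pi.single j 1) (ξ j) (vm j)).prod ∈ J ∧
      (L.map fun j => cf (Pi.single j 1) (ξ j) (vm j)).prod ≠ 0 := by
    choose ξ h1 h2 using fun j => exists_dual S.hq S.hd_pos _ (vm j) (hvm j) (hvm0 j)
    have h1' : ∀ j, inDualWt q d K (ρ (Pi.single j 1)) (-(r 1 (cw (Pi.single j 1)))) (ξ j) := by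
      intro j; rw [D.hr1]; exact h1 j
    have hw := list_Wt (fun j => cf (Pi.single j 1) (ξ j) (vm j)) _ _
      (fun j => S.cf_Wt (h1 j) (hvm j)) L
    rw [hL] at hw
    have hp1 : ι (L.map fun j => cf (Pi.single j 1) (ξ j) (vm j)).prod 1 ≠ 0 := by
      refine S.ev_list _ (fun j => ?_) L
      rw [S.hcf, map_one]; exact h2 j
    refine ⟨ξ, h1', ?_, ?_⟩
    · have := S.top_unique hb hw hbE hbF
        (fun i => kill_prod (S.lE_one i) (fun b b' hb hb' => by
          rw [S.lE_mul, hb, hb', zero_mul, mul_zero, add_zero]) _ (fun j => by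
          rw [S.lA_cf, S.vE_zero D (w := 1) (by rw [D.hr1]; exact hvm j) (ht_one D i),
            S.cf_zero_right]) L)
        (fun i => kill_prod (S.rF_one i) (fun b b' hb hb' => by
          rw [S.rF_mul, hb, hb', zero_mul, mul_zero, add_zero]) _ (fun j => by
          rw [S.rA_cf, S.dF_zero D (h1' j) (ht_one D i), S.cf_zero_left]) L)
        (ι b 1 / ι (L.map fun j => cf (Pi.single j 1) (ξ j) (vm j)).prod 1)
        (by rw [div_mul_cancel₀ _ hp1])
      rw [this] at hbJ
      exact (J.smul_mem_iff (div_ne_zero hb1 hp1)).1 hbJ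
    · intro h0; rw [h0] at hp1; simp at hp1
  have PW : ∀ w : W, ∃ ξ : ∀ j : Fin n, Module.Dual ℂ (V (Pi.single j 1)),
      (∀ j, inDualWt q d K (ρ (Pi.single j 1)) (-(r w (cw (Pi.single j 1)))) (ξ j)) ∧
      (L.map fun j => cf (Pi.single j 1) (ξ j) (vm j)).prod ∈ J ∧
      (L.map fun j => cf (Pi.single j 1) (ξ j) (vm j)).prod ≠ 0 := by
    intro w
    have hw : w ∈ Subgroup.closure (Set.range s) := by rw [D.hsgen]; trivial
    induction hw using Subgroup.closure_induction_left with
    | one => exact P1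
    | mul_left x hx y hy ih =>
      obtain ⟨i, rfl⟩ := hx
      exact S.step D (fun i => (hst i).2.1) (fun i => (hst i).2.2) vm hvm L y i ih
    | inv_mul_cancel x hx y hy ih =>
      obtain ⟨i, rfl⟩ := hx
      have h := S.step D (fun i => (hst i).2.1) (fun i => (hst i).2.2) vm hvm L y i ih
      have e : ∀ μ, r ((s i)⁻¹ * y) μ = r (s i * y) μ := by
        intro μ
        rw [D.hrm, D.hrm]
        conv_lhs => rw [← s_sq (a := a) S.ha_diag D.hrm D.hs i (r y μ)]
        rw [r_inv D.hr1 D.hrm]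
      simp only [e]
      exact h
  obtain ⟨ξ, h1, h2, h3⟩ := PW w₀
  choose c hc using fun j => dual_prop (S.hwtsum _) (hextremal _ w₀) (hξm j) (h1 j) (hξm0 j)
  obtain ⟨e, he⟩ := smul_list (fun j => cf (Pi.single j 1) (ξ j) (vm j))
    (fun j => cf (Pi.single j 1) (ξm j) (vm j)) c
    (fun j => by simp only [hc j]; rw [S.cf_smul_left]) L
  rw [he] at h2 h3
  have he0 : e ≠ 0 := fun h => h3 (by rw [h, zero_smul])
  exact (J.smul_mem_iff he0).1 h2

end SU

end HSimple

theorem localisation_H_simple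
    -- the deformation parameter: a transcendental complex number
    (q : ℂ) (hq : Transcendental ℚ q)
    -- Cartan data of the complex semisimple Lie algebra 𝔤 of rank n
    (n : ℕ) (hn : 0 < n) (a : Fin n → Fin n → ℤ) (d : Fin n → ℕ)
    (ha_diag : ∀ i, a i i = 2) (ha_off : ∀ i j, i ≠ j → a i j ≤ 0)
    (ha_zero : ∀ i j, a i j = 0 ↔ a j i = 0)
    (hd_pos : ∀ i, 0 < d i)
    (ha_symm : ∀ i j, (d i : ℤ) * a i j = (d j : ℤ) * a j i)
    -- the quantised enveloping algebra U = U_q(𝔤): carries elements E i, F i and units K i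
    -- satisfying the defining relations, and is universal for these relations
    (U : Type) [Ring U] [Algebra ℂ U]
    (E F : Fin n → U) (K : Fin n → Uˣ)
    (hrel : UqRels q a d U E F K)
    (hUuniv : ∀ (B : Type) [Ring B] [Algebra ℂ B] (E' F' : Fin n → B) (K' : Fin n → Bˣ),
      UqRels q a d B E' F' K' → ∃! φ : U →ₐ[ℂ] B,
        (∀ i, φ (E i) = E' i) ∧ (∀ i, φ (F i) = F' i) ∧ (∀ i, φ (K i : U) = (K' i : B)))
    -- the Hopf algebra structure of U_q(𝔤)
    (Δ : U →ₐ[ℂ] U ⊗[ℂ] U) (ε : U →ₐ[ℂ] ℂ)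
    (hΔE : ∀ i, Δ (E i) = E i ⊗ₜ 1 + (K i : U) ⊗ₜ E i)
    (hΔF : ∀ i, Δ (F i) = F i ⊗ₜ (((K i)⁻¹ : Uˣ) : U) + 1 ⊗ₜ F i)
    (hΔK : ∀ i, Δ (K i : U) = (K i : U) ⊗ₜ (K i : U))
    (hεE : ∀ i, ε (E i) = 0) (hεF : ∀ i, ε (F i) = 0) (hεK : ∀ i, ε (K i : U) = 1)
    -- the Weyl group W, acting faithfully on the weight lattice P = ℤⁿ (coordinates taken in
    -- the basis of fundamental weights ϖ i), generated by the simple reflections s i, with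
    -- longest element w₀ (characterised by: w₀ maps dominant weights to antidominant ones)
    (W : Type) [Group W] [Finite W] (σ : W →* Multiplicative (AddAut (Fin n → ℤ)))
    (hσinj : Function.Injective σ)
    (s : Fin n → W) (hsgen : Subgroup.closure (Set.range s) = ⊤)
    (hs : ∀ i (μ : Fin n → ℤ), (σ (s i)).toAdd μ = fun k => μ k - μ i * a k i)
    (w₀ : W) (hw₀ : ∀ μ : Fin n → ℤ, (∀ i, 0 ≤ μ i) → ∀ i, (σ w₀).toAdd μ i ≤ 0)
    -- the simple finite-dimensional modules V(λ) of highest weight λ = ∑ c i ϖ i ∈ P⁺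
    (V : (Fin n → ℕ) → Type) [∀ c, AddCommGroup (V c)] [∀ c, Module ℂ (V c)]
    (ρ : ∀ c, U →ₐ[ℂ] Module.End ℂ (V c))
    (hfd : ∀ c, FiniteDimensional ℂ (V c))
    (hsimple : ∀ c (N : Submodule ℂ (V c)), (∀ (u : U), ∀ v ∈ N, ρ c u v ∈ N) → N = ⊥ ∨ N = ⊤)
    (hhw : ∀ c, ∃ v : V c, v ≠ 0 ∧ v ∈ wtSp q d K (ρ c) (fun i => (c i : ℤ)) ∧
      ∀ i, ρ c (E i) v = 0)
    (hwtsum : ∀ c, (⨆ μ : Fin n → ℤ, wtSp q d K (ρ c) μ) = ⊤)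
    (hextremal : ∀ c (w : W),
      Module.finrank ℂ (wtSp q d K (ρ c) ((σ w).toAdd (fun i => (c i : ℤ)))) = 1)
    -- the quantised coordinate ring A = O_q(G): an algebra of linear forms on U (via the
    -- injection ι into the dual space, multiplication being convolution through Δ),
    -- generated by the coordinate functions cf c ξ v = c^λ_{ξ,v} : u ↦ ξ (u · v)
    (A : Type) [Ring A] [Algebra ℂ A]
    (ι : A →ₗ[ℂ] (U →ₗ[ℂ] ℂ)) (hιinj : Function.Injective ι)
    (hι1 : ι 1 = ε.toLinearMap)
    (hιmul : ∀ x y : A, ι (x * y) =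
      (TensorProduct.lid ℂ ℂ).toLinearMap ∘ₗ (TensorProduct.map (ι x) (ι y)) ∘ₗ Δ.toLinearMap)
    (cf : ∀ c : Fin n → ℕ, Module.Dual ℂ (V c) → V c → A)
    (hcf : ∀ c ξ v u, ι (cf c ξ v) u = ξ (ρ c u v))
    (hAgen : Algebra.adjoin ℂ {x : A | ∃ c ξ v, x = cf c ξ v} = ⊤)
    -- the rational action of the torus 𝓗 = (ℂ*)ⁿ × (ℂ*)ⁿ on O_q(G), by which a pair
    -- (g₁, g₂) rescales a coordinate function c^λ_{ξ,v} with ξ of weight μ and v of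
    -- weight η by the scalar g₁(μ) g₂(η)
    (act : (Fin n → ℂˣ) × (Fin n → ℂˣ) →* (A ≃ₐ[ℂ] A))
    (hact : ∀ g c (ξ : Module.Dual ℂ (V c)) v (μ η : Fin n → ℤ),
      inDualWt q d K (ρ c) μ ξ → v ∈ wtSp q d K (ρ c) η →
      act g (cf c ξ v) =
        ((((∏ i, g.1 i ^ μ i) * (∏ i, g.2 i ^ η i) : ℂˣ) : ℂ)) • cf c ξ v)
    -- choices of the (essentially unique) coordinate functions c^{ϖ_i}_{-ϖ_i, w₀ϖ_i} and
    -- c^{ϖ_i}_{-w₀ϖ_i, ϖ_i}, for i = 1, …, n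
    (ξp ξm : ∀ i : Fin n, Module.Dual ℂ (V (Pi.single i 1)))
    (vp vm : ∀ i : Fin n, V (Pi.single i 1))
    (hξp : ∀ i, inDualWt q d K (ρ (Pi.single i 1)) (fun k => -((Pi.single i 1 : Fin n → ℕ) k : ℤ)) (ξp i) ∧ ξp i ≠ 0)
    (hvp : ∀ i, vp i ∈ wtSp q d K (ρ (Pi.single i 1)) ((σ w₀).toAdd (fun k => ((Pi.single i 1 : Fin n → ℕ) k : ℤ))) ∧ vp i ≠ 0)
    (hξm : ∀ i, inDualWt q d K (ρ (Pi.single i 1)) (-((σ w₀).toAdd (fun k => ((Pi.single i 1 : Fin n → ℕ) k : ℤ)))) (ξm i) ∧ ξm i ≠ 0)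
    (hvm : ∀ i, vm i ∈ wtSp q d K (ρ (Pi.single i 1)) (fun k => ((Pi.single i 1 : Fin n → ℕ) k : ℤ)) ∧ vm i ≠ 0)
    -- T: the localisation of O_q(G) at the multiplicative set generated by the 2n normal
    -- 𝓗-eigenvectors c^{ϖ_i}_{-ϖ_i, w₀ϖ_i} and c^{ϖ_i}_{-w₀ϖ_i, ϖ_i},
    -- with the induced 𝓗-action
    (T : Type) [Ring T] [Algebra ℂ T] (φ : A →ₐ[ℂ] T)
    (hφinj : Function.Injective φ)
    (hunit : ∀ x ∈ Submonoid.closure (Set.range (Sum.elim (fun i => cf (Pi.single i 1) (ξp i) (vp i)) (fun i => cf (Pi.single i 1) (ξm i) (vm i)))), IsUnit (φ x))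
    (hloc_r : ∀ t : T, ∃ a : A, ∃ x ∈ Submonoid.closure (Set.range (Sum.elim (fun i => cf (Pi.single i 1) (ξp i) (vp i)) (fun i => cf (Pi.single i 1) (ξm i) (vm i)))), t * φ x = φ a)
    (hloc_l : ∀ t : T, ∃ a : A, ∃ x ∈ Submonoid.closure (Set.range (Sum.elim (fun i => cf (Pi.single i 1) (ξp i) (vp i)) (fun i => cf (Pi.single i 1) (ξm i) (vm i)))), φ x * t = φ a)
    (actT : (Fin n → ℂˣ) × (Fin n → ℂˣ) →* (T ≃ₐ[ℂ] T))
    (hactT : ∀ g x, actT g (φ x) = φ (act g x)) :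
    -- T is 𝓗-simple: its only 𝓗-invariant two-sided ideals are 0 and T
    ∀ I : TwoSidedIdeal T, (∀ g x, x ∈ I → actT g x ∈ I) → I = ⊥ ∨ I = ⊤ := by
  intro I hI
  let r : W → ((Fin n → ℤ) ≃+ (Fin n → ℤ)) := fun w => (σ w).toAdd
  have hr1 : ∀ μ, r 1 μ = μ := by
    intro μ
    simp only [r, map_one]
    rfl
  have hrm : ∀ w w' μ, r (w * w') μ = r w (r w' μ) := by
    intro w w' μ
    simp only [r, map_mul]
    rfl
  have hs' : ∀ i (μ : Fin n → ℤ), r (s i) μ = μ - μ i • HSimple.al a i := by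
    intro i μ
    simp only [r]
    rw [hs]
    rfl
  obtain ⟨Q, ht, hQ1, hQ2, hQ3, hht⟩ := HSimple.exists_qform hq a d ha_diag hd_pos ha_symm r hr1 hrm
    s hsgen hs'
  obtain ⟨lA, hlA⟩ := HSimple.exists_lA Δ ε ρ ι hιinj hι1 (fun x y => hιmul x y) cf hcf hAgen
  obtain ⟨rA, hrA⟩ := HSimple.exists_rA Δ ε ρ ι hιinj hι1 (fun x y => hιmul x y) cf hcf hAgen
  have S : HSimple.SU q a d E F K Δ ε ρ ι cf lA rA act :=
    ⟨hq, ha_diag, hd_pos, hrel, HSimple.U_gen hrel hUuniv, hΔE, hΔF, hΔK, hεE, hεF, hεK, hfd, hsimple,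
      hwtsum, hιinj, hι1, fun x y => hιmul x y, hcf, hAgen, hlA, hrA, hact⟩
  have D : HSimple.WD q a d E K ρ r s ht := ⟨hht, hr1, hrm, hsgen, hs', hhw⟩
  have H : HSimple.QForm q a d Q :=
    ⟨hQ1, hQ2, fun x k => by rw [hQ3, mul_comm, zpow_mul]⟩
  let J : Submodule ℂ A :=
    { carrier := {b | φ b ∈ I}
      add_mem' := by
        intro x y hx hy
        simp only [Set.mem_setOf_eq, map_add] at *
        exact I.add_mem hx hy
      zero_mem' := by
        simp only [Set.mem_setOf_eq, map_zero]
        exact I.zero_mem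
      smul_mem' := by
        intro c x hx
        simp only [Set.mem_setOf_eq, map_smul] at *
        rw [Algebra.smul_def]
        exact I.mul_mem_left _ _ hx }
  have hJ : ∀ b, b ∈ J ↔ φ b ∈ I := fun b => Iff.rfl
  have G : HSimple.GoodJ act J := by
    refine ⟨fun x b hb => ?_, fun x b hb => ?_, fun g b hb => ?_⟩
    · rw [hJ, map_mul]; exact I.mul_mem_left _ _ hb
    · rw [hJ, map_mul]; exact I.mul_mem_right _ _ hb
    · rw [hJ, ← hactT]; exact hI _ _ hb
  have hcan : ∀ y : A, IsUnit (φ y) → ∀ b, b * y ∈ J → b ∈ J := by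
    intro y hy b hb
    obtain ⟨u, hu⟩ := hy
    rw [hJ, map_mul, ← hu] at hb
    have := I.mul_mem_right _ ((u⁻¹ : Tˣ) : T) hb
    rwa [mul_assoc, Units.mul_inv, mul_one] at this
  by_cases hbot : I = ⊥
  · exact Or.inl hbot
  right
  have hex : ∃ t ∈ I, t ≠ 0 := by
    by_contra! hcon
    apply hbot
    ext t
    rw [TwoSidedIdeal.mem_bot]
    exact ⟨hcon t, fun h => h ▸ I.zero_mem⟩
  obtain ⟨t, htI, ht0⟩ := hex
  obtain ⟨b, x, hx, hbx⟩ := hloc_r t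
  have hbJ : b ∈ J := by
    rw [hJ, ← hbx]; exact I.mul_mem_right _ _ htI
  have hb0 : b ≠ 0 := by
    rintro rfl
    rw [map_zero] at hbx
    exact ht0 ((hunit x hx).mul_left_eq_zero.1 hbx)
  obtain ⟨L, hL⟩ := S.final D H (w₀ := w₀) hw₀ hextremal ξp ξm vp vm (fun i => (hξp i).1)
    (fun i => (hvp i).1) (fun i => (hξm i).1) (fun i => (hvm i).1) (fun i => (hξm i).2)
    (fun i => (hvm i).2) G
    (fun j => hcan _ (hunit _ (Submonoid.subset_closure ⟨Sum.inl j, rfl⟩)))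
    (fun j => hcan _ (hunit _ (Submonoid.subset_closure ⟨Sum.inr j, rfl⟩))) b hbJ hb0
  have hu : IsUnit (φ (L.map fun j => cf (Pi.single j 1) (ξm j) (vm j)).prod) := by
    apply hunit
    apply Submonoid.list_prod_mem
    intro y hy
    obtain ⟨j, -, rfl⟩ := List.mem_map.1 hy
    exact Submonoid.subset_closure ⟨Sum.inr j, rfl⟩
  obtain ⟨u, hu⟩ := hu
  rw [hJ, ← hu] at hL
  have h1 : (1 : T) ∈ I := by
    have := I.mul_mem_right _ ((u⁻¹ : Tˣ) : T) hL
    rwa [Units.mul_inv] at this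
  ext y
  refine ⟨fun _ => trivial, fun _ => ?_⟩
  have := I.mul_mem_left y 1 h1
  rwa [mul_one] at this
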